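/- arXiv:1707.08162 — 7 statements merged into one kernel-verified Lean document; each statement's English description precedes it below -/
import Mathlib

section
/- Let X = (X¹, X²) be as in the context (visible fold of X at the origin, flow moving rightwards). Then there exist ξ > 0, δ > 0, p⁺ ∈ ℝ, ℓ₁ > 0 and C > 0 such that for every x₀ ∈ [0, δ): (i) there exist T > 0 and a C¹ curve γ : [0, T] → U with γ(0) = (x₀, 0), γ'(t) = X(γ(t)) for all t ∈ [0, T], γ₂(T) = ξ, and γ₂(t) < ξ for 0 ≤ t < T; and (ii) for every such pair (T, γ), the hitting position satisfies |γ₁(T) − p⁺ − ℓ₁·x₀²| ≤ C·x₀³. In other words, the transition map ρ₁(x₀) = γ₁(T) from the segment {(x,0) : 0 ≤ x < δ} to the section Σ⁺ = {y = ξ} is well defined and satisfies ρ₁(x₀) = p⁺ + ℓ₁·x₀² + O(x₀³) with ℓ₁ > 0. -/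
open Set

structure FoldData (f : ℝ × ℝ → ℝ) (h B b : ℝ → ℝ) (r m M a : ℝ) : Prop where
  hr : 0 < r
  hm : 0 < m
  hM : 0 < M
  ha : 0 < a
  h0 : h 0 = 0
  B0 : B 0 = 0
  hd : ∀ x ∈ Icc 0 r, HasDerivAt h (f (x, h x)) x
  Bd : ∀ x ∈ Icc 0 r, HasDerivAt B (b x) x
  bb : ∀ x ∈ Icc 0 r, |b x| ≤ M
  hle : ∀ x ∈ Icc 0 r, |h x| ≤ r
  quad : ∀ x ∈ Icc 0 r, ∀ y ∈ Icc (-r) r,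
    |f (x, h x) - f (x, y) - b x * (h x - y)| ≤ M * (h x - y) ^ 2
  hasq : ∀ x ∈ Icc 0 r, |h x - a / 2 * x ^ 2| ≤ M * x ^ 3
  hsq : ∀ x ∈ Icc 0 r, |h x| ≤ M * x ^ 2
  fpos : ∀ x ∈ Icc 0 r, a / 2 * x ≤ f (x, h x)
  flip : ∀ x ∈ Icc 0 r, ∀ x' ∈ Icc 0 r, |f (x, h x) - f (x', h x')| ≤ M * |x - x'|

lemma mono_aux {g g' : ℝ → ℝ} {a b : ℝ}
    (hg : ∀ t ∈ Icc a b, HasDerivWithinAt g (g' t) (Icc a b) t)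
    (hp : ∀ t ∈ Icc a b, 0 ≤ g' t) : MonotoneOn g (Icc a b) := by
  apply monotoneOn_of_hasDerivWithinAt_nonneg (convex_Icc a b)
    (fun t ht => (hg t ht).continuousWithinAt) (f' := g')
  · intro x hx
    exact (hg x (interior_subset hx)).mono interior_subset
  · intro x hx
    exact hp x (interior_subset hx)

lemma ici_aux {g : ℝ → ℝ} {g' a b t : ℝ} (hg : HasDerivWithinAt g g' (Icc a b) t)
    (ht : t ∈ Ico a b) : HasDerivWithinAt g g' (Ici t) t :=
  hg.mono_of_mem_nhdsWithin (Icc_mem_nhdsGE_of_mem ht)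

lemma FoldData.B_le {f : ℝ × ℝ → ℝ} {h B b : ℝ → ℝ} {r m M a : ℝ}
    (F : FoldData f h B b r m M a) : ∀ x ∈ Icc 0 r, ∀ y ∈ Icc 0 r, |B x - B y| ≤ M * |x - y| := by
  intro x hx y hy
  have := Convex.norm_image_sub_le_of_norm_hasDerivWithin_le (f := B) (f' := b) (s := Icc 0 r)
    (C := M) (x := y) (y := x) (fun x hx => (F.Bd x hx).hasDerivWithinAt)
    (fun x hx => by simpa using F.bb x hx) (convex_Icc 0 r) hy hx
  simpa using this

lemma core0 {f : ℝ × ℝ → ℝ} {h B b : ℝ → ℝ} {r m M a : ℝ}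
    (F : FoldData f h B b r m M a) : ∃ M2 > 0, ∃ M3 > 0, ∀ x₀ ∈ Icc 0 r, ∀ T : ℝ, 0 ≤ T →
    ∀ x y u : ℝ → ℝ, x 0 = x₀ → y 0 = 0 →
    (∀ t ∈ Icc 0 T, HasDerivWithinAt x (u t) (Icc 0 T) t) →
    (∀ t ∈ Icc 0 T, HasDerivWithinAt y (u t * f (x t, y t)) (Icc 0 T) t) →
    (∀ t ∈ Icc 0 T, m ≤ u t ∧ u t ≤ M) →
    (∀ t ∈ Icc 0 T, x t ≤ r) →
    (∀ t ∈ Icc 0 T, y t ∈ Icc (-r) r) →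
    ∀ t ∈ Icc 0 T, x₀ + m * t ≤ x t ∧ |h (x t) - y t| ≤ M2 * x₀ ^ 2 ∧
      |(h (x t) - y t) * Real.exp (- B (x t)) - h x₀ * Real.exp (- B x₀)| ≤ M3 * x₀ ^ 4 := by
  have hr := F.hr
  have hm := F.hm
  have hM := F.hM
  set K := M * (M + M * (2 * r)) with hK
  set M2 := M * Real.exp (K * (r / m)) with hM2
  set C3 := M * (M * M2 ^ 2) * Real.exp (M * r) with hC3
  have hK0 : 0 < K := by positivity
  have hM20 : 0 < M2 := by positivity
  have hC30 : 0 < C3 := by positivity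
  refine ⟨M2, hM20, C3 * (r / m), by positivity, ?_⟩
  intro x₀ hx₀ T hT x y u hx0 hy0 hx hy hu hxr hyr
  have low : ∀ t ∈ Icc 0 T, x₀ + m * t ≤ x t := by
    intro t ht
    have := mono_aux (g := fun t => x t - m * t) (g' := fun t => u t - m * 1) (a := 0) (b := T)
      (fun t ht => (hx t ht).sub ((hasDerivWithinAt_id t _).const_mul m))
      (fun t ht => by linarith [(hu t ht).1]) ⟨le_rfl, hT⟩ ht ht.1
    simp only [hx0] at this
    linarith
  have hxm : ∀ t ∈ Icc 0 T, x t ∈ Icc 0 r := by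
    intro t ht
    have := low t ht
    have h1 : 0 ≤ m * t := mul_nonneg hm.le ht.1
    exact ⟨by linarith [hx₀.1], hxr t ht⟩
  have hTr : ∀ t ∈ Icc 0 T, t ≤ r / m := by
    intro t ht
    rw [le_div_iff₀ hm]
    linarith [low t ht, hxr t ht, hx₀.1]
  have hD : ∀ t ∈ Icc 0 T, HasDerivWithinAt (fun t => h (x t) - y t)
      (u t * (f (x t, h (x t)) - f (x t, y t))) (Icc 0 T) t := by
    intro t ht
    have := ((F.hd (x t) (hxm t ht)).comp_hasDerivWithinAt t (hx t ht)).sub (hy t ht)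
    exact this.congr_deriv (by ring)
  have hDb : ∀ t ∈ Icc 0 T, |u t * (f (x t, h (x t)) - f (x t, y t))| ≤ K * |h (x t) - y t| := by
    intro t ht
    have q := F.quad _ (hxm t ht) _ (hyr t ht)
    have b1 := F.bb _ (hxm t ht)
    have h1 := F.hle _ (hxm t ht)
    have y1 : |y t| ≤ r := abs_le.2 (hyr t ht)
    have d1 : |h (x t) - y t| ≤ 2 * r := (abs_sub _ _).trans (by linarith)
    have d2 : |f (x t, h (x t)) - f (x t, y t)| ≤ (M + M * (2 * r)) * |h (x t) - y t| := by
      have e1 : |b (x t) * (h (x t) - y t)| ≤ M * |h (x t) - y t| := by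
        rw [abs_mul]; gcongr
      have e2 : M * (h (x t) - y t) ^ 2 ≤ M * (2 * r) * |h (x t) - y t| := by
        rw [← sq_abs, sq]
        have := mul_le_mul_of_nonneg_left d1 (abs_nonneg (h (x t) - y t))
        nlinarith
      have e3 := abs_sub_abs_le_abs_sub (f (x t, h (x t)) - f (x t, y t)) (b (x t) * (h (x t) - y t))
      nlinarith
    have u1 : |u t| ≤ M := by
      rw [abs_of_nonneg (by linarith [(hu t ht).1])]; exact (hu t ht).2
    rw [abs_mul, hK, mul_assoc]
    gcongr
  have hDl : ∀ t ∈ Icc 0 T, |h (x t) - y t| ≤ M2 * x₀ ^ 2 := by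
    intro t ht
    have := norm_le_gronwallBound_of_norm_deriv_right_le (f := fun t => h (x t) - y t)
      (δ := M * x₀ ^ 2) (K := K) (ε := 0) (a := 0) (b := T)
      (fun t ht => (hD t ht).continuousWithinAt)
      (fun t ht => ici_aux (hD t (Ico_subset_Icc_self ht)) ht)
      (by simpa [hx0, hy0] using F.hsq x₀ hx₀)
      (fun t ht => by simpa using hDb t (Ico_subset_Icc_self ht)) t ht
    rw [gronwallBound_ε0, Real.norm_eq_abs] at this
    refine this.trans ?_
    rw [hM2, sub_zero]
    have : Real.exp (K * t) ≤ Real.exp (K * (r / m)) := by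
      gcongr
      exact hTr t ht
    calc M * x₀ ^ 2 * Real.exp (K * t) ≤ M * x₀ ^ 2 * Real.exp (K * (r / m)) := by gcongr
      _ = _ := by ring
  intro t ht
  refine ⟨low t ht, hDl t ht, ?_⟩
  have hW : ∀ t ∈ Icc 0 T, HasDerivWithinAt
      (fun t => (h (x t) - y t) * Real.exp (- B (x t)))
      (u t * (f (x t, h (x t)) - f (x t, y t) - b (x t) * (h (x t) - y t)) * Real.exp (- B (x t)))
      (Icc 0 T) t := by
    intro t ht
    have := (hD t ht).mul ((F.Bd (x t) (hxm t ht)).comp_hasDerivWithinAt t (hx t ht)).neg.exp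
    exact this.congr_deriv (by simp only [Pi.neg_apply, Function.comp_apply]; ring)
  have hWb : ∀ t ∈ Icc 0 T,
      ‖u t * (f (x t, h (x t)) - f (x t, y t) - b (x t) * (h (x t) - y t)) * Real.exp (- B (x t))‖
      ≤ C3 * x₀ ^ 4 := by
    intro t ht
    have q := F.quad _ (hxm t ht) _ (hyr t ht)
    have u1 : |u t| ≤ M := by
      rw [abs_of_nonneg (by linarith [(hu t ht).1])]; exact (hu t ht).2
    have B1 : - B (x t) ≤ M * r := by
      have := F.B_le 0 ⟨le_rfl, hr.le⟩ (x t) (hxm t ht)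
      rw [F.B0, zero_sub, zero_sub, abs_neg (x t), abs_of_nonneg (hxm t ht).1] at this
      have h2 := (abs_le.1 this).2
      nlinarith [(hxm t ht).2]
    have q2 : M * (h (x t) - y t) ^ 2 ≤ M * (M2 * x₀ ^ 2) ^ 2 := by
      rw [← sq_abs (h (x t) - y t)]
      have := hDl t ht
      gcongr
    rw [Real.norm_eq_abs, abs_mul, abs_mul, Real.abs_exp]
    calc _ ≤ M * (M * (M2 * x₀ ^ 2) ^ 2) * Real.exp (M * r) := by
          gcongr
          exact q.trans q2
      _ = _ := by rw [hC3]; ring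
  have := norm_image_sub_le_of_norm_deriv_le_segment' hW
    (fun t ht => hWb t (Ico_subset_Icc_self ht)) t ht
  simp only [hx0, hy0, sub_zero, Real.norm_eq_abs] at this
  refine this.trans ?_
  calc C3 * x₀ ^ 4 * t ≤ C3 * x₀ ^ 4 * (r / m) := by
        gcongr
        exact hTr t ht
    _ = _ := by ring

lemma exp_lip {R u v : ℝ} (hu : |u| ≤ R) (hv : |v| ≤ R) :
    |Real.exp u - Real.exp v| ≤ Real.exp R * |u - v| := by
  have := Convex.norm_image_sub_le_of_norm_hasDerivWithin_le (f := Real.exp) (f' := Real.exp)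
    (s := Icc (-R) R) (C := Real.exp R) (x := v) (y := u)
    (fun x hx => (Real.hasDerivAt_exp x).hasDerivWithinAt)
    (fun x hx => by rw [Real.norm_eq_abs, Real.abs_exp]; exact Real.exp_le_exp.2 hx.2)
    (convex_Icc _ _) (abs_le.1 hv) (abs_le.1 hu)
  simpa using this

lemma FoldData.h_mono {f : ℝ × ℝ → ℝ} {h B b : ℝ → ℝ} {r m M a : ℝ}
    (F : FoldData f h B b r m M a) : MonotoneOn (fun x => h x - a / 4 * x ^ 2) (Icc 0 r) := by
  apply mono_aux (g' := fun x => f (x, h x) - a / 4 * (2 * x))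
  · intro t ht
    have := ((F.hd t ht).sub ((hasDerivAt_pow 2 t).const_mul (a / 4))).hasDerivWithinAt
      (s := Icc 0 r)
    exact this.congr_deriv (by norm_num)
  · intro t ht
    have := F.fpos t ht
    linarith

lemma core1 {f : ℝ × ℝ → ℝ} {h B b : ℝ → ℝ} {r m M a : ℝ}
    (F : FoldData f h B b r m M a) (p M2 M3 : ℝ) (hM2 : 0 < M2) (hM3 : 0 < M3)
    (hp : 0 < p) (hpr : p ≤ r) :
    ∃ l > 0, ∃ C > 0, ∀ x₀ ∈ Icc 0 r, ∀ ρ ∈ Icc 0 r,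
      |h ρ - h p| ≤ M2 * x₀ ^ 2 →
      |(h ρ - h p) * Real.exp (- B ρ) - h x₀ * Real.exp (- B x₀)| ≤ M3 * x₀ ^ 4 →
      |ρ - p - l * x₀ ^ 2| ≤ C * x₀ ^ 3 := by
  have hr := F.hr
  have hm := F.hm
  have hM := F.hM
  have ha := F.ha
  have hpm : p ∈ Icc 0 r := ⟨hp.le, hpr⟩
  set k := f (p, h p) with hk
  have hk0 : 0 < k := lt_of_lt_of_le (by positivity) (F.fpos p hpm)
  set E := Real.exp (M * r) with hE
  have hE0 : 0 < E := Real.exp_pos _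
  set N := M2 / (a / 4 * p) with hN
  set N1 := M * E + a / 2 * (E * M) with hN1
  set N2 := N1 + M3 * r with hN2
  set N3 := N2 * E + a / 2 * (E * (M * (N * r))) with hN3
  set N4 := N3 + M * N ^ 2 * r with hN4
  have hN0 : 0 < N := by positivity
  have hN10 : 0 < N1 := by positivity
  have hN20 : 0 < N2 := by positivity
  have hN30 : 0 < N3 := by positivity
  have hN40 : 0 < N4 := by positivity
  refine ⟨a / 2 * Real.exp (B p) / k, by positivity, N4 / k, by positivity, ?_⟩
  intro x₀ hx₀ ρ hρ hD hW
  have hB : ∀ x ∈ Icc 0 r, |B x| ≤ M * x := by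
    intro x hx
    have := F.B_le x hx 0 ⟨le_rfl, hr.le⟩
    rwa [F.B0, sub_zero, sub_zero, abs_of_nonneg hx.1] at this
  have hBr : ∀ x ∈ Icc 0 r, |B x| ≤ M * r := fun x hx =>
    (hB x hx).trans (mul_le_mul_of_nonneg_left hx.2 hM.le)
  have hx0 := hx₀.1
  have hxr := hx₀.2
  have s1 : |ρ - p| ≤ N * x₀ ^ 2 := by
    have : a / 4 * p * |ρ - p| ≤ M2 * x₀ ^ 2 := by
      refine le_trans ?_ hD
      rcases le_total p ρ with h1 | h1
      · have := F.h_mono hpm hρ h1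
        simp only at this
        rw [abs_of_nonneg (by linarith : 0 ≤ ρ - p)]
        refine le_trans ?_ (le_abs_self _)
        have : a / 4 * (ρ ^ 2 - p ^ 2) - a / 4 * p * (ρ - p) = a / 4 * (ρ * (ρ - p)) := by ring
        have : 0 ≤ a / 4 * (ρ * (ρ - p)) :=
          mul_nonneg (by positivity) (mul_nonneg hρ.1 (by linarith))
        linarith
      · have := F.h_mono hρ hpm h1
        simp only at this
        rw [abs_sub_comm, abs_of_nonneg (by linarith : 0 ≤ p - ρ), abs_sub_comm]
        refine le_trans ?_ (le_abs_self _)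
        have : a / 4 * (p ^ 2 - ρ ^ 2) - a / 4 * p * (p - ρ) = a / 4 * (ρ * (p - ρ)) := by ring
        have : 0 ≤ a / 4 * (ρ * (p - ρ)) :=
          mul_nonneg (by positivity) (mul_nonneg hρ.1 (by linarith))
        linarith
    rw [hN, div_mul_eq_mul_div, le_div_iff₀ (by positivity)]
    linarith
  have s2 : |h x₀ * Real.exp (- B x₀) - a / 2 * x₀ ^ 2| ≤ N1 * x₀ ^ 3 := by
    have e1 : |Real.exp (- B x₀) - Real.exp 0| ≤ E * (M * x₀) := by
      refine (exp_lip (R := M * r) (by rw [abs_neg]; exact hBr _ hx₀)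
        (by rw [abs_zero]; positivity)).trans ?_
      rw [sub_zero, abs_neg]
      gcongr
      exact hB _ hx₀
    have e2 : Real.exp (- B x₀) ≤ E :=
      Real.exp_le_exp.2 (le_trans (neg_le_abs _) (hBr _ hx₀))
    rw [Real.exp_zero] at e1
    have e3 : h x₀ * Real.exp (- B x₀) - a / 2 * x₀ ^ 2 = (h x₀ - a / 2 * x₀ ^ 2) * Real.exp (- B x₀)
      + a / 2 * x₀ ^ 2 * (Real.exp (- B x₀) - 1) := by ring
    rw [e3]
    refine (abs_add_le _ _).trans ?_
    rw [abs_mul, abs_mul, Real.abs_exp, abs_of_nonneg (by positivity : 0 ≤ a / 2 * x₀ ^ 2)]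
    calc _ ≤ M * x₀ ^ 3 * E + a / 2 * x₀ ^ 2 * (E * (M * x₀)) := by
          gcongr
          exact F.hasq _ hx₀
      _ = _ := by rw [hN1]; ring
  have x4 : x₀ ^ 4 ≤ r * x₀ ^ 3 := by
    have : 0 ≤ x₀ ^ 3 := by positivity
    nlinarith
  set D := h ρ - h p with hDdef
  have s3 : |D * Real.exp (- B ρ) - a / 2 * x₀ ^ 2| ≤ N2 * x₀ ^ 3 := by
    have := abs_sub_le (D * Real.exp (- B ρ)) (h x₀ * Real.exp (- B x₀)) (a / 2 * x₀ ^ 2)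
    rw [hN2]
    nlinarith
  have s4 : |D - a / 2 * x₀ ^ 2 * Real.exp (B ρ)| ≤ N2 * E * x₀ ^ 3 := by
    have e : D - a / 2 * x₀ ^ 2 * Real.exp (B ρ)
      = (D * Real.exp (- B ρ) - a / 2 * x₀ ^ 2) * Real.exp (B ρ) := by
      have e1 : Real.exp (- B ρ) * Real.exp (B ρ) = 1 := by rw [← Real.exp_add]; simp
      linear_combination (-D) * e1
    rw [e, abs_mul, Real.abs_exp]
    calc _ ≤ N2 * x₀ ^ 3 * E := by
          gcongr
          exact Real.exp_le_exp.2 (le_trans (le_abs_self _) (hBr _ hρ))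
      _ = _ := by ring
  have s5 : |Real.exp (B ρ) - Real.exp (B p)| ≤ E * (M * (N * x₀ ^ 2)) := by
    refine (exp_lip (R := M * r) (hBr _ hρ) (hBr _ hpm)).trans ?_
    gcongr
    refine (F.B_le _ hρ _ hpm).trans ?_
    gcongr
  have s6 : |D - a / 2 * x₀ ^ 2 * Real.exp (B p)| ≤ N3 * x₀ ^ 3 := by
    have e : D - a / 2 * x₀ ^ 2 * Real.exp (B p) = (D - a / 2 * x₀ ^ 2 * Real.exp (B ρ))
      + a / 2 * x₀ ^ 2 * (Real.exp (B ρ) - Real.exp (B p)) := by ring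
    rw [e]
    refine (abs_add_le _ _).trans ?_
    rw [abs_mul (a / 2 * x₀ ^ 2), abs_of_nonneg (by positivity : 0 ≤ a / 2 * x₀ ^ 2)]
    calc _ ≤ N2 * E * x₀ ^ 3 + a / 2 * x₀ ^ 2 * (E * (M * (N * x₀ ^ 2))) := by gcongr
      _ = N2 * E * x₀ ^ 3 + a / 2 * (E * (M * N)) * x₀ ^ 4 := by ring
      _ ≤ N2 * E * x₀ ^ 3 + a / 2 * (E * (M * N)) * (r * x₀ ^ 3) := by gcongr
      _ = _ := by rw [hN3]; ring
  have s7 : |D - k * (ρ - p)| ≤ M * N ^ 2 * r * x₀ ^ 3 := by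
    have sub : uIcc p ρ ⊆ Icc 0 r := uIcc_subset_Icc hpm hρ
    have := Convex.norm_image_sub_le_of_norm_hasDerivWithin_le (f := fun x => h x - k * x)
      (f' := fun x => f (x, h x) - k * 1)
      (s := uIcc p ρ) (C := M * |ρ - p|) (x := p) (y := ρ)
      (fun x hx => ((F.hd x (sub hx)).sub ((hasDerivAt_id x).const_mul k)).hasDerivWithinAt)
      (fun x hx => by
        rw [Real.norm_eq_abs, mul_one]
        refine (F.flip _ (sub hx) _ hpm).trans ?_
        refine mul_le_mul_of_nonneg_left ?_ hM.le
        exact abs_sub_left_of_mem_uIcc hx) (convex_uIcc _ _) left_mem_uIcc right_mem_uIcc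
    have e : D - k * (ρ - p) = h ρ - k * ρ - (h p - k * p) := by rw [hDdef]; ring
    rw [e]
    refine this.trans ?_
    rw [Real.norm_eq_abs]
    calc M * |ρ - p| * |ρ - p| ≤ M * (N * x₀ ^ 2) * (N * x₀ ^ 2) := by gcongr
      _ = M * N ^ 2 * x₀ ^ 4 := by ring
      _ ≤ M * N ^ 2 * (r * x₀ ^ 3) := by gcongr
      _ = _ := by ring
  have s8 : |k * (ρ - p) - a / 2 * x₀ ^ 2 * Real.exp (B p)| ≤ N4 * x₀ ^ 3 := by
    have := abs_sub_le (k * (ρ - p)) D (a / 2 * x₀ ^ 2 * Real.exp (B p))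
    rw [abs_sub_comm (k * (ρ - p)) D] at this
    rw [hN4]
    linarith
  have e : ρ - p - a / 2 * Real.exp (B p) / k * x₀ ^ 2
      = (k * (ρ - p) - a / 2 * x₀ ^ 2 * Real.exp (B p)) / k := by
    field_simp
  rw [e, abs_div, abs_of_pos hk0, div_mul_eq_mul_div N4]
  exact div_le_div_of_nonneg_right s8 hk0.le

lemma FoldData.h_nonneg {f : ℝ × ℝ → ℝ} {h B b : ℝ → ℝ} {r m M a : ℝ}
    (F : FoldData f h B b r m M a) : ∀ x ∈ Icc 0 r, 0 ≤ h x := by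
  intro x hx
  have := F.h_mono ⟨le_rfl, F.hr.le⟩ hx hx.1
  simp only [F.h0] at this
  have h2 : 0 ≤ a / 4 * x ^ 2 := by have := F.ha; positivity
  linarith

def box (r : ℝ) : Set (ℝ × ℝ) := Icc (-r) r ×ˢ Icc (-r) r

lemma comps {γ : ℝ → ℝ × ℝ} {v : ℝ × ℝ} {s : Set ℝ} {t : ℝ} (h : HasDerivWithinAt γ v s t) :
    HasDerivWithinAt (fun t => (γ t).1) v.1 s t ∧ HasDerivWithinAt (fun t => (γ t).2) v.2 s t := by
  have h1 := (hasFDerivAt_fst (𝕜 := ℝ) (p := γ t)).comp_hasDerivWithinAt t h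
  have h2 := (hasFDerivAt_snd (𝕜 := ℝ) (p := γ t)).comp_hasDerivWithinAt t h
  exact ⟨h1, h2⟩

lemma core2 {f : ℝ × ℝ → ℝ} {h B b : ℝ → ℝ} {r m M a : ℝ}
    (F : FoldData f h B b r m M a) : ∃ M2 > 0, ∃ M3 > 0, ∀ G : ℝ × ℝ → ℝ × ℝ,
    (∀ q ∈ box r, m ≤ (G q).1 ∧ (G q).1 ≤ M ∧ (G q).2 = (G q).1 * f q) →
    ∀ x₀ ξ : ℝ, 0 ≤ x₀ → x₀ < r → ξ < r → M2 * x₀ ^ 2 < h r - ξ → M2 * x₀ ^ 2 < r →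
    ∀ T : ℝ, 0 ≤ T → ∀ γ : ℝ → ℝ × ℝ, γ 0 = (x₀, 0) →
    (∀ t ∈ Icc 0 T, HasDerivWithinAt γ (G (γ t)) (Icc 0 T) t) →
    (∀ t ∈ Icc 0 T, (γ t).2 ≤ ξ) →
    ∀ t ∈ Icc 0 T, γ t ∈ box r ∧ x₀ + m * t ≤ (γ t).1 ∧ |h (γ t).1 - (γ t).2| ≤ M2 * x₀ ^ 2 ∧
      |(h (γ t).1 - (γ t).2) * Real.exp (- B (γ t).1) - h x₀ * Real.exp (- B x₀)|
        ≤ M3 * x₀ ^ 4 := by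
  obtain ⟨M2, hM2, M3, hM3, H⟩ := core0 F
  refine ⟨M2, hM2, M3, hM3, ?_⟩
  intro G hG x₀ ξ hx0 hxr hξ c1 c2 T hT γ hγ0 hγ hle
  have hr := F.hr
  have key : ∀ t ∈ Icc 0 T, (∀ s ∈ Icc 0 t, γ s ∈ box r) → ∀ s ∈ Icc 0 t,
      x₀ + m * s ≤ (γ s).1 ∧ |h (γ s).1 - (γ s).2| ≤ M2 * x₀ ^ 2 ∧
      |(h (γ s).1 - (γ s).2) * Real.exp (- B (γ s).1) - h x₀ * Real.exp (- B x₀)|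
        ≤ M3 * x₀ ^ 4 := by
    intro t ht hb
    have sub : Icc 0 t ⊆ Icc 0 T := Icc_subset_Icc_right ht.2
    have hγ' : ∀ s ∈ Icc 0 t, HasDerivWithinAt γ (G (γ s)) (Icc 0 t) s :=
      fun s hs => (hγ s (sub hs)).mono sub
    exact H x₀ ⟨hx0, hxr.le⟩ t ht.1 (fun s => (γ s).1) (fun s => (γ s).2) (fun s => (G (γ s)).1)
      (by simp [hγ0]) (by simp [hγ0])
      (fun s hs => (comps (hγ' s hs)).1)
      (fun s hs => by
        have := (comps (hγ' s hs)).2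
        rw [(hG _ (hb s hs)).2.2] at this
        exact this)
      (fun s hs => ⟨(hG _ (hb s hs)).1, (hG _ (hb s hs)).2.1⟩)
      (fun s hs => (hb s hs).1.2) (fun s hs => (hb s hs).2)
  have cont : ContinuousOn γ (Icc 0 T) := fun t ht => (hγ t ht).continuousWithinAt
  have hbox : Icc 0 T ⊆ γ ⁻¹' box r := by
    apply IsClosed.Icc_subset_of_forall_mem_nhdsGT_of_Icc_subset
    · rw [inter_comm]
      exact cont.preimage_isClosed_of_isClosed isClosed_Icc (isClosed_Icc.prod isClosed_Icc)
    · simp only [mem_preimage, hγ0, box]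
      exact ⟨⟨by linarith, hxr.le⟩, ⟨by linarith, hr.le⟩⟩
    · intro t ht hsub
      have htI := Ico_subset_Icc_self ht
      obtain ⟨k1, k2, -⟩ := key t htI (fun s hs => hsub hs) t ⟨ht.1, le_rfl⟩
      have hb : γ t ∈ box r := hsub ⟨ht.1, le_rfl⟩
      have hx1 : 0 ≤ (γ t).1 := by
        have := mul_nonneg F.hm.le ht.1
        linarith
      have hm1 : (γ t).1 ∈ Icc 0 r := ⟨hx1, hb.1.2⟩
      have hh := F.h_nonneg _ hm1
      have k3 := abs_le.1 k2
      have hne : (γ t).1 ≠ r := by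
        intro he
        rw [he] at k3
        have := hle t htI
        linarith [k3.2]
      have hint : γ t ∈ Ioo (-r) r ×ˢ Ioo (-r) r :=
        ⟨⟨by linarith, lt_of_le_of_ne hb.1.2 hne⟩,
          ⟨by linarith [k3.2], lt_of_le_of_lt (hle t htI) hξ⟩⟩
      have hn : box r ∈ nhds (γ t) :=
        Filter.mem_of_superset ((isOpen_Ioo.prod isOpen_Ioo).mem_nhds hint)
          (prod_mono Ioo_subset_Icc_self Ioo_subset_Icc_self)
      have h1 : γ ⁻¹' box r ∈ nhdsWithin t (Icc 0 T) := cont t htI hn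
      have h2 : Icc 0 T ∈ nhdsWithin t (Ioi t) := Icc_mem_nhdsGT_of_mem ht
      exact nhdsWithin_le_of_mem h2 h1
  intro t ht
  exact ⟨hbox ht, key t ht (fun s hs => hbox ⟨hs.1, hs.2.trans ht.2⟩) t ⟨ht.1, le_rfl⟩⟩

lemma glob_exist {G : ℝ × ℝ → ℝ × ℝ} {L N : NNReal} (hL : LipschitzWith L G)
    (hN : ∀ q, ‖G q‖ ≤ N) (q₀ : ℝ × ℝ) (T : ℝ) (hT : 0 ≤ T) :
    ∃ γ : ℝ → ℝ × ℝ, γ 0 = q₀ ∧ ∀ t ∈ Icc 0 T, HasDerivWithinAt γ (G (γ t)) (Icc 0 T) t := by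
  have P : IsPicardLindelof (fun _ => G) (tmin := 0) (tmax := T) ⟨0, ⟨le_rfl, hT⟩⟩ q₀
      (N * ⟨T, hT⟩) 0 N L :=
    { lipschitzOnWith := fun _ _ => hL.lipschitzOnWith
      continuousOn := fun _ _ => continuousOn_const
      norm_le := fun _ _ x _ => hN x
      mul_max_le := by simp [hT]; exact le_rfl }
  exact P.exists_eq_forall_mem_Icc_hasDerivWithinAt₀

def clampBox (r : ℝ) (q : ℝ × ℝ) : ℝ × ℝ := (max (-r) (min r q.1), max (-r) (min r q.2))

lemma clampBox_mem {r : ℝ} (hr : 0 < r) (q : ℝ × ℝ) : clampBox r q ∈ box r := by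
  constructor <;> constructor <;> simp [clampBox] <;> grind

lemma clampBox_eq {r : ℝ} {q : ℝ × ℝ} (hq : q ∈ box r) : clampBox r q = q := by
  obtain ⟨⟨h1, h2⟩, ⟨h3, h4⟩⟩ := hq
  ext <;> simp [clampBox, *]

lemma clampBox_lip (r : ℝ) : LipschitzWith 1 (clampBox r) := by
  have := ((LipschitzWith.prod_fst (α := ℝ) (β := ℝ)).const_min r |>.const_max (-r)).prodMk
    ((LipschitzWith.prod_snd (α := ℝ) (β := ℝ)).const_min r |>.const_max (-r))
  simp only [max_self] at this
  exact this

lemma core3 {f : ℝ × ℝ → ℝ} {h B b : ℝ → ℝ} {r m M a : ℝ}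
    (F : FoldData f h B b r m M a) (U : Set (ℝ × ℝ)) (X : ℝ × ℝ → ℝ × ℝ)
    (hU : box r ⊆ U)
    (hG : ∀ q ∈ box r, m ≤ (X q).1 ∧ (X q).1 ≤ M ∧ (X q).2 = (X q).1 * f q)
    (L : NNReal) (hL : LipschitzOnWith L X (box r)) (N : NNReal) (hN : ∀ q ∈ box r, ‖X q‖ ≤ N) :
    ∃ ξ > (0 : ℝ), ∃ δ > (0 : ℝ), ∃ p : ℝ, ∃ l > (0 : ℝ), ∃ C > (0 : ℝ),
      ∀ x₀ ∈ Set.Ico (0 : ℝ) δ,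
        (∃ T > (0 : ℝ), ∃ γ : ℝ → ℝ × ℝ,
          γ 0 = (x₀, 0) ∧
          (∀ t ∈ Set.Icc (0 : ℝ) T, γ t ∈ U) ∧
          (∀ t ∈ Set.Icc (0 : ℝ) T, HasDerivWithinAt γ (X (γ t)) (Set.Icc 0 T) t) ∧
          (γ T).2 = ξ ∧ (∀ t ∈ Set.Ico (0 : ℝ) T, (γ t).2 < ξ)) ∧
        (∀ (T : ℝ) (γ : ℝ → ℝ × ℝ), 0 < T →
          γ 0 = (x₀, 0) →
          (∀ t ∈ Set.Icc (0 : ℝ) T, γ t ∈ U) →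
          (∀ t ∈ Set.Icc (0 : ℝ) T, HasDerivWithinAt γ (X (γ t)) (Set.Icc 0 T) t) →
          (γ T).2 = ξ → (∀ t ∈ Set.Ico (0 : ℝ) T, (γ t).2 < ξ) →
          |(γ T).1 - p - l * x₀ ^ 2| ≤ C * x₀ ^ 3) := by
  obtain ⟨M2, hM2, M3, hM3, H⟩ := core2 F
  have hr := F.hr
  have hm := F.hm
  have ha := F.ha
  have hpm : r / 2 ∈ Icc 0 r := ⟨by linarith, by linarith⟩
  have hrm : r ∈ Icc 0 r := ⟨hr.le, le_rfl⟩
  obtain ⟨l, hl, C, hC, HC⟩ := core1 F (r / 2) M2 M3 hM2 hM3 (by linarith) (by linarith)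
  have m1 := F.h_mono ⟨le_rfl, hr.le⟩ hpm (by linarith)
  have m2 := F.h_mono hpm hrm (by linarith)
  simp only [F.h0] at m1 m2
  have hξ : 0 < h (r / 2) := by
    have : 0 < a / 4 * (r / 2) ^ 2 := by positivity
    linarith
  have hlt : h (r / 2) < h r := by
    have : 0 < a / 4 * (r ^ 2 - (r / 2) ^ 2) := by
      have : r ^ 2 - (r / 2) ^ 2 = 3 / 4 * r ^ 2 := by ring
      rw [this]; positivity
    linarith
  have hξr : h (r / 2) < r := lt_of_lt_of_le hlt ((le_abs_self _).trans (F.hle r hrm))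
  have hev : ∀ᶠ δ in nhdsWithin (0 : ℝ) (Ioi 0), δ < r ∧ M2 * δ ^ 2 < h r - h (r / 2) ∧
      M2 * δ ^ 2 < r := by
    apply nhdsWithin_le_nhds
    have ct : Filter.Tendsto (fun δ : ℝ => M2 * δ ^ 2) (nhds 0) (nhds 0) := by
      have : Continuous (fun δ : ℝ => M2 * δ ^ 2) := by fun_prop
      simpa using this.tendsto 0
    exact (eventually_lt_nhds hr).and ((ct.eventually_lt_const (by linarith)).and
      (ct.eventually_lt_const hr))
  obtain ⟨δ, ⟨d1, d2, d3⟩, hδ⟩ := (hev.and self_mem_nhdsWithin).exists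
  have hδ : 0 < δ := hδ
  refine ⟨h (r / 2), hξ, δ, hδ, r / 2, l, hl, C, hC, ?_⟩
  intro x₀ hx₀
  have hx0 := hx₀.1
  have hsq : M2 * x₀ ^ 2 ≤ M2 * δ ^ 2 := by
    have := hx₀.2.le
    gcongr
  have H' := fun G hG => H G hG x₀ (h (r / 2)) hx0 (hx₀.2.trans d1) hξr
    (lt_of_le_of_lt hsq d2) (lt_of_le_of_lt hsq d3)
  constructor
  · set G := X ∘ clampBox r with hGdef
    have GX : ∀ q ∈ box r, G q = X q := fun q hq => by simp [hGdef, clampBox_eq hq]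
    have hGL : LipschitzWith L G := by
      have := hL.comp (f := clampBox r) (clampBox_lip r).lipschitzOnWith (s := univ)
        (fun q _ => clampBox_mem hr q)
      simpa [lipschitzOnWith_univ] using this
    have GN : ∀ q, ‖G q‖ ≤ N := fun q => hN _ (clampBox_mem hr q)
    have HG := H' G (fun q hq => by rw [GX q hq]; exact hG q hq)
    set T0 := r / m + 1 with hT0
    have hT00 : 0 < T0 := by positivity
    obtain ⟨γ, g0, gd⟩ := glob_exist hGL GN (x₀, 0) T0 hT00.le
    have cont : ContinuousOn γ (Icc 0 T0) := fun t ht => (gd t ht).continuousWithinAt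
    have hex : ∃ t ∈ Icc 0 T0, h (r / 2) ≤ (γ t).2 := by
      by_contra! hcon
      obtain ⟨k1, k2, -⟩ := HG T0 hT00.le γ g0 gd (fun t ht => (hcon t ht).le) T0
        ⟨hT00.le, le_rfl⟩
      have k3 := k1.1.2
      have : m * T0 = r + m := by rw [hT0]; field_simp
      linarith
    set S := Icc 0 T0 ∩ (fun t => (γ t).2) ⁻¹' Ici (h (r / 2)) with hS
    have Sc : IsCompact S :=
      isCompact_Icc.of_isClosed_subset
        ((continuous_snd.comp_continuousOn cont).preimage_isClosed_of_isClosed isClosed_Icc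
          isClosed_Ici) inter_subset_left
    have Sne : S.Nonempty := by
      obtain ⟨t, ht, h2⟩ := hex
      exact ⟨t, ht, h2⟩
    obtain ⟨T, ⟨hTS, hTmin⟩⟩ := Sc.exists_isLeast Sne
    have hlt2 : ∀ t ∈ Ico 0 T, (γ t).2 < h (r / 2) := by
      intro t ht
      by_contra! hc
      have : T ≤ t := hTmin ⟨⟨ht.1, ht.2.le.trans hTS.1.2⟩, hc⟩
      linarith [ht.2]
    have hTpos : 0 < T := by
      rcases hTS.1.1.eq_or_lt with h1 | h1
      · have := hTS.2
        simp only [mem_preimage, mem_Ici, ← h1, g0] at this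
        linarith
      · exact h1
    have sub : Icc 0 T ⊆ Icc 0 T0 := Icc_subset_Icc_right hTS.1.2
    have hTeq : (γ T).2 = h (r / 2) := by
      refine le_antisymm ?_ hTS.2
      have c2 : ContinuousWithinAt (fun t => (γ t).2) (Ico 0 T) T :=
        ((continuous_snd.comp_continuousOn cont) T hTS.1).mono
          (Ico_subset_Icc_self.trans sub)
      have : T ∈ closure (Ico 0 T) := by
        rw [closure_Ico hTpos.ne]; exact ⟨hTpos.le, le_rfl⟩
      exact c2.closure_le this continuousWithinAt_const (fun t ht => (hlt2 t ht).le)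
    have gd' : ∀ t ∈ Icc 0 T, HasDerivWithinAt γ (G (γ t)) (Icc 0 T) t :=
      fun t ht => (gd t (sub ht)).mono sub
    have hb : ∀ t ∈ Icc 0 T, γ t ∈ box r := fun t ht =>
      (HG T hTpos.le γ g0 gd' (fun t ht => by
        rcases ht.2.eq_or_lt with h1 | h1
        · rw [h1, hTeq]
        · exact (hlt2 t ⟨ht.1, h1⟩).le) t ht).1
    refine ⟨T, hTpos, γ, g0, fun t ht => hU (hb t ht), ?_, hTeq, hlt2⟩
    intro t ht
    rw [← GX _ (hb t ht)]
    exact gd' t ht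
  · intro T γ hT g0 _ gd hTeq hlt2
    obtain ⟨k1, k2, k3, k4⟩ := H' X hG T hT.le γ g0 gd (fun t ht => by
        rcases ht.2.eq_or_lt with h1 | h1
        · rw [h1, hTeq]
        · exact (hlt2 t ⟨ht.1, h1⟩).le) T ⟨hT.le, le_rfl⟩
    rw [hTeq] at k3 k4
    have := mul_pos hm hT
    exact HC x₀ ⟨hx0, (hx₀.2.trans d1).le⟩ _ ⟨by linarith, k1.1.2⟩ k3 k4

lemma seg_aux {g g' : ℝ → ℝ} {x y C : ℝ} (hxy : x ≤ y)
    (hg : ∀ t ∈ Icc x y, HasDerivAt g (g' t) t)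
    (hb : ∀ t ∈ Icc x y, |g' t| ≤ C) : |g y - g x| ≤ C * (y - x) :=
  norm_image_sub_le_of_norm_deriv_le_segment' (fun t ht => (hg t ht).hasDerivWithinAt)
    (fun t ht => hb t (Ico_subset_Icc_self ht)) y ⟨hxy, le_rfl⟩

lemma taylor2 {f : ℝ × ℝ → ℝ} {p₀ : ℝ × ℝ} (hf : ContDiffAt ℝ 2 f p₀) :
    ∃ ε > 0, ∃ M > 0, ∀ u ∈ Metric.ball p₀ ε, ∀ v ∈ Metric.ball p₀ ε,
      |f u - f v - fderiv ℝ f v (u - v)| ≤ M * ‖u - v‖ ^ 2 := by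
  have h1 : ContDiffAt ℝ 1 (fderiv ℝ f) p₀ := hf.fderiv_right (by norm_num)
  obtain ⟨K, s, hs, hK⟩ := h1.exists_lipschitzOnWith
  have h2 : ∀ᶠ q in nhds p₀, ContDiffAt ℝ 2 f q := hf.eventually (by simp)
  obtain ⟨ε, hε, hb⟩ := Metric.eventually_nhds_iff_ball.1 (h2.and hs)
  refine ⟨ε, hε, K + 1, by positivity, ?_⟩
  intro u hu v hv
  have sub : segment ℝ v u ⊆ Metric.ball p₀ ε := (convex_ball p₀ ε).segment_subset hv hu
  have := Convex.norm_image_sub_le_of_norm_fderiv_le' (𝕜 := ℝ) (f := f) (s := segment ℝ v u)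
    (φ := fderiv ℝ f v) (C := K * ‖u - v‖) (x := v) (y := u)
    (fun x hx => (hb x (sub hx)).1.differentiableAt (by norm_num))
    (fun x hx => by
      have e := hK.dist_le_mul x (hb x (sub hx)).2 v (hb v hv).2
      rw [dist_eq_norm, dist_eq_norm] at e
      refine e.trans ?_
      gcongr
      exact norm_sub_le_of_mem_segment hx)
    (convex_segment v u) (left_mem_segment ℝ v u) (right_mem_segment ℝ v u)
  rw [Real.norm_eq_abs] at this
  refine this.trans ?_
  have : 0 ≤ ‖u - v‖ ^ 2 := by positivity
  nlinarith

set_option maxHeartbeats 2000000 in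
lemma setupF {f : ℝ × ℝ → ℝ} {a : ℝ} (hf : ContDiffAt ℝ 3 f (0, 0)) (f0 : f (0, 0) = 0)
    (ha : 0 < a) (hfa : fderiv ℝ f (0, 0) (1, 0) = a) :
    ∃ h B b : ℝ → ℝ, ∃ M₀ > 0, ∃ r₀ > 0, ∀ r, 0 < r → r ≤ r₀ → ∀ M, M₀ ≤ M → ∀ m, 0 < m →
      FoldData f h B b r m M a := by
  -- local constants
  obtain ⟨ε1, hε1, Mt, hMt, hT⟩ := taylor2 (hf.of_le (by norm_num))
  obtain ⟨Kf, s, hs, hKf⟩ := (hf.of_le (by norm_num : (1 : WithTop ℕ∞) ≤ 3)).exists_lipschitzOnWith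
  have hd2 : ContDiffAt ℝ 2 (fderiv ℝ f) (0, 0) := hf.fderiv_right (by norm_num)
  have hfy : ContDiffAt ℝ 2 (fun q => fderiv ℝ f q (0, 1)) (0, 0) :=
    hd2.clm_apply contDiffAt_const
  obtain ⟨N, hN0, hN⟩ : ∃ N > 0, ∀ᶠ q in nhds ((0 : ℝ), (0 : ℝ)),
      |f q| < N ∧ |fderiv ℝ f q (0, 1)| < N := by
    refine ⟨|f (0, 0)| + |fderiv ℝ f (0, 0) (0, 1)| + 1, by positivity, ?_⟩
    refine Filter.Eventually.and ?_ ?_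
    · apply hf.continuousAt.abs.eventually_lt_const
      have := abs_nonneg (fderiv ℝ f (0, 0) (0, 1))
      linarith
    · apply hfy.continuousAt.abs.eventually_lt_const
      have := abs_nonneg (f (0, 0))
      linarith
  -- ODE
  set G : ℝ × ℝ × ℝ → ℝ × ℝ × ℝ := fun z =>
    (1, f (z.1, z.2.1), fderiv ℝ f (z.1, z.2.1) (0, 1)) with hG
  have hpr : ContDiffAt ℝ 1 (fun z : ℝ × ℝ × ℝ => (z.1, z.2.1)) (0, 0, 0) := by fun_prop
  have hGc : ContDiffAt ℝ 1 G (0, 0, 0) := by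
    refine contDiffAt_const.prodMk (ContDiffAt.prodMk ?_ ?_)
    · exact ContDiffAt.comp (0, 0, 0) (g := f) (hf.of_le (by norm_num)) hpr
    · exact ContDiffAt.comp (0, 0, 0) (g := fun q => fderiv ℝ f q (0, 1))
        (hfy.of_le (by norm_num)) hpr
  obtain ⟨α, α0, ε, hε, hα⟩ :=
    hGc.exists_forall_mem_closedBall_exists_eq_forall_mem_Ioo_hasDerivAt₀ 0
  simp only [zero_sub, zero_add] at hα
  have d1 : ∀ t ∈ Ioo (-ε) ε, HasDerivAt (fun t => (α t).1) 1 t := fun t ht =>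
    (hasFDerivAt_fst (𝕜 := ℝ) (p := α t)).comp_hasDerivAt t (hα t ht)
  have hα1 : ∀ t ∈ Ico 0 ε, (α t).1 = t := by
    intro t ht
    have := seg_aux (g := fun t => (α t).1 - t) (g' := fun t => 1 - 1) (C := 0) ht.1
      (fun s hs => (d1 s ⟨by linarith [hs.1], by linarith [hs.2, ht.2]⟩).sub (hasDerivAt_id s))
      (by simp)
    simp only [α0, zero_mul, abs_nonpos_iff] at this
    linarith
  set h : ℝ → ℝ := fun t => (α t).2.1 with hh
  set B : ℝ → ℝ := fun t => (α t).2.2 with hB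
  set b : ℝ → ℝ := fun t => fderiv ℝ f (t, h t) (0, 1) with hb
  have dsnd : ∀ t ∈ Ioo (-ε) ε, HasDerivAt (fun t => (α t).2) (G (α t)).2 t := fun t ht =>
    (hasFDerivAt_snd (𝕜 := ℝ) (p := α t)).comp_hasDerivAt t (hα t ht)
  have dh : ∀ t ∈ Ico 0 ε, HasDerivAt h (f (t, h t)) t := fun t ht => by
    have := (hasFDerivAt_fst (𝕜 := ℝ) (p := (α t).2)).comp_hasDerivAt t
      (dsnd t ⟨by linarith [ht.1], ht.2⟩)
    exact this.congr_deriv (by simp [hG, hh, hα1 t ht])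
  have dB : ∀ t ∈ Ico 0 ε, HasDerivAt B (b t) t := fun t ht => by
    have := (hasFDerivAt_snd (𝕜 := ℝ) (p := (α t).2)).comp_hasDerivAt t
      (dsnd t ⟨by linarith [ht.1], ht.2⟩)
    exact this.congr_deriv (by simp [hG, hb, hh, hα1 t ht])
  have h0 : h 0 = 0 := by simp [hh, α0]
  have B0 : B 0 = 0 := by simp [hB, α0]
  -- radius
  obtain ⟨ρ, hρ, hball⟩ := Metric.eventually_nhds_iff_ball.1
    ((hN.and hs).and (Metric.ball_mem_nhds _ hε1))
  have hcont : ContinuousAt (fun t => (t, h t)) 0 :=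
    continuousAt_id.prodMk (dh 0 ⟨le_rfl, hε⟩).continuousAt
  have hev : ∀ᶠ t in nhds (0 : ℝ), (t, h t) ∈ Metric.ball ((0 : ℝ), (0 : ℝ)) ρ := by
    apply hcont
    simp only [h0]
    exact Metric.ball_mem_nhds _ hρ
  obtain ⟨ρ', hρ', hball'⟩ := Metric.eventually_nhds_iff_ball.1 hev
  have hin : ∀ t, 0 ≤ t → t < ρ' → (t, h t) ∈ Metric.ball ((0 : ℝ), (0 : ℝ)) ρ := by
    intro t h1 h2
    apply hball'
    simp [abs_of_nonneg h1, h2]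
  set C1 := Kf * (1 + N) with hC1
  set b0 := fderiv ℝ f (0, 0) (0, 1) with hb0
  set C2 := Mt * (1 + N) ^ 2 + |b0| * C1 with hC2
  have hC10 : 0 ≤ C1 := by positivity
  have hC20 : 0 ≤ C2 := by positivity
  refine ⟨h, B, b, C1 + C2 + N + Mt, by positivity,
    min (min (ρ / 2) (ρ' / 2)) (min (ε / 2) (min (1 / (C1 + 1)) (a / (2 * (C2 + 1))))),
    by positivity, ?_⟩
  intro r hr hrr M hM m hm
  simp only [le_min_iff] at hrr
  obtain ⟨⟨r1, r2⟩, r3, r4, r5⟩ := hrr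
  have r4' : C1 * r ≤ 1 := by
    rw [le_div_iff₀ (by positivity)] at r4
    nlinarith
  have r5' : C2 * r ≤ a / 2 := by
    rw [le_div_iff₀ (by positivity)] at r5
    nlinarith
  have hin' : ∀ t ∈ Icc 0 r, (t, h t) ∈ Metric.ball ((0 : ℝ), (0 : ℝ)) ρ :=
    fun t ht => hin t ht.1 (by linarith [ht.2])
  have dh' : ∀ t ∈ Icc 0 r, HasDerivAt h (f (t, h t)) t :=
    fun t ht => dh t ⟨ht.1, by linarith [ht.2]⟩
  have dB' : ∀ t ∈ Icc 0 r, HasDerivAt B (b t) t :=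
    fun t ht => dB t ⟨ht.1, by linarith [ht.2]⟩
  have hlip0 : ∀ x ∈ Icc 0 r, ∀ y ∈ Icc 0 r, x ≤ y → |h y - h x| ≤ N * (y - x) := by
    intro x hx y hy hxy
    exact seg_aux hxy (fun t ht => dh' t ⟨hx.1.trans ht.1, ht.2.trans hy.2⟩)
      (fun t ht => (hball _ (hin' t ⟨hx.1.trans ht.1, ht.2.trans hy.2⟩)).1.1.1.le)
  have hlip : ∀ x ∈ Icc 0 r, ∀ y ∈ Icc 0 r, |h x - h y| ≤ N * |x - y| := by
    intro x hx y hy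
    rcases le_total x y with hxy | hxy
    · rw [abs_sub_comm, abs_sub_comm x y, abs_of_nonneg (sub_nonneg.2 hxy)]
      exact hlip0 x hx y hy hxy
    · rw [abs_of_nonneg (sub_nonneg.2 hxy)]
      exact hlip0 y hy x hx hxy
  have z0 : (0 : ℝ) ∈ Icc 0 r := ⟨le_rfl, hr.le⟩
  have hnorm : ∀ x ∈ Icc 0 r, ∀ y ∈ Icc 0 r, ‖(x, h x) - (y, h y)‖ ≤ (1 + N) * |x - y| := by
    intro x hx y hy
    have := hlip x hx y hy
    have h3 := abs_nonneg (x - y)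
    simp only [Prod.mk_sub_mk, Prod.norm_mk, Real.norm_eq_abs, sup_le_iff]
    constructor <;> nlinarith
  have flip : ∀ x ∈ Icc 0 r, ∀ y ∈ Icc 0 r, |f (x, h x) - f (y, h y)| ≤ C1 * |x - y| := by
    intro x hx y hy
    have := hKf.dist_le_mul _ (hball _ (hin' x hx)).1.2 _ (hball _ (hin' y hy)).1.2
    rw [dist_eq_norm, dist_eq_norm] at this
    refine this.trans ?_
    rw [hC1, mul_assoc]
    gcongr
    exact hnorm x hx y hy
  have fle : ∀ x ∈ Icc 0 r, |f (x, h x)| ≤ C1 * x := by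
    intro x hx
    have := flip x hx 0 z0
    rwa [h0, f0, sub_zero, sub_zero, abs_of_nonneg hx.1] at this
  have hsq : ∀ x ∈ Icc 0 r, |h x| ≤ C1 * x ^ 2 := by
    intro x hx
    have := seg_aux (C := C1 * x) hx.1 (fun t ht => dh' t ⟨ht.1, ht.2.trans hx.2⟩)
      (fun t ht => (fle t ⟨ht.1, ht.2.trans hx.2⟩).trans (by have := ht.2; gcongr))
    rw [h0, sub_zero, sub_zero] at this
    linarith
  have f2 : ∀ x ∈ Icc 0 r, |f (x, h x) - a * x| ≤ C2 * x ^ 2 := by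
    intro x hx
    have t1 := hT (x, h x) (hball _ (hin' x hx)).2 (0, 0) (Metric.mem_ball_self hε1)
    have n1 := hnorm x hx 0 z0
    rw [h0, sub_zero x, abs_of_nonneg hx.1] at n1
    have e : fderiv ℝ f (0, 0) ((x, h x) - (0, 0)) = a * x + b0 * h x := by
      have : ((x, h x) - (0, 0) : ℝ × ℝ) = x • ((1 : ℝ), (0 : ℝ)) + h x • ((0 : ℝ), (1 : ℝ)) := by
        simp
      rw [this, map_add, map_smul, map_smul, hfa, ← hb0, smul_eq_mul, smul_eq_mul]
      ring
    rw [e, f0, sub_zero] at t1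
    have t2 : Mt * ‖((x, h x) - (0, 0) : ℝ × ℝ)‖ ^ 2 ≤ Mt * ((1 + N) * x) ^ 2 := by gcongr
    have t3 : |b0 * h x| ≤ |b0| * (C1 * x ^ 2) := by
      rw [abs_mul]
      have := hsq x hx
      gcongr
    have t4 : f (x, h x) - a * x = (f (x, h x) - (a * x + b0 * h x)) + b0 * h x := by ring
    rw [t4]
    refine (abs_add_le _ _).trans ?_
    rw [hC2]
    nlinarith
  refine ⟨hr, hm, lt_of_lt_of_le (by positivity) hM, ha, h0, B0, dh', dB', ?_, ?_, ?_, ?_, ?_, ?_, ?_⟩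
  · intro x hx
    have := (hball _ (hin' x hx)).1.1.2
    linarith
  · intro x hx
    have := hsq x hx
    have e : C1 * x ^ 2 ≤ C1 * r ^ 2 := by
      have h1 := hx.1
      have h2 := hx.2
      gcongr
    nlinarith
  · intro x hx y hy
    have hy' : (x, y) ∈ Metric.ball ((0 : ℝ), (0 : ℝ)) ρ := by
      have h1 : |x| < ρ := by rw [abs_of_nonneg hx.1]; linarith [hx.2]
      have h2 : |y| < ρ := lt_of_le_of_lt (abs_le.2 hy) (by linarith)
      simp [Prod.dist_eq, h1, h2]
    have t1 := hT (x, y) (hball _ hy').2 (x, h x) (hball _ (hin' x hx)).2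
    have e : ((x, y) - (x, h x) : ℝ × ℝ) = (y - h x) • ((0 : ℝ), (1 : ℝ)) := by simp
    have e2 : ‖(x, y) - (x, h x)‖ ^ 2 = (h x - y) ^ 2 := by
      rw [e, norm_smul]
      simp [Prod.norm_mk]
      ring
    rw [e2, e, map_smul, smul_eq_mul] at t1
    have e3 : f (x, h x) - f (x, y) - b x * (h x - y)
      = -(f (x, y) - f (x, h x) - (y - h x) * fderiv ℝ f (x, h x) (0, 1)) := by
      simp only [hb]; ring
    rw [e3, abs_neg]
    refine t1.trans ?_
    have : Mt ≤ M := by linarith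
    gcongr
  · intro x hx
    have := seg_aux (g := fun x => h x - a / 2 * x ^ 2) (g' := fun x => f (x, h x) - a * x)
      (C := C2 * x ^ 2) hx.1
      (fun t ht => ((dh' t ⟨ht.1, ht.2.trans hx.2⟩).sub
        ((hasDerivAt_pow 2 t).const_mul (a / 2))).congr_deriv (by norm_num; ring))
      (fun t ht => (f2 t ⟨ht.1, ht.2.trans hx.2⟩).trans (by
        have h1 := ht.1
        have h2 := ht.2
        gcongr))
    simp only [h0] at this
    have e : h x - a / 2 * x ^ 2 - (0 - a / 2 * 0 ^ 2) = h x - a / 2 * x ^ 2 := by ring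
    rw [e] at this
    refine this.trans ?_
    have e1 : C2 ≤ M := by linarith
    have h1 := hx.1
    calc C2 * x ^ 2 * (x - 0) = C2 * x ^ 3 := by ring
      _ ≤ M * x ^ 3 := by gcongr
  · intro x hx
    refine (hsq x hx).trans ?_
    have e1 : C1 ≤ M := by linarith
    gcongr
  · intro x hx
    have h1 := (abs_le.1 (f2 x hx)).1
    have h2 : C2 * x ^ 2 ≤ a / 2 * x := by
      have e : C2 * x ^ 2 ≤ C2 * r * x := by nlinarith [mul_nonneg hC20 hx.1, hx.2]
      have := mul_le_mul_of_nonneg_right r5' hx.1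
      linarith
    linarith
  · intro x hx y hy
    refine (flip x hx y hy).trans ?_
    have e1 : C1 ≤ M := by linarith
    gcongr

lemma fderiv_quot {X : ℝ × ℝ → ℝ × ℝ} (hX : ContDiffAt ℝ 3 X (0, 0))
    (hfold : (X (0, 0)).2 = 0) (hX1 : (X (0, 0)).1 > 0) :
    fderiv ℝ (fun q => (X q).2 / (X q).1) (0, 0) (1, 0) =
      fderiv ℝ (fun p => (X p).2) (0, 0) (1, 0) / (X (0, 0)).1 := by
  have c1 : ContDiffAt ℝ 3 (fun q => (X q).1) (0, 0) := hX.fst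
  have c2 : ContDiffAt ℝ 3 (fun q => (X q).2) (0, 0) := hX.snd
  have cf : ContDiffAt ℝ 3 (fun q => (X q).2 / (X q).1) (0, 0) := c2.div c1 hX1.ne'
  have e : (fun q => (X q).2) =ᶠ[nhds (0, 0)] fun q => (X q).1 * ((X q).2 / (X q).1) := by
    filter_upwards [c1.continuousAt.eventually_ne hX1.ne'] with q hq
    field_simp
  rw [e.fderiv_eq, fderiv_fun_mul (c1.differentiableAt (by norm_num))
    (cf.differentiableAt (by norm_num))]
  simp [hfold]
  field_simp

/- STATEMENT 0: well-definedness and quadratic expansion of the transition map ρ₁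
from the switching line Σ = {y = 0} to the section Σ⁺ = {y = ξ}, for a C³ vector
field X = (X¹, X²) with a visible fold at the origin and flow moving rightwards. -/
theorem stmt_0 (U : Set (ℝ × ℝ)) (hU : IsOpen U) (hU0 : ((0 : ℝ), (0 : ℝ)) ∈ U)
    (X : ℝ × ℝ → ℝ × ℝ) (hX : ContDiffOn ℝ 3 X U)
    (hfold : (X (0, 0)).2 = 0)
    (hXx : fderiv ℝ (fun p => (X p).2) (0, 0) (1, 0) > 0)
    (hX1 : (X (0, 0)).1 > 0) :
    ∃ ξ > (0 : ℝ), ∃ δ > (0 : ℝ), ∃ p : ℝ, ∃ l > (0 : ℝ), ∃ C > (0 : ℝ),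
      ∀ x₀ ∈ Set.Ico (0 : ℝ) δ,
        -- (i) existence of a trajectory from (x₀,0) reaching {y = ξ} for the first time
        (∃ T > (0 : ℝ), ∃ γ : ℝ → ℝ × ℝ,
          γ 0 = (x₀, 0) ∧
          (∀ t ∈ Set.Icc (0 : ℝ) T, γ t ∈ U) ∧
          (∀ t ∈ Set.Icc (0 : ℝ) T, HasDerivWithinAt γ (X (γ t)) (Set.Icc 0 T) t) ∧
          (γ T).2 = ξ ∧ (∀ t ∈ Set.Ico (0 : ℝ) T, (γ t).2 < ξ)) ∧
        -- (ii) any such trajectory hits Σ⁺ at ρ₁(x₀) = p + l·x₀² + O(x₀³), with l > 0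
        (∀ (T : ℝ) (γ : ℝ → ℝ × ℝ), 0 < T →
          γ 0 = (x₀, 0) →
          (∀ t ∈ Set.Icc (0 : ℝ) T, γ t ∈ U) →
          (∀ t ∈ Set.Icc (0 : ℝ) T, HasDerivWithinAt γ (X (γ t)) (Set.Icc 0 T) t) →
          (γ T).2 = ξ → (∀ t ∈ Set.Ico (0 : ℝ) T, (γ t).2 < ξ) →
          |(γ T).1 - p - l * x₀ ^ 2| ≤ C * x₀ ^ 3) := by
  have hc : ContDiffAt ℝ 3 X (0, 0) := hX.contDiffAt (hU.mem_nhds hU0)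
  have c1 : ContDiffAt ℝ 3 (fun q => (X q).1) (0, 0) := hc.fst
  have c2 : ContDiffAt ℝ 3 (fun q => (X q).2) (0, 0) := hc.snd
  have cf : ContDiffAt ℝ 3 (fun q => (X q).2 / (X q).1) (0, 0) := c2.div c1 hX1.ne'
  obtain ⟨h, B, b, M₀, hM₀, r₀, hr₀, H⟩ := setupF cf (by simp [hfold])
    (div_pos hXx hX1) (fderiv_quot hc hfold hX1)
  obtain ⟨L, s, hs, hL⟩ := (hc.of_le (by norm_num : (1 : WithTop ℕ∞) ≤ 3)).exists_lipschitzOnWith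
  have e1 : ∀ᶠ q in nhds ((0 : ℝ), (0 : ℝ)), (X (0, 0)).1 / 2 < (X q).1 :=
    c1.continuousAt.eventually_const_lt (by linarith)
  have e2 : ∀ᶠ q in nhds ((0 : ℝ), (0 : ℝ)), ‖X q‖ < ‖X (0, 0)‖ + 1 :=
    hc.continuousAt.norm.eventually_lt_const (by linarith)
  have e3 : ∀ᶠ q in nhds ((0 : ℝ), (0 : ℝ)), q ∈ s := hs
  have e4 : ∀ᶠ q in nhds ((0 : ℝ), (0 : ℝ)), q ∈ U := hU.mem_nhds hU0
  obtain ⟨ρ, hρ, hball⟩ := Metric.eventually_nhds_iff_ball.1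
    ((e1.and e2).and (e3.and e4))
  set r := min r₀ (ρ / 2) with hr
  have hr0 : 0 < r := by positivity
  have hbox : ∀ q ∈ box r, q ∈ Metric.ball ((0 : ℝ), (0 : ℝ)) ρ := by
    intro q hq
    have hrρ : r < ρ := lt_of_le_of_lt (min_le_right _ _) (by linarith)
    have h1 : |q.1| < ρ := lt_of_le_of_lt (abs_le.2 hq.1) hrρ
    have h2 : |q.2| < ρ := lt_of_le_of_lt (abs_le.2 hq.2) hrρ
    simp [Prod.dist_eq, h1, h2]
  have F := H r hr0 (min_le_left _ _) (M₀ + (‖X (0, 0)‖ + 1))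
    (by have := norm_nonneg (X (0, 0)); linarith) ((X (0, 0)).1 / 2) (by linarith)
  refine core3 F U X (fun q hq => (hball q (hbox q hq)).2.2) ?_ L
    (hL.mono (fun q hq => (hball q (hbox q hq)).2.1)) ⟨‖X (0, 0)‖ + 1, by positivity⟩
    (fun q hq => (hball q (hbox q hq)).1.2.le)
  intro q hq
  obtain ⟨⟨k1, k2⟩, -⟩ := hball q (hbox q hq)
  have k3 : (X q).1 ≤ ‖X q‖ := (le_abs_self _).trans (norm_fst_le (X q))
  have k4 : (X q).1 ≠ 0 := (by linarith : 0 < (X q).1).ne'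
  exact ⟨k1.le, by linarith, by field_simp⟩
end

section
/- Let Y = (Y¹, Y²) be as in the context (visible fold of Y at (α, 0), flow moving leftwards). Then there exist ξ > 0, δ > 0, p⁻ ∈ ℝ, k₁ > 0 and C > 0 such that for every x₀ ∈ [α, α + δ): (i) there exist T < 0 and a C¹ curve γ : [T, 0] → U with γ(0) = (x₀, 0), γ'(t) = Y(γ(t)) for all t ∈ [T, 0], γ₂(T) = −ξ, and γ₂(t) > −ξ for T < t ≤ 0; and (ii) for every such pair (T, γ), |γ₁(T) − p⁻ − k₁·(x₀ − α)²| ≤ C·(x₀ − α)³. In other words, the backward transition map μ₁(x₀) = γ₁(T) from {(x,0) : α ≤ x < α + δ} to the section Σ⁻ = {y = −ξ} is well defined and satisfies μ₁(x₀) = p⁻ + k₁·(x₀ − α)² + O((x₀ − α)³) with k₁ > 0. -/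
open Set Filter Topology

/-- first order Taylor bound from a Lipschitz derivative -/
lemma fd_quad {g g' : ℝ → ℝ} {s : Set ℝ} (hs : Convex ℝ s) {K : ℝ} (hK : 0 ≤ K) {w : ℝ} (hw : w ∈ s)
    (hg : ∀ z ∈ s, HasDerivAt g (g' z) z) (hl : ∀ z ∈ s, |g' z - g' w| ≤ K * |z - w|)
    {x : ℝ} (hx : x ∈ s) : |g x - g w - g' w * (x - w)| ≤ K * (x - w) ^ 2 := by
  have hsub : uIcc w x ⊆ s := by
    rw [← segment_eq_uIcc]; exact hs.segment_subset hw hx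
  have h := Convex.norm_image_sub_le_of_norm_hasDerivWithin_le (𝕜 := ℝ) (s := uIcc w x)
    (f := fun z => g z - g' w * z) (f' := fun z => g' z - g' w) (x := w) (y := x) (C := K * |x - w|)
    (fun z hz => by
      have : HasDerivAt (fun z => g z - g' w * z) (g' z - g' w * 1) z :=
        (hg z (hsub hz)).sub ((hasDerivAt_id z).const_mul (g' w))
      rw [mul_one] at this
      exact this.hasDerivWithinAt)
    (fun z hz => by
      rw [Real.norm_eq_abs]
      refine (hl z (hsub hz)).trans ?_
      have := abs_sub_left_of_mem_uIcc hz
      gcongr)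
    (convex_uIcc w x) left_mem_uIcc right_mem_uIcc
  simp only [Real.norm_eq_abs] at h
  calc _ = |g x - g' w * x - (g w - g' w * w)| := by congr 1; ring
    _ ≤ K * |x - w| * |x - w| := h
    _ = K * (x - w) ^ 2 := by rw [mul_assoc, abs_mul_abs_self, sq]

lemma fd_quad2 {g : ℝ → ℝ} {a b c d w : ℝ} (hg : ContDiffOn ℝ 2 g (Ioo a b)) (hac : a < c)
    (hdb : d < b) (hw : w ∈ Icc c d) :
    ∃ C, 0 ≤ C ∧ ∀ x ∈ Icc c d, |g x - g w - deriv g w * (x - w)| ≤ C * (x - w) ^ 2 := by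
  have hsub : Icc c d ⊆ Ioo a b := fun x hx => ⟨by linarith [hx.1], by linarith [hx.2]⟩
  have h2 : ContDiffOn ℝ 1 (deriv g) (Ioo a b) :=
    ((contDiffOn_succ_iff_deriv_of_isOpen (n := 1) isOpen_Ioo).1
      (by simpa [one_add_one_eq_two] using hg)).2.2
  obtain ⟨K, hK⟩ := (h2.mono hsub).exists_lipschitzOnWith one_ne_zero (convex_Icc c d) isCompact_Icc
  refine ⟨K, K.2, fun x hx => fd_quad (convex_Icc c d) K.2 hw (g' := deriv g) ?_ ?_ hx⟩
  · intro z hz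
    exact (((hg.contDiffAt (isOpen_Ioo.mem_nhds (hsub hz))).differentiableAt
      (by norm_num))).hasDerivAt
  · intro z hz
    have := hK.dist_le_mul z hz w hw
    simpa [Real.dist_eq] using this

lemma fd_boot {P : ℝ → Prop} {S : ℝ} (h0 : P 0)
    (hop : ∀ t ∈ Ico 0 S, P t → ∀ᶠ s in 𝓝[>] t, P s)
    (hcl : ∀ t ∈ Ioc 0 S, (∀ s ∈ Ico 0 t, P s) → P t) : ∀ t ∈ Icc 0 S, P t := by
  have key : ∀ t ∈ Icc (0:ℝ) S, ∀ s ∈ Icc 0 t, P s := by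
    by_cases hS : 0 ≤ S
    swap
    · intro t ht; exact absurd (ht.1.trans ht.2) hS
    have := IsClosed.Icc_subset_of_forall_exists_gt (a := (0:ℝ)) (b := S)
      (s := {t | ∀ s ∈ Icc 0 t, P s}) ?_ ?_ ?_
    · exact fun t ht => this ht
    · rw [← isSeqClosed_iff_isClosed]
      intro u t hu hut
      have htm : t ∈ Icc 0 S := isClosed_Icc.mem_of_tendsto hut (Eventually.of_forall fun n => (hu n).2)
      refine ⟨?_, htm⟩
      have hlt : ∀ s ∈ Ico 0 t, P s := by
        intro s hs
        obtain ⟨n, hn⟩ := (hut.eventually (lt_mem_nhds hs.2)).exists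
        exact (hu n).1 s ⟨hs.1, hn.le⟩
      intro s hs
      rcases eq_or_lt_of_le hs.2 with h | h
      · subst h
        rcases eq_or_lt_of_le hs.1 with h' | h'
        · rw [← h']; exact h0
        · exact hcl s ⟨h', htm.2⟩ hlt
      · exact hlt s ⟨hs.1, h⟩
    · intro s hs
      have : s = 0 := le_antisymm hs.2 hs.1
      rwa [this]
    · intro t ht y hy
      have h1 := hop t ht.2 (ht.1 t ⟨ht.2.1, le_rfl⟩)
      obtain ⟨z, hz, hz'⟩ := (mem_nhdsGT_iff_exists_Ioc_subset.1 h1)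
      refine ⟨min z y, ?_, lt_min hz hy, min_le_right _ _⟩
      intro s hs
      rcases le_or_gt s t with h | h
      · exact ht.1 s ⟨hs.1, h⟩
      · exact hz' ⟨h, hs.2.trans (min_le_left _ _)⟩
  exact fun t ht => key t ht t ⟨ht.1, le_rfl⟩

structure FD (α : ℝ) (U : Set (ℝ × ℝ)) (Y : ℝ × ℝ → ℝ × ℝ) (φ E : ℝ → ℝ) (r m K κ k C : ℝ) : Prop where
  r_pos : 0 < r
  m_pos : 0 < m
  K_nonneg : 0 ≤ K
  κ_pos : 0 < κ
  k_pos : 0 < k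
  C_nonneg : 0 ≤ C
  mem : ∀ x y, x ∈ Ioo (α - r) (α + r) → |y - φ x| < r → (x, y) ∈ U
  le_m : ∀ x y, x ∈ Ioo (α - r) (α + r) → |y - φ x| < r → (Y (x, y)).1 ≤ -m
  E_ge : ∀ x, x ∈ Ioo (α - r) (α + r) → 1 / 2 ≤ E x
  E_le : ∀ x, x ∈ Ioo (α - r) (α + r) → E x ≤ 2
  φ_c : ContDiffOn ℝ 2 φ (Ioo (α - r) (α + r))
  E_c : ContDiffOn ℝ 2 E (Ioo (α - r) (α + r))
  φ_α : φ α = 0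
  est : ∀ x y, x ∈ Ioo (α - r) (α + r) → |y - φ x| < r →
    |deriv E x * (Y (x, y)).1 * (y - φ x) + E x * ((Y (x, y)).2 - deriv φ x * (Y (x, y)).1)|
      ≤ K * (E x * (y - φ x)) ^ 2
  anti : ∀ x ∈ Ico α (α + r), ∀ z ∈ Ico x (α + r), κ * ((z - α) ^ 2 - (x - α) ^ 2) ≤ φ x - φ z
  dφ : ∀ x ∈ Ioo α (α + r), deriv φ x < 0
  expand : ∀ x ∈ Ico α (α + r), |-(E x * φ x) - k * (x - α) ^ 2| ≤ C * (x - α) ^ 3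

section
variable {α : ℝ} {U : Set (ℝ × ℝ)} {Y : ℝ × ℝ → ℝ × ℝ} {φ E : ℝ → ℝ} {r m K κ k C : ℝ}

lemma FD.hφ (h : FD α U Y φ E r m K κ k C) {x : ℝ} (hx : x ∈ Ioo (α - r) (α + r)) :
    HasDerivAt φ (deriv φ x) x :=
  ((h.φ_c.contDiffAt (isOpen_Ioo.mem_nhds hx)).differentiableAt (by norm_num)).hasDerivAt

lemma FD.hE (h : FD α U Y φ E r m K κ k C) {x : ℝ} (hx : x ∈ Ioo (α - r) (α + r)) :
    HasDerivAt E (deriv E x) x :=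
  ((h.E_c.contDiffAt (isOpen_Ioo.mem_nhds hx)).differentiableAt (by norm_num)).hasDerivAt

lemma FD.C0 (h : FD α U Y φ E r m K κ k C) {p A : ℝ} (hp : α < p) (hpr : 2 * p - α < α + r)
    (hA : 0 < A) (hAr : 2 * A < r) (hAp : 2 * A < φ p - φ (2 * p - α))
    (hAK : K * A * (r / m) < 1 / 2)
    {x₀ : ℝ} (hx₀ : x₀ ∈ Ico α (2 * p - α)) (hH : |E x₀ * (0 - φ x₀)| < A / 2)
    {S : ℝ} {β : ℝ → ℝ × ℝ} (hβ0 : β 0 = (x₀, 0))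
    (hβ : ∀ t ∈ Icc 0 S, HasDerivWithinAt β (-Y (β t)) (Icc 0 S) t)
    (hξ : ∀ t ∈ Ico 0 S, φ p < (β t).2) :
    ∀ t ∈ Icc 0 S, x₀ + m * t ≤ (β t).1 ∧ (β t).1 < 2 * p - α ∧
      |E (β t).1 * ((β t).2 - φ (β t).1)| < A ∧
      |E (β t).1 * ((β t).2 - φ (β t).1) - E x₀ * (0 - φ x₀)| ≤ K * A ^ 2 * (r / m) := by
  have hr := h.r_pos
  have hm := h.m_pos
  have hK := h.K_nonneg
  have hc1 : ContinuousOn (fun t => (β t).1) (Icc 0 S) :=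
    fun t ht => (hβ t ht).continuousWithinAt.fst
  have hc2 : ContinuousOn (fun t => (β t).2) (Icc 0 S) :=
    fun t ht => (hβ t ht).continuousWithinAt.snd
  have hcH : ∀ t ∈ Icc 0 S, (β t).1 ∈ Ioo (α - r) (α + r) →
      ContinuousWithinAt (fun t => E (β t).1 * ((β t).2 - φ (β t).1)) (Icc 0 S) t := by
    intro t ht hx
    have h1 : ContinuousWithinAt (fun t => E (β t).1) (Icc 0 S) t :=
      (h.hE hx).continuousAt.comp_continuousWithinAt (f := fun t => (β t).1) (hc1 t ht)
    have h2 : ContinuousWithinAt (fun t => φ (β t).1) (Icc 0 S) t :=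
      (h.hφ hx).continuousAt.comp_continuousWithinAt (f := fun t => (β t).1) (hc1 t ht)
    exact h1.mul ((hc2 t ht).sub h2)
  have hd1 : ∀ t ∈ Ico 0 S, HasDerivWithinAt (fun t => (β t).1) (-(Y (β t)).1) (Ici t) t := by
    intro t ht
    exact ((hβ t (Ico_subset_Icc_self ht)).mono_of_mem_nhdsWithin (Icc_mem_nhdsGE_of_mem ht)).fst
  have hd2 : ∀ t ∈ Ico 0 S, HasDerivWithinAt (fun t => (β t).2) (-(Y (β t)).2) (Ici t) t := by
    intro t ht
    exact ((hβ t (Ico_subset_Icc_self ht)).mono_of_mem_nhdsWithin (Icc_mem_nhdsGE_of_mem ht)).snd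
  -- from a bound on `H` to a bound on `y - φ`
  have hyb : ∀ x y, x ∈ Ioo (α - r) (α + r) → |E x * (y - φ x)| ≤ A → |y - φ x| ≤ 2 * A := by
    intro x y hx hy
    have := h.E_ge x hx
    rw [abs_mul, abs_of_pos (by linarith)] at hy
    nlinarith [abs_nonneg (y - φ x)]
  have hfin : ∀ t ∈ Icc 0 S, (∀ s ∈ Ico 0 t, (β s).1 ∈ Ioo (α - r) (2 * p - α) ∧
      |E (β s).1 * ((β s).2 - φ (β s).1)| < A) → 
      x₀ + m * t ≤ (β t).1 ∧ (β t).1 < 2 * p - α ∧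
      |E (β t).1 * ((β t).2 - φ (β t).1)| < A ∧
      |E (β t).1 * ((β t).2 - φ (β t).1) - E x₀ * (0 - φ x₀)| ≤ K * A ^ 2 * (r / m) := by
    intro t ht hP
    have hsub : Icc 0 t ⊆ Icc 0 S := Icc_subset_Icc_right ht.2
    have hsubo : Ico 0 t ⊆ Ico 0 S := Ico_subset_Ico_right ht.2
    have hI : ∀ s ∈ Ico 0 t, (β s).1 ∈ Ioo (α - r) (α + r) := fun s hs =>
      ⟨(hP s hs).1.1, (hP s hs).1.2.trans hpr⟩
    have hyr : ∀ s ∈ Ico 0 t, |(β s).2 - φ (β s).1| < r := fun s hs =>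
      (hyb _ _ (hI s hs) (hP s hs).2.le).trans_lt hAr
    have hxm : ∀ s ∈ Icc 0 t, x₀ + m * s ≤ (β s).1 := by
      intro s hs
      have := image_le_of_deriv_right_le_deriv_boundary (a := 0) (b := t)
        (f := fun s => x₀ + m * s) (f' := fun _ => m) (by fun_prop)
        (fun s _ => by
          simpa using (((hasDerivAt_id s).const_mul m).const_add x₀).hasDerivWithinAt)
        (B := fun s => (β s).1) (B' := fun s => -(Y (β s)).1) (by simp [hβ0]) (hc1.mono hsub)
        (fun s hs => hd1 s (hsubo hs))
        (fun s hs => by have := h.le_m _ _ (hI s hs) (hyr s hs); simpa using le_neg_of_le_neg this)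
      exact this hs
    have hxt := hxm t ⟨ht.1, le_rfl⟩
    have hle : (β t).1 ≤ 2 * p - α := by
      rcases eq_or_lt_of_le ht.1 with h0 | h0
      · rw [← h0, hβ0]; exact hx₀.2.le
      · have hcl : t ∈ closure (Ico 0 t) := by rw [closure_Ico h0.ne]; exact ⟨ht.1, le_rfl⟩
        exact ContinuousWithinAt.closure_le hcl ((hc1 t ht).mono (Ico_subset_Icc_self.trans hsub))
          continuousWithinAt_const (fun s hs => (hP s hs).1.2.le)
    have hyge : φ p ≤ (β t).2 := by
      rcases eq_or_lt_of_le ht.1 with h0 | h0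
      · rw [← h0, hβ0]
        have := h.anti α ⟨le_rfl, by linarith⟩ p ⟨hp.le, by linarith⟩
        have h3 : 0 ≤ κ * ((p - α) ^ 2 - (α - α) ^ 2) := by
          have := h.κ_pos
          have h4 : κ * ((p - α) ^ 2 - (α - α) ^ 2) = κ * (p - α) ^ 2 := by ring
          rw [h4]; positivity
        rw [h.φ_α] at this; simp only; linarith
      · have hcl : t ∈ closure (Ico 0 t) := by rw [closure_Ico h0.ne]; exact ⟨ht.1, le_rfl⟩
        exact ContinuousWithinAt.closure_le hcl continuousWithinAt_const
          ((hc2 t ht).mono (Ico_subset_Icc_self.trans hsub)) (fun s hs => (hξ s (hsubo hs)).le)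
    have hmt : 0 ≤ m * t := mul_nonneg hm.le ht.1
    have hIt : (β t).1 ∈ Ioo (α - r) (α + r) := ⟨by linarith [hx₀.1], by linarith⟩
    have htr : t ≤ r / m := by
      rw [le_div_iff₀ hm]; linarith [hx₀.1]
    have hcHt : ContinuousOn (fun t => E (β t).1 * ((β t).2 - φ (β t).1)) (Icc 0 t) := by
      intro s hs
      refine (hcH s (hsub hs) ?_).mono hsub
      rcases eq_or_lt_of_le hs.2 with h1 | h1
      · rw [h1]; exact hIt
      · exact hI s ⟨hs.1, h1⟩
    have hHd := norm_image_sub_le_of_norm_deriv_right_le_segment (C := K * A ^ 2) hcHt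
      (f' := fun s => -(deriv E (β s).1 * (Y (β s)).1 * ((β s).2 - φ (β s).1) +
        E (β s).1 * ((Y (β s)).2 - deriv φ (β s).1 * (Y (β s)).1)))
      (fun s hs => by
        have e1 := hd1 s (hsubo hs)
        have e2 := hd2 s (hsubo hs)
        have e3 := (h.hE (hI s hs)).comp_hasDerivWithinAt (h := fun t => (β t).1) s e1
        have e4 := (h.hφ (hI s hs)).comp_hasDerivWithinAt (h := fun t => (β t).1) s e1
        have e5 := e3.mul (e2.sub e4)
        refine e5.congr_deriv ?_
        simp only [Function.comp, Pi.sub_apply]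
        ring)
      (fun s hs => by
        rw [norm_neg, Real.norm_eq_abs]
        refine (h.est _ _ (hI s hs) (hyr s hs)).trans ?_
        have h1 := (hP s hs).2.le
        have h2 : (E (β s).1 * ((β s).2 - φ (β s).1)) ^ 2 ≤ A ^ 2 := sq_le_sq' (by linarith [(abs_le.1 h1).1]) (abs_le.1 h1).2
        exact mul_le_mul_of_nonneg_left h2 hK)
      t ⟨ht.1, le_rfl⟩
    simp only [hβ0, Real.norm_eq_abs, sub_zero t] at hHd
    have hKA : 0 ≤ K * A ^ 2 := by positivity
    have hHd' : |E (β t).1 * ((β t).2 - φ (β t).1) - E x₀ * (0 - φ x₀)| ≤ K * A ^ 2 * (r / m) :=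
      hHd.trans (mul_le_mul_of_nonneg_left htr hKA)
    have hlt : |E (β t).1 * ((β t).2 - φ (β t).1)| < A := by
      have h1 : K * A ^ 2 * (r / m) ≤ A / 2 := by nlinarith
      have h2 := abs_sub_abs_le_abs_sub (E (β t).1 * ((β t).2 - φ (β t).1)) (E x₀ * (0 - φ x₀))
      linarith
    refine ⟨hxt, lt_of_le_of_ne hle ?_, hlt, hHd'⟩
    intro heq
    have h1 := hyb _ _ hIt hlt.le
    rw [heq] at h1
    have := (abs_le.1 h1).2
    linarith
  have hall := fd_boot (P := fun s => (β s).1 ∈ Ioo (α - r) (2 * p - α) ∧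
      |E (β s).1 * ((β s).2 - φ (β s).1)| < A) (S := S) ?_ ?_ ?_
  · exact fun t ht => hfin t ht (fun s hs => hall s ⟨hs.1, hs.2.le.trans ht.2⟩)
  · rw [hβ0]
    exact ⟨⟨by simp only; linarith [hx₀.1], hx₀.2⟩, by simp only; linarith⟩
  · intro t ht hPt
    have hmem : Icc 0 S ∈ 𝓝[>] t := nhdsWithin_mono _ Ioi_subset_Ici_self (Icc_mem_nhdsGE_of_mem ht)
    have htI := Ico_subset_Icc_self ht
    have h1 := (hc1 t htI).mono_of_mem_nhdsWithin hmem
    have h2 := (hcH t htI ⟨hPt.1.1, by linarith [hPt.1.2]⟩).mono_of_mem_nhdsWithin hmem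
    filter_upwards [h1.eventually (isOpen_Ioo.mem_nhds hPt.1),
      h2.abs.eventually (gt_mem_nhds hPt.2)] with s hs1 hs2
    exact ⟨hs1, hs2⟩
  · intro t ht hP
    have := hfin t (Ioc_subset_Icc_self ht) hP
    refine ⟨⟨?_, this.2.1⟩, this.2.2.1⟩
    have h3 : 0 ≤ m * t := mul_nonneg hm.le ht.1.le
    linarith [this.1, hx₀.1]
end

lemma fd_rev {β : ℝ → ℝ × ℝ} {a b : ℝ} {V : ℝ × ℝ} {t : ℝ}
    (h : HasDerivWithinAt β V (Icc a b) (-t)) :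
    HasDerivWithinAt (fun s => β (-s)) (-V) (Icc (-b) (-a)) t := by
  have h1 : HasDerivWithinAt (fun s : ℝ => -s) (-1) (Icc (-b) (-a)) t :=
    (hasDerivAt_neg t).hasDerivWithinAt
  have h2 := HasDerivWithinAt.scomp (t' := Icc a b) (h := fun s : ℝ => -s) t h h1 (by
    intro s hs; exact ⟨by linarith [hs.2], by linarith [hs.1]⟩)
  simpa [Function.comp_def] using h2

section
variable {α : ℝ} {U : Set (ℝ × ℝ)} {Y : ℝ × ℝ → ℝ × ℝ} {φ E : ℝ → ℝ} {r m K κ k C : ℝ}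

set_option maxHeartbeats 2000000 in
lemma FD.main (h : FD α U Y φ E r m K κ k C) (hYd : ContDiffAt ℝ 1 Y (α, 0)) :
    ∃ ξ > (0 : ℝ), ∃ δ > (0 : ℝ), ∃ p : ℝ, ∃ k₁ > (0 : ℝ), ∃ C > (0 : ℝ),
      ∀ x₀ ∈ Set.Ico α (α + δ),
        (∃ T < (0 : ℝ), ∃ γ : ℝ → ℝ × ℝ,
          γ 0 = (x₀, 0) ∧
          (∀ t ∈ Set.Icc T (0 : ℝ), γ t ∈ U) ∧
          (∀ t ∈ Set.Icc T (0 : ℝ), HasDerivWithinAt γ (Y (γ t)) (Set.Icc T 0) t) ∧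
          (γ T).2 = -ξ ∧ (∀ t ∈ Set.Ioc T (0 : ℝ), (γ t).2 > -ξ)) ∧
        (∀ (T : ℝ) (γ : ℝ → ℝ × ℝ), T < 0 →
          γ 0 = (x₀, 0) →
          (∀ t ∈ Set.Icc T (0 : ℝ), γ t ∈ U) →
          (∀ t ∈ Set.Icc T (0 : ℝ), HasDerivWithinAt γ (Y (γ t)) (Set.Icc T 0) t) →
          (γ T).2 = -ξ → (∀ t ∈ Set.Ioc T (0 : ℝ), (γ t).2 > -ξ) →
          |(γ T).1 - p - k₁ * (x₀ - α) ^ 2| ≤ C * (x₀ - α) ^ 3) := by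
  have hr := h.r_pos
  have hm := h.m_pos
  have hK := h.K_nonneg
  have hκ := h.κ_pos
  have hk := h.k_pos
  have hC := h.C_nonneg
  obtain ⟨ρ, hρ, ε, hε, hpic⟩ :=
    hYd.neg.exists_forall_mem_closedBall_exists_eq_forall_mem_Ioo_hasDerivAt 0
  obtain ⟨d, hd, hdr, hdm⟩ : ∃ d > 0, d ≤ r / 4 ∧ d ≤ m * ε / 4 :=
    ⟨min (r / 4) (m * ε / 4), lt_min (by positivity) (by positivity), min_le_left _ _, min_le_right _ _⟩
  obtain ⟨p, hpd⟩ : ∃ p, p = α + d := ⟨_, rfl⟩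
  have hp : α < p := by linarith
  have hpr : 2 * p - α < α + r := by linarith
  have hpI : p ∈ Ioo (α - r) (α + r) := ⟨by linarith, by linarith⟩
  have hφp : φ p < 0 := by
    have := h.anti α ⟨le_rfl, by linarith⟩ p ⟨hp.le, by linarith⟩
    rw [h.φ_α, sub_self, hpd] at this
    have h2 : 0 < κ * (d ^ 2) := by positivity
    rw [← hpd] at this
    have h3 : p - α = d := by linarith
    rw [h3] at this
    linarith
  have hgap : 0 < φ p - φ (2 * p - α) := by
    have := h.anti p ⟨hp.le, by linarith⟩ (2 * p - α) ⟨by linarith, by linarith⟩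
    have h2 : 0 < κ * (3 * d ^ 2) := by positivity
    have h3 : (2 * p - α - α) ^ 2 - (p - α) ^ 2 = 3 * d ^ 2 := by rw [hpd]; ring
    rw [h3] at this
    linarith
  obtain ⟨A₀, hA₀, hA1, hA2, hA3⟩ : ∃ A₀ > 0, 2 * A₀ < r ∧ 2 * A₀ < φ p - φ (2 * p - α) ∧
      K * A₀ * (r / m) < 1 / 2 := by
    have hq : 0 < K * (r / m) + 1 := by positivity
    refine ⟨min (r / 4) (min ((φ p - φ (2 * p - α)) / 4) (1 / 4 / (K * (r / m) + 1))), ?_, ?_, ?_, ?_⟩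
    · exact lt_min (by positivity) (lt_min (by positivity) (by positivity))
    · have := min_le_left (r / 4) (min ((φ p - φ (2 * p - α)) / 4) (1 / 4 / (K * (r / m) + 1)))
      linarith
    · have := (min_le_right (r / 4) (min ((φ p - φ (2 * p - α)) / 4) (1 / 4 / (K * (r / m) + 1)))).trans (min_le_left _ _)
      linarith
    · have := (min_le_right (r / 4) (min ((φ p - φ (2 * p - α)) / 4) (1 / 4 / (K * (r / m) + 1)))).trans (min_le_right _ _)
      rw [le_div_iff₀ hq] at this
      have h0 : 0 < min (r / 4) (min ((φ p - φ (2 * p - α)) / 4) (1 / 4 / (K * (r / m) + 1))) :=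
        lt_min (by positivity) (lt_min (by positivity) (by positivity))
      nlinarith
  have hAmono : ∀ A, 0 < A → A ≤ A₀ → 2 * A < r ∧ 2 * A < φ p - φ (2 * p - α) ∧
      K * A * (r / m) < 1 / 2 := by
    intro A hA hAA
    refine ⟨by linarith, by linarith, lt_of_le_of_lt ?_ hA3⟩
    gcongr
  obtain ⟨δ, hδ, hδ1, hδρ, hδd, hδA⟩ : ∃ δ > 0, δ ≤ 1 ∧ δ ≤ ρ ∧ δ ≤ d ∧ 4 * (k + C) * δ ≤ A₀ := by
    refine ⟨min (min 1 ρ) (min d (A₀ / (4 * (k + C)))), ?_, ?_, ?_, ?_, ?_⟩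
    · exact lt_min (lt_min one_pos hρ) (lt_min hd (by positivity))
    · exact (min_le_left _ _).trans (min_le_left _ _)
    · exact (min_le_left _ _).trans (min_le_right _ _)
    · exact (min_le_right _ _).trans (min_le_left _ _)
    · have : min (min 1 ρ) (min d (A₀ / (4 * (k + C)))) ≤ A₀ / (4 * (k + C)) :=
        (min_le_right _ _).trans (min_le_right _ _)
      rw [le_div_iff₀ (by positivity)] at this
      linarith
  -- bound on H₀
  have hH0 : ∀ x₀ ∈ Ico α (α + δ), |E x₀ * (0 - φ x₀) - k * (x₀ - α) ^ 2| ≤ C * (x₀ - α) ^ 3 ∧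
      |E x₀ * (0 - φ x₀)| ≤ (k + C) * (x₀ - α) ^ 2 := by
    intro x₀ hx₀
    have h1 := h.expand x₀ ⟨hx₀.1, by linarith [hx₀.2]⟩
    have h2 : -(E x₀ * φ x₀) = E x₀ * (0 - φ x₀) := by ring
    rw [h2] at h1
    refine ⟨h1, ?_⟩
    have h3 : (x₀ - α) ^ 3 ≤ (x₀ - α) ^ 2 := by
      apply pow_le_pow_of_le_one <;> linarith [hx₀.1, hx₀.2]
    have h4 := abs_sub_abs_le_abs_sub (E x₀ * (0 - φ x₀)) (k * (x₀ - α) ^ 2)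
    rw [abs_of_nonneg (by positivity : 0 ≤ k * (x₀ - α) ^ 2)] at h4
    nlinarith
  have hH0A : ∀ x₀ ∈ Ico α (α + δ), 4 * ((k + C) * (x₀ - α) ^ 2) ≤ A₀ := by
    intro x₀ hx₀
    have h3 : (x₀ - α) ^ 2 ≤ δ := by nlinarith [hx₀.1, hx₀.2]
    have : (k + C) * (x₀ - α) ^ 2 ≤ (k + C) * δ := by gcongr
    linarith
  have hH0s : ∀ x₀ ∈ Ico α (α + δ), |E x₀ * (0 - φ x₀)| < A₀ / 2 := by
    intro x₀ hx₀
    linarith [hH0A x₀ hx₀, (hH0 x₀ hx₀).2]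
  have hg : 0 < -(E p * deriv φ p) := by
    have h1 := h.E_ge p hpI
    have h2 := h.dφ p ⟨hp, by linarith⟩
    nlinarith
  obtain ⟨g, hgdef⟩ : ∃ g, g = -(E p * deriv φ p) := ⟨_, rfl⟩
  rw [← hgdef] at hg
  have hGc : ContDiffOn ℝ 2 (fun x => E x * (φ p - φ x)) (Ioo (α - r) (α + r)) :=
    h.E_c.mul (contDiffOn_const.sub h.φ_c)
  have hGd : deriv (fun x => E x * (φ p - φ x)) p = g := by
    have := ((h.hE hpI).mul ((h.hφ hpI).const_sub (φ p))).deriv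
    rw [hgdef]
    refine Eq.trans this ?_
    ring
  obtain ⟨C₃, hC₃, hG⟩ := fd_quad2 (c := α) (d := 2 * p - α) (w := p) hGc (by linarith) hpr
    ⟨hp.le, by linarith⟩
  rw [hGd] at hG
  obtain ⟨D, hD, hDdef⟩ : ∃ D, 0 ≤ D ∧ D = K * (4 * (k + C)) ^ 2 * (r / m) := ⟨_, by positivity, rfl⟩
  obtain ⟨D₂, hD₂, hD₂def⟩ : ∃ D₂, 0 ≤ D₂ ∧ D₂ = 2 * (k + (C + D)) / (κ * d) := ⟨_, by positivity, rfl⟩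
  refine ⟨-φ p, by linarith, δ, hδ, p, k / g, by positivity, (C + D + C₃ * D₂ ^ 2) / g + 1,
    by positivity, fun x₀ hx₀ => ?_⟩
  have hx₀' : x₀ ∈ Ico α (2 * p - α) := ⟨hx₀.1, by linarith [hx₀.2]⟩
  constructor
  · obtain ⟨β, hβ0, hβ⟩ := hpic (x₀, 0) (by
      rw [Metric.mem_closedBall, Prod.dist_eq]
      simp only [dist_self, Real.dist_eq]
      rw [abs_of_nonneg (by linarith [hx₀.1])]
      exact max_le (by linarith [hx₀.2]) hρ.le)
    have hβ' : ∀ S ≤ ε / 2, ∀ t ∈ Icc 0 S, HasDerivWithinAt β (-Y (β t)) (Icc 0 S) t := by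
      intro S hS t ht
      exact (hβ t ⟨by linarith [ht.1], by linarith [ht.2]⟩).hasDerivWithinAt
    have hcy : ContinuousOn (fun t => (β t).2) (Icc 0 (ε / 2)) :=
      fun t ht => (hβ' _ le_rfl t ht).continuousWithinAt.snd
    have hne : ∃ t ∈ Icc 0 (ε / 2), (β t).2 ≤ φ p := by
      by_contra! hcon
      have := h.C0 hp hpr hA₀ hA1 hA2 hA3 hx₀' (hH0s x₀ hx₀) hβ0 (hβ' _ le_rfl)
        (fun t ht => hcon t (Ico_subset_Icc_self ht)) (ε / 2) ⟨by positivity, le_rfl⟩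
      have h2 := this.1.trans_lt this.2.1
      linarith [hx₀.1]
    have hZ : IsCompact (Icc 0 (ε / 2) ∩ (fun t => (β t).2) ⁻¹' Iic (φ p)) :=
      (isCompact_Icc).of_isClosed_subset (hcy.preimage_isClosed_of_isClosed isClosed_Icc isClosed_Iic)
        inter_subset_left
    obtain ⟨S, hS⟩ := hZ.exists_isLeast (by obtain ⟨t, ht, ht'⟩ := hne; exact ⟨t, ht, ht'⟩)
    have hS1 := hS.1.1
    have hSy : (β S).2 ≤ φ p := hS.1.2
    have hlt : ∀ t ∈ Ico 0 S, φ p < (β t).2 := by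
      intro t ht
      by_contra! hcon
      exact absurd (hS.2 ⟨⟨ht.1, ht.2.le.trans hS1.2⟩, hcon⟩) (not_le.2 ht.2)
    have hS0 : 0 < S := by
      refine lt_of_le_of_ne hS1.1 ?_
      intro h0
      rw [← h0, hβ0] at hSy
      simp only at hSy
      linarith
    have hSeq : (β S).2 = φ p := by
      refine le_antisymm hSy ?_
      have hcl : S ∈ closure (Ico 0 S) := by rw [closure_Ico hS0.ne]; exact ⟨hS0.le, le_rfl⟩
      exact ContinuousWithinAt.closure_le hcl continuousWithinAt_const
        ((hcy S hS1).mono (Ico_subset_Icc_self.trans (Icc_subset_Icc_right hS1.2)))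
        (fun s hs => (hlt s hs).le)
    have hmain := h.C0 hp hpr hA₀ hA1 hA2 hA3 hx₀' (hH0s x₀ hx₀) hβ0 (hβ' S hS1.2) hlt
    refine ⟨-S, by linarith, fun t => β (-t), by simpa using hβ0, ?_, ?_, ?_, ?_⟩
    · intro t ht
      have ht' : -t ∈ Icc 0 S := ⟨by linarith [ht.2], by linarith [ht.1]⟩
      obtain ⟨e1, e2, e3, -⟩ := hmain _ ht'
      have hmt : 0 ≤ m * (-t) := mul_nonneg hm.le ht'.1
      have hI : (β (-t)).1 ∈ Ioo (α - r) (α + r) := ⟨by linarith [hx₀.1], by linarith⟩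
      refine h.mem _ _ hI ?_
      have := h.E_ge _ hI
      rw [abs_mul, abs_of_pos (by linarith)] at e3
      nlinarith [abs_nonneg ((β (-t)).2 - φ (β (-t)).1)]
    · intro t ht
      have ht' : -t ∈ Icc 0 S := ⟨by linarith [ht.2], by linarith [ht.1]⟩
      have := fd_rev (hβ' S hS1.2 (-t) ht')
      simpa using this
    · simpa using hSeq
    · intro t ht
      have := hlt (-t) ⟨by linarith [ht.2], by linarith [ht.1]⟩
      simpa using this
  · intro T γ hT hγ0 hγU hγ hγT hγy
    have hβ : ∀ t ∈ Icc 0 (-T), HasDerivWithinAt (fun s => γ (-s)) (-Y (γ (-t))) (Icc 0 (-T)) t := by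
      intro t ht
      have := fd_rev (hγ (-t) ⟨by linarith [ht.2], by linarith [ht.1]⟩)
      simpa using this
    have hβy : ∀ t ∈ Ico 0 (-T), φ p < (γ (-t)).2 := by
      intro t ht
      have := hγy (-t) ⟨by linarith [ht.2], by linarith [ht.1]⟩
      simpa using this
    have hC0 : ∀ A, 0 < A → A ≤ A₀ → |E x₀ * (0 - φ x₀)| < A / 2 → _ := fun A hA hAA hHA =>
      h.C0 (β := fun s => γ (-s)) hp hpr hA (hAmono A hA hAA).1 (hAmono A hA hAA).2.1
        (hAmono A hA hAA).2.2 hx₀' hHA (by simpa using hγ0) hβ hβy (-T) ⟨by linarith, le_rfl⟩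
    simp only [neg_neg] at hC0
    rw [neg_neg] at hγT
    rw [hγT] at hC0
    obtain ⟨q, hq⟩ : ∃ q, q = (γ T).1 := ⟨_, rfl⟩
    rw [← hq] at hC0 ⊢
    obtain ⟨η, hη⟩ : ∃ η, η = x₀ - α := ⟨_, rfl⟩
    have hη0 : 0 ≤ η := by linarith [hx₀.1]
    have hη1 : η ≤ 1 := by linarith [hx₀.2]
    obtain ⟨b1, b2⟩ := hH0 x₀ hx₀
    have b3 := hH0A x₀ hx₀
    rw [← hη] at b1 b2 b3 ⊢
    have hqI : q ∈ Ico α (2 * p - α) := by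
      have := hC0 A₀ hA₀ le_rfl (hH0s x₀ hx₀)
      have h3 : 0 ≤ m * (-T) := mul_nonneg hm.le (by linarith)
      exact ⟨by linarith [this.1, hx₀.1], this.2.1⟩
    have hHd : |E q * (φ p - φ q) - E x₀ * (0 - φ x₀)| ≤ D * η ^ 4 := by
      rcases eq_or_lt_of_le hη0 with h0 | h0
      · rw [← h0] at b2 ⊢
        have hz : E x₀ * (0 - φ x₀) = 0 := by
          rw [← abs_nonpos_iff]; simpa using b2
        rw [hz] at hC0 ⊢
        rw [sub_zero]
        by_contra! hcon
        have hpos : 0 < |E q * (φ p - φ q)| := by simpa using hcon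
        have := (hC0 (min A₀ |E q * (φ p - φ q)|) (lt_min hA₀ hpos) (min_le_left _ _)
          (by rw [abs_zero]; have := lt_min hA₀ hpos; linarith)).2.2.1
        exact absurd this (not_lt.2 (min_le_right _ _))
      · have hpos : 0 < (k + C) * η ^ 2 := by positivity
        have := (hC0 (4 * ((k + C) * η ^ 2)) (by positivity) b3 (by linarith)).2.2.2
        refine this.trans (le_of_eq ?_)
        rw [hDdef]; ring
    have p43 : η ^ 4 ≤ η ^ 3 := pow_le_pow_of_le_one hη0 hη1 (by norm_num)
    have p32 : η ^ 3 ≤ η ^ 2 := pow_le_pow_of_le_one hη0 hη1 (by norm_num)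
    have c1 : |E q * (φ p - φ q) - k * η ^ 2| ≤ (C + D) * η ^ 3 := by
      have := abs_sub_le (E q * (φ p - φ q)) (E x₀ * (0 - φ x₀)) (k * η ^ 2)
      have : D * η ^ 4 ≤ D * η ^ 3 := by gcongr
      linarith
    have c2 : |E q * (φ p - φ q)| ≤ (k + (C + D)) * η ^ 2 := by
      have h4 := abs_sub_abs_le_abs_sub (E q * (φ p - φ q)) (k * η ^ 2)
      rw [abs_of_nonneg (by positivity : 0 ≤ k * η ^ 2)] at h4
      have : (C + D) * η ^ 3 ≤ (C + D) * η ^ 2 := by gcongr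
      linarith
    have hEq := h.E_ge q ⟨by linarith [hqI.1], by linarith [hqI.2]⟩
    have c3 : |φ p - φ q| ≤ 2 * (k + (C + D)) * η ^ 2 := by
      rw [abs_mul, abs_of_pos (by linarith)] at c2
      nlinarith [abs_nonneg (φ p - φ q)]
    have c4 : κ * d * |q - p| ≤ |φ p - φ q| := by
      have hpa : p - α = d := by linarith
      rcases le_total q p with hqp | hqp
      · have := h.anti q ⟨hqI.1, by linarith [hqI.2]⟩ p ⟨hqp, by linarith⟩
        rw [abs_of_nonpos (by linarith : q - p ≤ 0)]
        have h5 : κ * d * -(q - p) ≤ κ * ((p - α) ^ 2 - (q - α) ^ 2) := by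
          have : (p - α) ^ 2 - (q - α) ^ 2 = (d + (q - α)) * (-(q - p)) := by rw [← hpa]; ring
          rw [this, mul_assoc]
          have h6 := hqI.1
          have h7 : 0 ≤ -(q - p) := by linarith
          gcongr
          linarith
        have := neg_le_abs (φ p - φ q)
        linarith
      · have := h.anti p ⟨hp.le, by linarith⟩ q ⟨hqp, by linarith [hqI.2]⟩
        rw [abs_of_nonneg (by linarith : 0 ≤ q - p)]
        have h5 : κ * d * (q - p) ≤ κ * ((q - α) ^ 2 - (p - α) ^ 2) := by
          have : (q - α) ^ 2 - (p - α) ^ 2 = (d + (q - α)) * (q - p) := by rw [← hpa]; ring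
          rw [this, mul_assoc]
          have h6 := hqI.1
          have h7 : 0 ≤ q - p := by linarith
          gcongr
          linarith
        have := le_abs_self (φ p - φ q)
        linarith
    have c5 : |q - p| ≤ D₂ * η ^ 2 := by
      rw [hD₂def, div_mul_eq_mul_div, le_div_iff₀ (by positivity)]
      linarith
    have c6 : (q - p) ^ 2 ≤ D₂ ^ 2 * η ^ 3 := by
      calc (q - p) ^ 2 = |q - p| ^ 2 := (sq_abs _).symm
        _ ≤ (D₂ * η ^ 2) ^ 2 := by gcongr
        _ = D₂ ^ 2 * η ^ 4 := by ring
        _ ≤ D₂ ^ 2 * η ^ 3 := by gcongr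
    have c7 := hG q ⟨hqI.1, hqI.2.le⟩
    simp only [sub_self, mul_zero, sub_zero] at c7
    have c8 : |g * (q - p) - k * η ^ 2| ≤ (C + D + C₃ * D₂ ^ 2) * η ^ 3 := by
      have e1 := abs_sub_le (g * (q - p)) (E q * (φ p - φ q)) (k * η ^ 2)
      rw [abs_sub_comm (g * (q - p)) (E q * (φ p - φ q))] at e1
      have : C₃ * (q - p) ^ 2 ≤ C₃ * (D₂ ^ 2 * η ^ 3) := by gcongr
      linarith
    have c9 : q - p - k / g * η ^ 2 = (g * (q - p) - k * η ^ 2) / g := by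
      field_simp
    rw [c9, abs_div, abs_of_pos hg, div_le_iff₀ hg]
    have : ((C + D + C₃ * D₂ ^ 2) / g + 1) * η ^ 3 * g = (C + D + C₃ * D₂ ^ 2) * η ^ 3 + η ^ 3 * g := by
      field_simp
    rw [this]
    have : 0 ≤ η ^ 3 * g := by positivity
    linarith
end

set_option maxHeartbeats 2000000 in
lemma fd_exists (α : ℝ) (U : Set (ℝ × ℝ)) (hU : IsOpen U) (hUα : ((α : ℝ), (0 : ℝ)) ∈ U)
    (Y : ℝ × ℝ → ℝ × ℝ) (hY : ContDiffOn ℝ 3 Y U)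
    (hfold : (Y (α, 0)).2 = 0)
    (hYx : fderiv ℝ (fun p => (Y p).2) (α, 0) (1, 0) > 0)
    (hY1 : (Y (α, 0)).1 < 0) :
    ∃ (φ E : ℝ → ℝ) (r m K κ k C : ℝ), FD α U Y φ E r m K κ k C := by
  obtain ⟨m, hm, hmd⟩ : ∃ m, 0 < m ∧ (Y (α, 0)).1 = -(2 * m) :=
    ⟨-(Y (α, 0)).1 / 2, by linarith, by ring⟩
  have hY1c : ContDiffOn ℝ 3 (fun p => (Y p).1) U := hY.fst
  have hY2c : ContDiffOn ℝ 3 (fun p => (Y p).2) U := hY.snd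
  obtain ⟨V, hVdef⟩ : ∃ V, V = U ∩ (fun p => (Y p).1) ⁻¹' Ioo (-(3 * m)) (-m) := ⟨_, rfl⟩
  have hVo : IsOpen V := hVdef ▸ hY1c.continuousOn.isOpen_inter_preimage hU isOpen_Ioo
  have hVU : V ⊆ U := hVdef ▸ inter_subset_left
  have hVm : ∀ p ∈ V, -(3 * m) < (Y p).1 ∧ (Y p).1 < -m := fun p hp => (hVdef ▸ hp).2
  have hVα : (α, (0:ℝ)) ∈ V := by
    rw [hVdef]; refine ⟨hUα, ?_, ?_⟩ <;> simp only [hmd] <;> linarith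
  obtain ⟨f, hfdef⟩ : ∃ f : ℝ × ℝ → ℝ, f = fun p => (Y p).2 / (Y p).1 := ⟨_, rfl⟩
  have hf : ContDiffOn ℝ 3 f V := by
    rw [hfdef]
    exact (hY2c.mono hVU).div (hY1c.mono hVU) (fun p hp => by linarith [(hVm p hp).2])
  have hfY : ∀ p ∈ V, (Y p).2 = f p * (Y p).1 := by
    intro p hp
    rw [hfdef]
    have : (Y p).1 ≠ 0 := by linarith [(hVm p hp).2]
    field_simp
  have hfα : f (α, 0) = 0 := by rw [hfdef]; simp [hfold]
  have hfd : ∀ p ∈ V, HasFDerivAt f (fderiv ℝ f p) p := fun p hp =>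
    ((hf.contDiffAt (hVo.mem_nhds hp)).differentiableAt (by norm_num)).hasFDerivAt
  obtain ⟨a, ha, hfx⟩ : ∃ a, 0 < a ∧ fderiv ℝ f (α, 0) (1, 0) = -a := by
    have h1 : HasFDerivAt (fun p => (Y p).1) (fderiv ℝ (fun p => (Y p).1) (α, 0)) (α, 0) :=
      ((hY1c.contDiffAt (hU.mem_nhds hUα)).differentiableAt (by norm_num)).hasFDerivAt
    have h2 : HasFDerivAt (fun p => (Y p).2) (fderiv ℝ (fun p => (Y p).2) (α, 0)) (α, 0) :=
      ((hY2c.contDiffAt (hU.mem_nhds hUα)).differentiableAt (by norm_num)).hasFDerivAt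
    have h3 := hfd _ hVα
    have h4 : HasFDerivAt (fun p => (Y p).2) _ (α, 0) := (h3.mul h1).congr_of_eventuallyEq (by
      filter_upwards [hVo.mem_nhds hVα] with p hp using hfY p hp)
    have h5 := h2.unique h4
    have h6 := congrArg (fun L : ℝ × ℝ →L[ℝ] ℝ => L (1, 0)) h5
    simp [hfα, hmd] at h6
    refine ⟨-(fderiv ℝ f (α, 0) (1, 0)), ?_, by ring⟩
    nlinarith
  obtain ⟨g, hgdef⟩ : ∃ g : ℝ × ℝ → ℝ, g = fun p => fderiv ℝ f p (0, 1) := ⟨_, rfl⟩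
  have hg : ContDiffOn ℝ 2 g V := by
    rw [hgdef]
    exact (hf.fderiv_of_isOpen hVo (by norm_num)).clm_apply contDiffOn_const
  obtain ⟨L, t, ht, hL⟩ := ((hg.contDiffAt (hVo.mem_nhds hVα)).of_le
    (by norm_num : (1 : WithTop ℕ∞) ≤ 2)).exists_lipschitzOnWith
  obtain ⟨R, hR, hRV⟩ := Metric.mem_nhds_iff.1 (inter_mem (hVo.mem_nhds hVα) ht)
  have hball : ∀ x y, |x - α| < R → |y| < R → (x, y) ∈ Metric.ball (α, (0:ℝ)) R := by
    intro x y hx hy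
    rw [Metric.mem_ball, Prod.dist_eq]
    exact max_lt (by simpa [Real.dist_eq] using hx) (by simpa [Real.dist_eq] using hy)
  -- the augmented ODE
  obtain ⟨F, hFdef⟩ : ∃ F : ℝ × ℝ × ℝ → ℝ × ℝ × ℝ,
    F = fun q => (1, f (q.1, q.2.1), -(g (q.1, q.2.1) * q.2.2)) := ⟨_, rfl⟩
  obtain ⟨W, hWdef⟩ : ∃ W : Set (ℝ × ℝ × ℝ), W = (fun q : ℝ × ℝ × ℝ => (q.1, q.2.1)) ⁻¹' V := ⟨_, rfl⟩
  have hWo : IsOpen W := hWdef ▸ hVo.preimage (by fun_prop)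
  have hproj : ContDiffOn ℝ 2 (fun q : ℝ × ℝ × ℝ => (q.1, q.2.1)) W := by fun_prop
  have hmaps : MapsTo (fun q : ℝ × ℝ × ℝ => (q.1, q.2.1)) W V := by
    rw [hWdef]; exact fun q hq => hq
  have hF : ContDiffOn ℝ 2 F W := by
    rw [hFdef]
    refine contDiffOn_const.prodMk (ContDiffOn.prodMk ?_ ?_)
    · exact (hf.of_le (by norm_num)).comp hproj hmaps
    · exact ((hg.comp hproj hmaps).mul (by fun_prop)).neg
  have hWα : (α, (0:ℝ), (1:ℝ)) ∈ W := by rw [hWdef]; exact hVα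
  obtain ⟨c, hcα, ε, hε, hc⟩ := ((hF.contDiffAt (hWo.mem_nhds hWα)).of_le
    (by norm_num : (1 : WithTop ℕ∞) ≤ 2)).exists_forall_mem_closedBall_exists_eq_forall_mem_Ioo_hasDerivAt₀ α
  have hc1 : ∀ x ∈ Ioo (α - ε) (α + ε), (c x).1 = x := by
    intro x hx
    have := Convex.norm_image_sub_le_of_norm_hasDerivWithin_le (𝕜 := ℝ) (s := Ioo (α - ε) (α + ε))
      (f := fun z => (c z).1 - z) (f' := fun z => 0) (x := α) (y := x) (C := 0)
      (fun z hz => by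
        have h1 : HasDerivAt (fun z => (c z).1) (F (c z)).1 z := (hc z hz).fst
        have h2 : HasDerivAt (fun z => (c z).1 - z) ((F (c z)).1 - 1) z := h1.sub (hasDerivAt_id z)
        have h3 : (F (c z)).1 - 1 = 0 := by rw [hFdef]; simp
        rw [h3] at h2
        exact h2.hasDerivWithinAt)
      (fun z hz => by simp) (convex_Ioo _ _) ⟨by linarith, by linarith⟩ hx
    rw [zero_mul, norm_le_zero_iff, hcα] at this
    simp only [sub_self, sub_zero] at this
    linarith
  obtain ⟨φ, hφdef⟩ : ∃ φ : ℝ → ℝ, φ = fun x => (c x).2.1 := ⟨_, rfl⟩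
  obtain ⟨E, hEdef⟩ : ∃ E : ℝ → ℝ, E = fun x => (c x).2.2 := ⟨_, rfl⟩
  have hcx : ∀ x ∈ Ioo (α - ε) (α + ε), c x = (x, φ x, E x) := by
    intro x hx
    rw [hφdef, hEdef]
    exact Prod.ext (hc1 x hx) rfl
  have hαε : α ∈ Ioo (α - ε) (α + ε) := ⟨by linarith, by linarith⟩
  have hφα : φ α = 0 := by rw [hφdef]; simp [hcα]
  have hEα : E α = 1 := by rw [hEdef]; simp [hcα]
  have hφd : ∀ x ∈ Ioo (α - ε) (α + ε), HasDerivAt φ (f (x, φ x)) x := by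
    intro x hx
    have h1 := (hc x hx).snd.fst
    rw [hcx x hx, hFdef] at h1
    rw [hφdef] at h1 ⊢
    exact h1
  have hEd : ∀ x ∈ Ioo (α - ε) (α + ε), HasDerivAt E (-(g (x, φ x) * E x)) x := by
    intro x hx
    have h1 := (hc x hx).snd.snd
    rw [hcx x hx, hFdef] at h1
    rw [hEdef] at h1 ⊢
    exact h1
  -- derivative of the slope at α
  have hslope : HasDerivAt (fun x => f (x, φ x)) (-a) α := by
    have h1 : HasDerivAt (fun x => (x, φ x)) ((1 : ℝ), f (α, φ α)) α :=
      (hasDerivAt_id α).prodMk (hφd α hαε)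
    have h2 : HasFDerivAt f (fderiv ℝ f (α, 0)) (α, φ α) := by rw [hφα]; exact hfd _ hVα
    have h3 := h2.comp_hasDerivAt (f := fun x => (x, φ x)) α h1
    rw [hφα, hfα, hfx] at h3
    exact h3
  have hev : ∀ᶠ x in 𝓝 α, x ∈ Ioo (α - ε) (α + ε) ∧ |φ x| < R / 2 ∧ 1 / 2 < E x ∧ E x < 2 ∧
      |f (x, φ x) + a * (x - α)| ≤ a / 2 * |x - α| := by
    have e1 : ∀ᶠ x in 𝓝 α, |φ x| < R / 2 :=
      (hφd α hαε).continuousAt.abs.eventually (gt_mem_nhds (by simp only [hφα, abs_zero]; positivity))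
    have e2 : ∀ᶠ x in 𝓝 α, 1 / 2 < E x :=
      (hEd α hαε).continuousAt.eventually (lt_mem_nhds (by rw [hEα]; norm_num))
    have e3 : ∀ᶠ x in 𝓝 α, E x < 2 :=
      (hEd α hαε).continuousAt.eventually (gt_mem_nhds (by rw [hEα]; norm_num))
    have e4 := hslope.isLittleO.def (half_pos ha)
    filter_upwards [isOpen_Ioo.mem_nhds hαε, e1, e2, e3, e4] with x h1 h2 h3 h4 h5
    refine ⟨h1, h2, h3, h4, ?_⟩
    simp only [hφα, hfα, Real.norm_eq_abs, smul_eq_mul] at h5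
    convert h5 using 2
    ring
  obtain ⟨r₀, hr₀, hr₀e⟩ := Metric.eventually_nhds_iff.1 hev
  obtain ⟨r, hr, hrR, hrr₀⟩ : ∃ r > 0, r ≤ R / 2 ∧ r < r₀ :=
    ⟨min (R / 2) (r₀ / 2), lt_min (by positivity) (by positivity), min_le_left _ _,
      (min_le_right _ _).trans_lt (by linarith)⟩
  have hP : ∀ x ∈ Icc (α - r) (α + r), x ∈ Ioo (α - ε) (α + ε) ∧ |φ x| < R / 2 ∧ 1 / 2 < E x ∧ E x < 2 ∧
      |f (x, φ x) + a * (x - α)| ≤ a / 2 * |x - α| := by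
    intro x hx
    apply hr₀e
    rw [Real.dist_eq]
    exact lt_of_le_of_lt (abs_le.2 ⟨by linarith [hx.1], by linarith [hx.2]⟩) hrr₀
  have hin : ∀ x ∈ Ioo (α - r) (α + r), ∀ y, |y - φ x| < r → (x, y) ∈ Metric.ball (α, (0:ℝ)) R := by
    intro x hx y hy
    apply hball
    · exact lt_of_lt_of_le (abs_lt.2 ⟨by linarith [hx.1], by linarith [hx.2]⟩) (by linarith : r ≤ R)
    · have h1 := (hP x (Ioo_subset_Icc_self hx)).2.1
      have h2 := abs_sub_abs_le_abs_sub y (φ x)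
      linarith
  have hxφ : ∀ x ∈ Icc (α - r) (α + r), (x, φ x) ∈ V := by
    intro x hx
    refine (hRV (hball _ _ ?_ ?_)).1
    · exact lt_of_le_of_lt (abs_le.2 ⟨by linarith [hx.1], by linarith [hx.2]⟩) (by linarith : r < R)
    · linarith [(hP x hx).2.1]
  have hcC : ContDiffOn ℝ 2 c (Icc (α - r) (α + r)) := by
    refine ODE.contDiffOn_enat_Icc_of_hasDerivWithinAt (n := 2) (f := fun _ => F) (u := W) ?_ ?_ ?_
    · have : (Function.uncurry fun (_ : ℝ) => F) = F ∘ Prod.snd := rfl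
      rw [this]
      exact hF.comp contDiff_snd.contDiffOn (fun q hq => hq.2)
    · exact fun x hx => (hc x (hP x hx).1).hasDerivWithinAt
    · intro x hx
      rw [hcx x (hP x hx).1, hWdef]
      exact hxφ x hx
  have hφC : ContDiffOn ℝ 2 φ (Ioo (α - r) (α + r)) := by
    rw [hφdef]; exact (hcC.mono Ioo_subset_Icc_self).snd.fst
  have hEC : ContDiffOn ℝ 2 E (Ioo (α - r) (α + r)) := by
    rw [hEdef]; exact (hcC.mono Ioo_subset_Icc_self).snd.snd
  have hIo : ∀ x ∈ Ioo (α - r / 2) (α + r / 2), x ∈ Ioo (α - r) (α + r) :=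
    fun x hx => ⟨by linarith [hx.1], by linarith [hx.2]⟩
  have hpairC : ContDiffOn ℝ 2 (fun x => (x, φ x)) (Ioo (α - r) (α + r)) := contDiffOn_id.prodMk hφC
  have hpm : MapsTo (fun x => (x, φ x)) (Ioo (α - r) (α + r)) V :=
    fun x hx => hxφ x (Ioo_subset_Icc_self hx)
  have hfφC : ContDiffOn ℝ 2 (fun x => f (x, φ x)) (Ioo (α - r) (α + r)) :=
    (hf.of_le (by norm_num)).comp hpairC hpm
  have hgφC : ContDiffOn ℝ 2 (fun x => g (x, φ x)) (Ioo (α - r) (α + r)) := hg.comp hpairC hpm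
  obtain ⟨N, hNdef⟩ : ∃ N : ℝ → ℝ, N = fun x => -(E x * (f (x, φ x) - g (x, φ x) * φ x)) := ⟨_, rfl⟩
  have hNC : ContDiffOn ℝ 2 N (Ioo (α - r) (α + r)) := by
    rw [hNdef]; exact (hEC.mul (hfφC.sub (hgφC.mul hφC))).neg
  have hαr : α ∈ Ioo (α - r) (α + r) := ⟨by linarith, by linarith⟩
  have hNα : N α = 0 := by rw [hNdef]; simp [hφα, hfα]
  have hNd : deriv N α = a := by
    have h1 : HasDerivAt (fun x => g (x, φ x)) (deriv (fun x => g (x, φ x)) α) α :=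
      ((hgφC.contDiffAt (isOpen_Ioo.mem_nhds hαr)).differentiableAt (by norm_num)).hasDerivAt
    have h2 := ((hEd α hαε).mul (hslope.sub (h1.mul (hφd α hαε)))).neg
    rw [hNdef]
    refine Eq.trans h2.deriv ?_
    simp [hφα, hfα, hEα]
  obtain ⟨C, hC, hCN⟩ := fd_quad2 (c := α) (d := α + r / 2) (w := α) hNC (by linarith) (by linarith)
    ⟨le_rfl, by linarith⟩
  rw [hNd, hNα] at hCN
  refine ⟨φ, E, r / 2, m, 2 * (3 * m * L), a / 4, a / 2, C, ?_⟩
  have hL0 : (0:ℝ) ≤ L := L.2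
  refine ⟨by positivity, hm, by positivity, by positivity, by positivity, hC, ?_, ?_, ?_, ?_,
    hφC.mono hIo, hEC.mono hIo, hφα, ?_, ?_, ?_, ?_⟩
  · exact fun x y hx hy => hVU (hRV (hin x (hIo x hx) y (by linarith))).1
  · exact fun x y hx hy => (hVm _ (hRV (hin x (hIo x hx) y (by linarith))).1).2.le
  · exact fun x hx => (hP x (Ioo_subset_Icc_self (hIo x hx))).2.2.1.le
  · exact fun x hx => (hP x (Ioo_subset_Icc_self (hIo x hx))).2.2.2.1.le
  · intro x y hx hy
    have hx' := hIo x hx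
    have hPx := hP x (Ioo_subset_Icc_self hx')
    have hxR : |x - α| < R :=
      lt_of_lt_of_le (abs_lt.2 ⟨by linarith [hx'.1], by linarith [hx'.2]⟩) (by linarith : r ≤ R)
    have hyV := (hRV (hin x hx' y (by linarith))).1
    have hyR : |y| < R := by
      have h1 := hPx.2.1
      have h2 := abs_sub_abs_le_abs_sub y (φ x)
      linarith
    have hφR : |φ x| < R := by linarith [hPx.2.1]
    rw [(hφd x hPx.1).deriv, (hEd x hPx.1).deriv, hfY _ hyV]
    have hq := fd_quad (g := fun y => f (x, y)) (g' := fun y => g (x, y)) (s := Ioo (-R) R)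
      (convex_Ioo _ _) hL0 (w := φ x) (x := y) (abs_lt.1 hφR)
      (fun z hz => by
        have h1 : HasDerivAt (fun y : ℝ => (x, y)) ((0:ℝ), (1:ℝ)) z :=
          (hasDerivAt_const z x).prodMk (hasDerivAt_id z)
        have h2 := (hfd _ (hRV (hball x z hxR (abs_lt.2 hz))).1).comp_hasDerivAt
          (f := fun y => (x, y)) z h1
        rw [hgdef]; exact h2)
      (fun z hz => by
        have h1 := hL.dist_le_mul _ (hRV (hball x z hxR (abs_lt.2 hz))).2 _
          (hRV (hball x (φ x) hxR hφR)).2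
        rw [Prod.dist_eq] at h1
        simpa [Real.dist_eq] using h1)
      (abs_lt.1 hyR)
    have hYb := hVm _ hyV
    have e1 : -(g (x, φ x) * E x) * (Y (x, y)).1 * (y - φ x) +
        E x * (f (x, y) * (Y (x, y)).1 - f (x, φ x) * (Y (x, y)).1)
        = (Y (x, y)).1 * E x * (f (x, y) - f (x, φ x) - g (x, φ x) * (y - φ x)) := by ring
    have hE1 := hPx.2.2.1
    have hE2 := hPx.2.2.2.1
    rw [e1, abs_mul, abs_mul, abs_of_pos (by linarith : 0 < E x),
      abs_of_neg (by linarith : (Y (x, y)).1 < 0)]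
    calc -(Y (x, y)).1 * E x * |f (x, y) - f (x, φ x) - g (x, φ x) * (y - φ x)|
        ≤ (3 * m) * E x * (L * (y - φ x) ^ 2) := by
          gcongr
          linarith
      _ = (3 * m * L) * (y - φ x) ^ 2 * (E x * 1) := by ring
      _ ≤ (3 * m * L) * (y - φ x) ^ 2 * (E x * (2 * E x)) := by
          have : 0 ≤ (3 * m * L) * (y - φ x) ^ 2 := by positivity
          gcongr
          linarith
      _ = 2 * (3 * m * L) * (E x * (y - φ x)) ^ 2 := by ring
  · intro x hx z hz
    have hmem : ∀ w ∈ Ico α (α + r / 2), w ∈ Icc (α - r) (α + r) :=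
      fun w hw => ⟨by linarith [hw.1], by linarith [hw.2]⟩
    have hd : ∀ w ∈ Ico α (α + r / 2),
        HasDerivAt (fun w => φ w + a / 4 * (w - α) ^ 2) (f (w, φ w) + a / 2 * (w - α)) w := by
      intro w hw
      have h1 := (((hasDerivAt_id w).sub_const α).pow 2).const_mul (a / 4)
      refine ((hφd w (hP w (hmem w hw)).1).add h1).congr_deriv ?_
      simp; ring
    have hanti : AntitoneOn (fun w => φ w + a / 4 * (w - α) ^ 2) (Ico α (α + r / 2)) := by
      refine antitoneOn_of_deriv_nonpos (convex_Ico _ _)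
        (fun w hw => (hd w hw).continuousAt.continuousWithinAt)
        (fun w hw => (hd w (interior_subset hw)).differentiableAt.differentiableWithinAt) ?_
      intro w hw
      have hw' := interior_subset hw
      rw [(hd w hw').deriv]
      have h2 := (hP w (hmem w hw')).2.2.2.2
      rw [abs_of_nonneg (by linarith [hw'.1] : 0 ≤ w - α)] at h2
      have := (abs_le.1 h2).2
      linarith
    have := hanti hx ⟨hx.1.trans hz.1, hz.2⟩ hz.1
    simp only at this
    linarith
  · intro x hx
    have hxI : x ∈ Icc (α - r) (α + r) := ⟨by linarith [hx.1], by linarith [hx.2]⟩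
    have hPx := hP x hxI
    rw [(hφd x hPx.1).deriv]
    have h2 := hPx.2.2.2.2
    rw [abs_of_pos (by linarith [hx.1] : 0 < x - α)] at h2
    have := (abs_le.1 h2).2
    have : 0 < a / 2 * (x - α) := mul_pos (half_pos ha) (by linarith [hx.1])
    linarith
  · intro x hx
    have hd : ∀ w ∈ Icc α x,
        HasDerivAt (fun w => -(E w * φ w) - a / 2 * (w - α) ^ 2) (N w - a * (w - α)) w := by
      intro w hw
      have hwI := (hP w ⟨by linarith [hw.1], by linarith [hw.2, hx.2]⟩).1
      have h1 := (((hasDerivAt_id w).sub_const α).pow 2).const_mul (a / 2)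
      refine (((hEd w hwI).mul (hφd w hwI)).neg.sub h1).congr_deriv ?_
      rw [hNdef]
      simp; ring
    have := norm_image_sub_le_of_norm_deriv_right_le_segment (a := α) (b := x)
      (C := C * (x - α) ^ 2)
      (fun w hw => (hd w hw).continuousAt.continuousWithinAt)
      (fun w hw => (hd w (Ico_subset_Icc_self hw)).hasDerivWithinAt)
      (fun w hw => by
        have h1 := hCN w ⟨hw.1, by linarith [hw.2, hx.2]⟩
        rw [sub_zero] at h1
        rw [Real.norm_eq_abs]
        refine h1.trans ?_
        have h2 := hw.1
        have h3 := hw.2.le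
        have h4 : 0 ≤ w - α := by linarith
        gcongr)
      x ⟨hx.1, le_rfl⟩
    simp only [hφα, Real.norm_eq_abs] at this
    calc _ = |-(E x * φ x) - a / 2 * (x - α) ^ 2 - (-(E α * 0) - a / 2 * (α - α) ^ 2)| := by
          congr 1; ring
      _ ≤ C * (x - α) ^ 2 * (x - α) := this
      _ = C * (x - α) ^ 3 := by ring



/- STATEMENT 2: well-definedness and quadratic expansion of the backward transition
map μ₁ from the switching line Σ = {y = 0} to the section Σ⁻ = {y = −ξ}, for a C³
vector field Y = (Y¹, Y²) with a visible fold at (α, 0) and flow moving leftwards. -/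
theorem stmt_2 (α : ℝ) (U : Set (ℝ × ℝ)) (hU : IsOpen U) (hUα : ((α : ℝ), (0 : ℝ)) ∈ U)
    (Y : ℝ × ℝ → ℝ × ℝ) (hY : ContDiffOn ℝ 3 Y U)
    (hfold : (Y (α, 0)).2 = 0)
    (hYx : fderiv ℝ (fun p => (Y p).2) (α, 0) (1, 0) > 0)
    (hY1 : (Y (α, 0)).1 < 0) :
    ∃ ξ > (0 : ℝ), ∃ δ > (0 : ℝ), ∃ p : ℝ, ∃ k₁ > (0 : ℝ), ∃ C > (0 : ℝ),
      ∀ x₀ ∈ Set.Ico α (α + δ),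
        -- (i) existence of a backward trajectory from (x₀,0) reaching {y = −ξ} first
        (∃ T < (0 : ℝ), ∃ γ : ℝ → ℝ × ℝ,
          γ 0 = (x₀, 0) ∧
          (∀ t ∈ Set.Icc T (0 : ℝ), γ t ∈ U) ∧
          (∀ t ∈ Set.Icc T (0 : ℝ), HasDerivWithinAt γ (Y (γ t)) (Set.Icc T 0) t) ∧
          (γ T).2 = -ξ ∧ (∀ t ∈ Set.Ioc T (0 : ℝ), (γ t).2 > -ξ)) ∧
        -- (ii) any such trajectory hits Σ⁻ at μ₁(x₀) = p + k₁·(x₀ − α)² + O((x₀ − α)³)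
        (∀ (T : ℝ) (γ : ℝ → ℝ × ℝ), T < 0 →
          γ 0 = (x₀, 0) →
          (∀ t ∈ Set.Icc T (0 : ℝ), γ t ∈ U) →
          (∀ t ∈ Set.Icc T (0 : ℝ), HasDerivWithinAt γ (Y (γ t)) (Set.Icc T 0) t) →
          (γ T).2 = -ξ → (∀ t ∈ Set.Ioc T (0 : ℝ), (γ t).2 > -ξ) →
          |(γ T).1 - p - k₁ * (x₀ - α) ^ 2| ≤ C * (x₀ - α) ^ 3) := by
  obtain ⟨φ, E, r, m, K, κ, k, C, h⟩ := fd_exists α U hU hUα Y hY hfold hYx hY1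
  exact h.main ((hY.contDiffAt (hU.mem_nhds hUα)).of_le (by norm_num))
end

section
/- Let ξ > 0 and α ∈ ℝ. For every x₀ ∈ ℝ: (i) the curve γ(t) = (x₀ − t, (x₀ − α)·t − t²/2) satisfies γ'(t) = (−1, γ₁(t) − α) for all t and γ(0) = (x₀, 0), i.e. it is the trajectory of the normal form vector field Ỹ(x,y) = (−1, x − α) through (x₀, 0); (ii) T(x₀) := (x₀ − α) − √((x₀ − α)² + 2ξ) is the unique t < 0 with γ₂(t) = −ξ; (iii) the first coordinate at the hitting time is γ₁(T(x₀)) = α + √((x₀ − α)² + 2ξ); and (iv) as x₀ → α, γ₁(T(x₀)) = α + √(2ξ) + (x₀ − α)²/(2√(2ξ)) + O((x₀ − α)³), where the quadratic coefficient 1/(2√(2ξ)) is positive. -/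
/- STATEMENT 3: explicit backward transition map for the normal form Ỹ(x,y) = (−1, x − α):
(i) γ(t) = (x₀ − t, (x₀ − α)t − t²/2) is the trajectory through (x₀, 0);
(ii) T(x₀) = (x₀ − α) − √((x₀ − α)² + 2ξ) is the unique negative time hitting {y = −ξ};
(iii) the hit position is α + √((x₀ − α)² + 2ξ);
(iv) γ₁(T(x₀)) = α + √(2ξ) + (x₀ − α)²/(2√(2ξ)) + O((x₀ − α)³), with 1/(2√(2ξ)) > 0. -/
theorem stmt_3 (ξ α : ℝ) (hξ : 0 < ξ) :
    (∀ x₀ : ℝ,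
      -- (i)
      (∀ t : ℝ, HasDerivAt (fun s : ℝ => ((x₀ - s, (x₀ - α) * s - s ^ 2 / 2) : ℝ × ℝ))
          (-1, (x₀ - t) - α) t) ∧
      ((x₀ - (0 : ℝ), (x₀ - α) * 0 - (0 : ℝ) ^ 2 / 2) = ((x₀, 0) : ℝ × ℝ)) ∧
      -- (ii)
      ((x₀ - α) - Real.sqrt ((x₀ - α) ^ 2 + 2 * ξ) < 0 ∧
        (x₀ - α) * ((x₀ - α) - Real.sqrt ((x₀ - α) ^ 2 + 2 * ξ))
            - ((x₀ - α) - Real.sqrt ((x₀ - α) ^ 2 + 2 * ξ)) ^ 2 / 2 = -ξ ∧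
        (∀ t : ℝ, t < 0 → (x₀ - α) * t - t ^ 2 / 2 = -ξ →
          t = (x₀ - α) - Real.sqrt ((x₀ - α) ^ 2 + 2 * ξ))) ∧
      -- (iii)
      (x₀ - ((x₀ - α) - Real.sqrt ((x₀ - α) ^ 2 + 2 * ξ))
        = α + Real.sqrt ((x₀ - α) ^ 2 + 2 * ξ))) ∧
    -- (iv)
    (0 < 1 / (2 * Real.sqrt (2 * ξ)) ∧
      ∃ δ > (0 : ℝ), ∃ C > (0 : ℝ), ∀ x₀ : ℝ, |x₀ - α| < δ →
        |(α + Real.sqrt ((x₀ - α) ^ 2 + 2 * ξ))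
            - (α + Real.sqrt (2 * ξ) + (x₀ - α) ^ 2 / (2 * Real.sqrt (2 * ξ)))|
          ≤ C * |x₀ - α| ^ 3) := by
  refine ⟨fun x₀ => ?_, ?_, 1, one_pos, ?_⟩
  · have hsq : Real.sqrt ((x₀ - α) ^ 2 + 2 * ξ) ^ 2 = (x₀ - α) ^ 2 + 2 * ξ :=
      Real.sq_sqrt (by positivity)
    have hlt : x₀ - α < Real.sqrt ((x₀ - α) ^ 2 + 2 * ξ) :=
      Real.lt_sqrt_of_sq_lt (by linarith)
    have hlt2 : -(x₀ - α) < Real.sqrt ((x₀ - α) ^ 2 + 2 * ξ) :=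
      Real.lt_sqrt_of_sq_lt (by rw [neg_sq]; linarith)
    refine ⟨fun t => ?_, by simp, ⟨by linarith, by nlinarith, ?_⟩, by ring⟩
    · refine HasDerivAt.prodMk ?_ ?_
      · simpa using (hasDerivAt_id t).const_sub x₀
      · have h := ((hasDerivAt_id t).const_mul (x₀ - α)).sub
          (((hasDerivAt_id t).pow 2).div_const 2)
        have e : (x₀ - t) - α = (x₀ - α) * 1 - ((2 : ℕ) : ℝ) * id t ^ (2 - 1) * 1 / 2 := by
          simp
          ring
        rw [e]
        exact h
    · intro t ht h
      have hp : (t - ((x₀ - α) - Real.sqrt ((x₀ - α) ^ 2 + 2 * ξ))) *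
          (t - ((x₀ - α) + Real.sqrt ((x₀ - α) ^ 2 + 2 * ξ))) = 0 := by
        linear_combination (-2) * h - hsq
      rcases mul_eq_zero.mp hp with h1 | h1
      · linarith
      · linarith
  · positivity
  · have hr : 0 < Real.sqrt (2 * ξ) := Real.sqrt_pos.mpr (by positivity)
    have hr2 : Real.sqrt (2 * ξ) ^ 2 = 2 * ξ := Real.sq_sqrt (by positivity)
    refine ⟨1 / (4 * Real.sqrt (2 * ξ) ^ 2), by positivity, fun x₀ _ => ?_⟩
    have hsq : Real.sqrt ((x₀ - α) ^ 2 + 2 * ξ) ^ 2 = (x₀ - α) ^ 2 + 2 * ξ :=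
      Real.sq_sqrt (by positivity)
    have hle : Real.sqrt (2 * ξ) ≤ Real.sqrt ((x₀ - α) ^ 2 + 2 * ξ) :=
      Real.sqrt_le_sqrt (by nlinarith [sq_nonneg (x₀ - α)])
    have hu : |x₀ - α| ^ 2 = (x₀ - α) ^ 2 := sq_abs _
    have hu0 := abs_nonneg (x₀ - α)
    generalize Real.sqrt ((x₀ - α) ^ 2 + 2 * ξ) = s at *
    generalize Real.sqrt (2 * ξ) = r at *
    have e : (α + s) - (α + r + (x₀ - α) ^ 2 / (2 * r)) = -((s - r) ^ 2 / (2 * r)) := by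
      have : (x₀ - α) ^ 2 = s ^ 2 - r ^ 2 := by linarith
      rw [this]
      field_simp
      ring
    rw [e, abs_neg, abs_of_nonneg (by positivity)]
    generalize |x₀ - α| = u at *
    have h1 : (s - r) * (2 * r) ≤ u ^ 2 := by nlinarith
    have h2 : s - r ≤ u := by
      refine abs_le_of_sq_le_sq' ?_ hu0 |>.2
      nlinarith
    have h3 : (s - r) * ((s - r) * (2 * r)) ≤ u * u ^ 2 :=
      mul_le_mul h2 h1 (mul_nonneg (by linarith) (by linarith)) hu0
    have e2 : (s - r) ^ 2 / (2 * r) = 1 / (4 * r ^ 2) * ((s - r) * ((s - r) * (2 * r))) := by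
      field_simp
      ring
    rw [e2, show u ^ 3 = u * u ^ 2 by ring]
    gcongr
end

section
/- There exist a neighborhood I ⊆ ℝ of 0 and C¹ functions x : I → ℝ and β₁ : I → ℝ, with x(α) = −(k/L)·α + O(α²) and β₁(α) = (kℓ/L)·α² + O(α³) as α → 0, such that for every α ∈ I the function f_{α,β₁(α)} has a zero of multiplicity two at x(α): f_{α,β₁(α)}(x(α)) = 0, f_{α,β₁(α)}'(x(α)) = 0, and f_{α,β₁(α)}''(x(α)) = 2L + O(α) ≠ 0. Moreover, this curve is unique: there is a neighborhood W of (0,0,0) in ℝ³ such that if (α, β, x) ∈ W, f_{α,β}(x) = 0 and f_{α,β}'(x) = 0, then β = β₁(α) and x = x(α). -/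
open Filter Topology

lemma aux_int (f f' : ℝ → ℝ) (n : ℕ) (M : ℝ) (h0 : f 0 = 0)
    (hd : ∀ᶠ x in 𝓝 (0:ℝ), HasDerivAt f (f' x) x)
    (hb : ∀ᶠ x in 𝓝 (0:ℝ), |f' x| ≤ M * |x| ^ n) :
    ∀ᶠ x in 𝓝 (0:ℝ), |f x| ≤ M * |x| ^ (n+1) := by
  obtain ⟨δ, hδ, h⟩ := Metric.eventually_nhds_iff.1 (hd.and hb)
  refine Metric.eventually_nhds_iff.2 ⟨δ, hδ, fun x hx => ?_⟩
  simp only [Real.dist_eq, sub_zero] at h hx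
  have hM : 0 ≤ M * |x| ^ n := (abs_nonneg _).trans (h hx).2
  have hle : ∀ y ∈ Set.Icc (-|x|) |x|, |y| ≤ |x| := fun y hy => abs_le.2 hy
  have key := (convex_Icc (-|x|) |x|).norm_image_sub_le_of_norm_hasDerivWithin_le
    (f := f) (f' := f') (C := M * |x| ^ n) (x := 0) (y := x)
    (fun y hy => (h (lt_of_le_of_lt (hle y hy) hx)).1.hasDerivWithinAt)
    (fun y hy => by
      have h1 := (h (lt_of_le_of_lt (hle y hy) hx)).2
      rw [Real.norm_eq_abs]
      rcases eq_or_ne x 0 with rfl | hx0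
      · have : y = 0 := by simpa using hle y hy
        subst this; exact h1
      · have hM' : 0 ≤ M := by
          by_contra hneg
          have : 0 < |x| ^ n := pow_pos (abs_pos.2 hx0) n
          nlinarith
        exact h1.trans (mul_le_mul_of_nonneg_left
          (pow_le_pow_left₀ (abs_nonneg _) (hle y hy) n) hM'))
    (by constructor <;> simp) (abs_le.1 le_rfl)
  simp only [h0, sub_zero, Real.norm_eq_abs] at key
  rw [pow_succ, ← mul_assoc]; exact key

lemma aux_deriv {n : ℕ} {f : ℝ → ℝ} {x : ℝ} (h : ContDiffAt ℝ ((n+1 : ℕ) : WithTop ℕ∞) f x) :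
    ContDiffAt ℝ (n : WithTop ℕ∞) (deriv f) x := by
  have h1 : ContDiffAt ℝ (n : WithTop ℕ∞) (fderiv ℝ f) x := h.fderiv_right (by push_cast; exact le_rfl)
  have h2 : deriv f = fun y => fderiv ℝ f y 1 := by ext y; simp
  rw [h2]
  exact h1.clm_apply contDiffAt_const

lemma aux_bounds (P : ℝ → ℝ) (l : ℝ) (hP : ContDiffAt ℝ 3 P 0)
    (hP0 : P 0 = 0) (hP1 : deriv P 0 = 0) (hP2 : deriv (deriv P) 0 = 2 * l) :
    ∃ M > (0:ℝ), ∀ᶠ x in 𝓝 (0:ℝ), DifferentiableAt ℝ P x ∧ DifferentiableAt ℝ (deriv P) x ∧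
      |deriv (deriv P) x - 2 * l| ≤ M * |x| ∧ |deriv P x - 2 * l * x| ≤ M * |x| ^ 2 ∧
      |P x - l * x ^ 2| ≤ M * |x| ^ 3 := by
  have c1 : ContDiffAt ℝ ((2:ℕ) : WithTop ℕ∞) (deriv P) 0 := aux_deriv (n := 2) (by exact_mod_cast hP)
  have c2 : ContDiffAt ℝ ((1:ℕ) : WithTop ℕ∞) (deriv (deriv P)) 0 := aux_deriv (n := 1) c1
  have d0 : ∀ᶠ x in 𝓝 (0:ℝ), DifferentiableAt ℝ P x :=
    (hP.eventually (by decide)).mono fun x hx => hx.differentiableAt (by norm_num)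
  have d1 : ∀ᶠ x in 𝓝 (0:ℝ), DifferentiableAt ℝ (deriv P) x :=
    (c1.eventually (by decide)).mono fun x hx => hx.differentiableAt (by norm_num)
  have d2 : DifferentiableAt ℝ (deriv (deriv P)) 0 := c2.differentiableAt (by norm_num)
  obtain ⟨M, hM, hb⟩ := d2.isBigO_sub.exists_pos
  have b2 : ∀ᶠ x in 𝓝 (0:ℝ), |deriv (deriv P) x - 2 * l| ≤ M * |x| ^ 1 := by
    filter_upwards [hb.bound] with x hx
    simpa [hP2] using hx
  have b1 := aux_int (fun x => deriv P x - 2 * l * x) (fun x => deriv (deriv P) x - 2 * l) 1 M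
    (by simp [hP1]) (d1.mono fun x hx => by
      exact (hx.hasDerivAt.sub ((hasDerivAt_id' x).const_mul (2*l))).congr_deriv (by ring)) b2
  have b0 := aux_int (fun x => P x - l * x ^ 2) (fun x => deriv P x - 2 * l * x) 2 M
    (by simp [hP0]) (d0.mono fun x hx => by
      exact (hx.hasDerivAt.sub ((hasDerivAt_pow 2 x).const_mul l)).congr_deriv
        (by norm_num; ring)) b1
  refine ⟨M, hM, ?_⟩
  filter_upwards [d0, d1, b2, b1, b0] with x h1 h2 h3 h4 h5
  exact ⟨h1, h2, by simpa using h3, h4, h5⟩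

lemma aux_implicit (p q : ℝ → ℝ) (l k : ℝ) (hL : l - k ≠ 0)
    (hp : ContDiffAt ℝ 2 p 0) (hq : ContDiffAt ℝ 2 q 0) (hp0 : p 0 = 0) (hq0 : q 0 = 0)
    (hp1 : deriv p 0 = 2 * l) (hq1 : deriv q 0 = 2 * k) :
    ∃ xc : ℝ → ℝ, xc 0 = 0 ∧ ContDiffAt ℝ 2 xc 0 ∧
      (∀ᶠ a in 𝓝 (0:ℝ), p (xc a) = q (xc a - a)) ∧
      (∀ᶠ v in 𝓝 ((0:ℝ),(0:ℝ)), p v.2 = q (v.2 - v.1) → v.2 = xc v.1) := by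
  let F : ℝ × ℝ → ℝ := fun v => p v.2 - q (v.2 - v.1)
  have hF : ContDiffAt ℝ 2 F ((0:ℝ),(0:ℝ)) := by
    apply ContDiffAt.sub
    · exact ContDiffAt.comp ((0:ℝ),(0:ℝ)) (g := p) (by simpa using hp) contDiffAt_snd
    · exact ContDiffAt.comp ((0:ℝ),(0:ℝ)) (g := q) (f := fun v : ℝ × ℝ => v.2 - v.1)
        (by simpa using hq) (contDiffAt_snd.sub contDiffAt_fst)
  have hd : HasDerivAt (fun x : ℝ => F (0, x)) (2 * (l - k)) 0 := by
    have e1 : HasDerivAt p (2 * l) 0 := hp1 ▸ (hp.differentiableAt (by norm_num)).hasDerivAt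
    have e2 : HasDerivAt q (2 * k) 0 := hq1 ▸ (hq.differentiableAt (by norm_num)).hasDerivAt
    have := e1.sub e2
    have hf : (fun x : ℝ => F (0, x)) = p - q := by
      funext x; simp [F]
    rw [hf]
    exact this.congr_deriv (by ring)
  have hd2 : HasDerivAt (fun x : ℝ => F (0, x))
      ((fderiv ℝ F (0,0) ∘L .inr ℝ ℝ ℝ) 1) 0 := by
    have h1 : HasFDerivAt F (fderiv ℝ F (0,0)) ((0:ℝ),(0:ℝ)) :=
      (hF.differentiableAt (by norm_num)).hasFDerivAt
    have h2 : HasFDerivAt (fun x : ℝ => ((0:ℝ), x)) (ContinuousLinearMap.inr ℝ ℝ ℝ) 0 :=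
      (ContinuousLinearMap.inr ℝ ℝ ℝ).hasFDerivAt
    exact (HasFDerivAt.comp (0:ℝ) h1 h2).hasDerivAt
  have hval := hd2.unique hd
  have hinv : (fderiv ℝ F (0,0) ∘L .inr ℝ ℝ ℝ).IsInvertible := by
    refine ⟨ContinuousLinearEquiv.unitsEquivAut ℝ (Units.mk0 (2 * (l-k)) (mul_ne_zero two_ne_zero hL)), ?_⟩
    ext
    rw [hval]; simp
  have F0 : F (0,0) = 0 := by simp [F, hp0, hq0]
  refine ⟨hF.implicitFunction two_ne_zero hinv, hF.implicitFunction_apply_self two_ne_zero hinv,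
    hF.contDiffAt_implicitFunction two_ne_zero hinv, ?_, ?_⟩
  · filter_upwards [hF.eventually_apply_implicitFunction two_ne_zero hinv] with a ha
    rw [F0] at ha
    exact sub_eq_zero.1 ha
  · filter_upwards [hF.eventually_apply_eq_iff_implicitFunction two_ne_zero hinv] with v hv h
    rw [F0] at hv
    exact (hv.1 (sub_eq_zero.2 h)).symm

/- STATEMENT 5: existence and uniqueness of the saddle-node curve β = β₁(α) along
which the displacement function f_{α,β}(x) = β + P(x) − Q(x − α) has a zero x(α) of
multiplicity two, with x(α) = −(k/L)α + O(α²) and β₁(α) = (kℓ/L)α² + O(α³). -/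
theorem stmt_5 (ℓ k L : ℝ) (hℓ : ℓ < 0) (hk : k < 0) (hLdef : L = ℓ - k) (hL0 : L ≠ 0)
    (P Q : ℝ → ℝ)
    (hP : ContDiffAt ℝ 3 P 0) (hQ : ContDiffAt ℝ 3 Q 0)
    (hP0 : P 0 = 0) (hP1 : deriv P 0 = 0) (hP2 : deriv (deriv P) 0 = 2 * ℓ)
    (hQ0 : Q 0 = 0) (hQ1 : deriv Q 0 = 0) (hQ2 : deriv (deriv Q) 0 = 2 * k) :
    ∃ ε > (0 : ℝ), ∃ xc β₁ : ℝ → ℝ,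
      -- C¹ curves on the neighborhood I = (−ε, ε) of 0
      ContDiffOn ℝ 1 xc (Set.Ioo (-ε) ε) ∧ ContDiffOn ℝ 1 β₁ (Set.Ioo (-ε) ε) ∧
      -- asymptotics x(α) = −(k/L)α + O(α²), β₁(α) = (kℓ/L)α² + O(α³)
      (∃ C > (0 : ℝ), ∀ α ∈ Set.Ioo (-ε) ε,
        |xc α + (k / L) * α| ≤ C * α ^ 2 ∧
        |β₁ α - (k * ℓ / L) * α ^ 2| ≤ C * |α| ^ 3) ∧
      -- double zero: f = 0, f' = 0, f'' = 2L + O(α) ≠ 0 at x(α)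
      (∃ C > (0 : ℝ), ∀ α ∈ Set.Ioo (-ε) ε,
        (β₁ α + P (xc α) - Q (xc α - α) = 0) ∧
        deriv (fun x => β₁ α + P x - Q (x - α)) (xc α) = 0 ∧
        |deriv (deriv (fun x => β₁ α + P x - Q (x - α))) (xc α) - 2 * L| ≤ C * |α| ∧
        deriv (deriv (fun x => β₁ α + P x - Q (x - α))) (xc α) ≠ 0) ∧
      -- uniqueness of the double-zero curve
      (∃ W ∈ nhds (((0 : ℝ), (0 : ℝ), (0 : ℝ)) : ℝ × ℝ × ℝ),
        ∀ α β x : ℝ, (α, β, x) ∈ W →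
          β + P x - Q (x - α) = 0 →
          deriv (fun y => β + P y - Q (y - α)) x = 0 →
          β = β₁ α ∧ x = xc α) := by
  obtain ⟨M₁, hM₁, bP⟩ := aux_bounds P ℓ hP hP0 hP1 hP2
  obtain ⟨M₂, hM₂, bQ⟩ := aux_bounds Q k hQ hQ0 hQ1 hQ2
  obtain ⟨xc, x0, xC, xeq, xuniq⟩ := aux_implicit (deriv P) (deriv Q) ℓ k (hLdef ▸ hL0)
    (aux_deriv (n := 2) (by exact_mod_cast hP)) (aux_deriv (n := 2) (by exact_mod_cast hQ))
    hP1 hQ1 hP2 hQ2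
  have dform : ∀ b a x : ℝ, DifferentiableAt ℝ P x → DifferentiableAt ℝ Q (x - a) →
      deriv (fun y => b + P y - Q (y - a)) x = deriv P x - deriv Q (x - a) := by
    intro b a x h1 h2
    have := (h1.hasDerivAt.const_add b).sub (h2.hasDerivAt.comp_sub_const x a)
    exact this.deriv
  have tx : Tendsto xc (𝓝 0) (𝓝 0) := by
    have := xC.continuousAt.tendsto
    rwa [x0] at this
  have ty : Tendsto (fun a => xc a - a) (𝓝 0) (𝓝 0) := by
    simpa using tx.sub tendsto_id
  obtain ⟨K, hK, hKb⟩ := (xC.differentiableAt (by norm_num)).isBigO_sub.exists_pos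
  have xb : ∀ᶠ a in 𝓝 (0:ℝ), |xc a| ≤ K * |a| := by
    filter_upwards [hKb.bound] with a ha
    simpa [x0] using ha
  let β₁ : ℝ → ℝ := fun a => Q (xc a - a) - P (xc a)
  have bC : ContDiffAt ℝ 2 β₁ 0 := by
    apply ContDiffAt.sub
    · exact ContDiffAt.comp (0:ℝ) (g := Q) (f := fun a => xc a - a)
        (by simpa [x0] using hQ.of_le (by norm_num)) (xC.sub contDiffAt_id)
    · exact ContDiffAt.comp (0:ℝ) (g := P)
        (by simpa [x0] using hP.of_le (by norm_num)) xC
  have Lpos : 0 < |L| := abs_pos.2 hL0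
  set M := M₁ + M₂ with hM
  have hMpos : 0 < M := by positivity
  set C₁ := M * (K+1)^2 / (2 * |L|) with hC₁
  have hC₁pos : 0 < C₁ := by positivity
  have small : ∀ᶠ a in 𝓝 (0:ℝ), M * (K+1) * |a| < 2 * |L| := by
    have : ContinuousAt (fun a : ℝ => M * (K+1) * |a|) 0 := by fun_prop
    exact this.eventually_lt continuousAt_const (by simpa using Lpos)
  have one : ∀ᶠ a in 𝓝 (0:ℝ), |a| < 1 :=
    (continuous_abs.continuousAt (x := (0:ℝ))).eventually_lt continuousAt_const (by simp)
  have main : ∀ᶠ a in 𝓝 (0:ℝ), (ContDiffAt ℝ 2 xc a ∧ ContDiffAt ℝ 2 β₁ a) ∧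
      (|xc a + (k / L) * a| ≤ C₁ * a ^ 2 ∧
        |β₁ a - (k * ℓ / L) * a ^ 2| ≤ (M * (K+1)^3 + |L| * C₁^2) * |a| ^ 3) ∧
      ((β₁ a + P (xc a) - Q (xc a - a) = 0) ∧
        deriv (fun x => β₁ a + P x - Q (x - a)) (xc a) = 0 ∧
        |deriv (deriv (fun x => β₁ a + P x - Q (x - a))) (xc a) - 2 * L| ≤ M * (K+1) * |a| ∧
        deriv (deriv (fun x => β₁ a + P x - Q (x - a))) (xc a) ≠ 0) := by
    filter_upwards [xC.eventually (by decide), bC.eventually (by decide), xeq, xb, small, one,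
      tx.eventually bP.eventually_nhds, ty.eventually bQ.eventually_nhds]
      with a h1 h2 hxe hxb hs ho hPe hQe
    obtain ⟨P1, P2, P3, P4, P5⟩ := hPe.self_of_nhds
    obtain ⟨Q1, Q2, Q3, Q4, Q5⟩ := hQe.self_of_nhds
    have hN : |xc a| ≤ (K+1) * |a| := hxb.trans (by nlinarith [abs_nonneg a])
    have hN' : |xc a - a| ≤ (K+1) * |a| := (abs_sub _ _).trans (by linarith)
    have hpow : ∀ n : ℕ, |xc a| ^ n ≤ (K+1)^n * |a|^n := fun n => by
      rw [← mul_pow]; exact pow_le_pow_left₀ (abs_nonneg _) hN n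
    have hpow' : ∀ n : ℕ, |xc a - a| ^ n ≤ (K+1)^n * |a|^n := fun n => by
      rw [← mul_pow]; exact pow_le_pow_left₀ (abs_nonneg _) hN' n
    have comb : ∀ (n : ℕ) (u v : ℝ), |u| ≤ M₁ * |xc a|^n → |v| ≤ M₂ * |xc a - a|^n →
        |u - v| ≤ M * (K+1)^n * |a|^n := by
      intro n u v hu hv
      have e1 := mul_le_mul_of_nonneg_left (hpow n) hM₁.le
      have e2 := mul_le_mul_of_nonneg_left (hpow' n) hM₂.le
      have e3 : |u - v| ≤ |u| + |v| := abs_sub _ _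
      rw [hM]; linarith
    have hdd : deriv (deriv (fun x => β₁ a + P x - Q (x - a))) (xc a)
        = deriv (deriv P) (xc a) - deriv (deriv Q) (xc a - a) := by
      have hev : deriv (fun x => β₁ a + P x - Q (x - a)) =ᶠ[𝓝 (xc a)]
          fun x => deriv P x - deriv Q (x - a) := by
        have t : Tendsto (fun x => x - a) (𝓝 (xc a)) (𝓝 (xc a - a)) :=
          tendsto_id.sub tendsto_const_nhds
        filter_upwards [hPe, t.eventually hQe] with x hx hy
        exact dform _ _ _ hx.1 hy.1
      rw [hev.deriv_eq]
      exact (P2.hasDerivAt.sub (Q2.hasDerivAt.comp_sub_const (xc a) a)).deriv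
    have hE : |xc a + (k / L) * a| ≤ C₁ * a ^ 2 := by
      have h := comb 2 _ _ P4 Q4
      have : deriv P (xc a) - 2 * ℓ * xc a - (deriv Q (xc a - a) - 2 * k * (xc a - a))
          = -(2 * L * (xc a + (k / L) * a)) := by
        rw [hxe]; field_simp; rw [hLdef]; ring
      rw [this, abs_neg, abs_mul, abs_mul, abs_two, sq_abs] at h
      have hc : C₁ * a ^ 2 = M * (K+1)^2 * a ^ 2 / (2 * |L|) := by rw [hC₁]; ring
      rw [hc, le_div_iff₀ (by positivity)]
      linarith
    have hF : |deriv (deriv P) (xc a) - deriv (deriv Q) (xc a - a) - 2 * L| ≤ M * (K+1) * |a| := by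
      have h := comb 1 _ _ (by simpa using P3) (by simpa using Q3)
      simp only [pow_one] at h
      convert h using 2
      rw [hLdef]; ring
    refine ⟨⟨h1, h2⟩, ⟨hE, ?_⟩, ?_, ?_, ?_, ?_⟩
    · set e := xc a + (k / L) * a with he
      have h := comb 3 _ _ P5 Q5
      have hid : β₁ a - (k * ℓ / L) * a ^ 2
          = -((P (xc a) - ℓ * xc a ^ 2) - (Q (xc a - a) - k * (xc a - a)^2)) - L * e^2 := by
        have hkl : k = ℓ - L := by linarith
        simp only [β₁, he]
        rw [hkl]
        field_simp
        ring
      have he2 : e ^ 2 ≤ C₁ ^ 2 * |a| ^ 3 := by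
        have : e ^ 2 ≤ (C₁ * a ^ 2) ^ 2 := by
          rw [← sq_abs e]; exact pow_le_pow_left₀ (abs_nonneg _) hE 2
        refine this.trans ?_
        rw [mul_pow, ← sq_abs a, ← pow_mul]
        exact mul_le_mul_of_nonneg_left
          (pow_le_pow_of_le_one (abs_nonneg _) ho.le (by norm_num)) (by positivity)
      rw [hid]
      refine (abs_sub _ _).trans ?_
      rw [abs_neg, abs_mul, abs_of_nonneg (sq_nonneg e)]
      have := mul_le_mul_of_nonneg_left he2 Lpos.le
      linarith
    · simp only [β₁]; ring
    · rw [dform _ _ _ P1 Q1, hxe, sub_self]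
    · rw [hdd]; exact hF
    · rw [hdd]; intro h0
      rw [h0, zero_sub, abs_neg, abs_mul, abs_two] at hF
      linarith
  obtain ⟨ε, hε, h⟩ := Metric.eventually_nhds_iff.1 main
  have hI : ∀ a ∈ Set.Ioo (-ε) ε, dist a 0 < ε := fun a ha => by
    rw [Real.dist_eq, sub_zero]; exact abs_lt.2 ha
  refine ⟨ε, hε, xc, β₁,
    fun a ha => ((h (hI a ha)).1.1.of_le (by norm_num)).contDiffWithinAt,
    fun a ha => ((h (hI a ha)).1.2.of_le (by norm_num)).contDiffWithinAt,
    ⟨max C₁ (M * (K+1)^3 + |L| * C₁^2), lt_max_of_lt_left hC₁pos, fun a ha =>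
      ⟨(h (hI a ha)).2.1.1.trans (mul_le_mul_of_nonneg_right (le_max_left _ _) (by positivity)),
       (h (hI a ha)).2.1.2.trans (mul_le_mul_of_nonneg_right (le_max_right _ _) (by positivity))⟩⟩,
    ⟨M * (K+1), by positivity, fun a ha => (h (hI a ha)).2.2⟩, ?_⟩
  have t1 : Tendsto (fun w : ℝ × ℝ × ℝ => (w.1, w.2.2)) (𝓝 (0,0,0)) (𝓝 ((0:ℝ),(0:ℝ))) :=
    (by fun_prop : Continuous (fun w : ℝ × ℝ × ℝ => (w.1, w.2.2))).tendsto' _ _ rfl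
  have t2 : Tendsto (fun w : ℝ × ℝ × ℝ => w.2.2) (𝓝 (0,0,0)) (𝓝 (0:ℝ)) :=
    (by fun_prop : Continuous (fun w : ℝ × ℝ × ℝ => w.2.2)).tendsto' _ _ rfl
  have t3 : Tendsto (fun w : ℝ × ℝ × ℝ => w.2.2 - w.1) (𝓝 (0,0,0)) (𝓝 (0:ℝ)) :=
    (by fun_prop : Continuous (fun w : ℝ × ℝ × ℝ => w.2.2 - w.1)).tendsto' _ _ (by simp)
  refine ⟨_, (t1.eventually xuniq).and ((t2.eventually bP).and (t3.eventually bQ)), ?_⟩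
  rintro α β x ⟨hu, hp, hq⟩ hz hd
  rw [dform _ _ _ hp.1 hq.1] at hd
  have hx : x = xc α := hu (sub_eq_zero.1 hd)
  refine ⟨?_, hx⟩
  simp only [β₁]
  rw [← hx]
  linarith
end

section
/- Assume in addition L = ℓ − k > 0. Then there exist δ > 0 and a neighborhood U₁ ⊆ ℝ² of (0,0) such that for every (α, β) ∈ U₁: (a) if β > β₁(α), then f_{α,β} has no zeros in (−δ, δ); (b) if β = β₁(α), then f_{α,β} has exactly one zero x* in (−δ, δ), namely x* = x(α), and f_{α,β}'(x*) = 0 with f_{α,β}''(x*) > 0; (c) if β < β₁(α), then f_{α,β} has exactly two zeros x⁻ < x⁺ in (−δ, δ), with f_{α,β}'(x⁻) < 0 and f_{α,β}'(x⁺) > 0; moreover, writing ε = β − β₁(α) < 0, these zeros satisfy x^± = −(k/L)·α ± √(−ε/L) + O(|α|·√(−ε)) + O(α²) + O(|ε|). -/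
open Set Filter Topology

lemma aux_T (g g1 g2 : ℝ → ℝ) (L K c x : ℝ)
    (h1 : ∀ y ∈ uIcc c x, HasDerivAt g (g1 y) y)
    (h2 : ∀ y ∈ uIcc c x, HasDerivAt g1 (g2 y) y)
    (hb : ∀ y ∈ uIcc c x, |g2 y - 2 * L| ≤ K)
    (hg : g c = 0) (hg1 : g1 c = 0) :
    |g1 x - 2 * L * (x - c)| ≤ K * |x - c| ∧ |g x - L * (x - c) ^ 2| ≤ K * (x - c) ^ 2 := by
  have hK : 0 ≤ K := (abs_nonneg _).trans (hb c left_mem_uIcc)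
  have key : ∀ y ∈ uIcc c x, |g1 y - 2 * L * (y - c)| ≤ K * |y - c| := by
    intro y hy
    have := (convex_uIcc c x).norm_image_sub_le_of_norm_hasDerivWithin_le
      (f := fun y => g1 y - 2 * L * (y - c)) (f' := fun y => g2 y - 2 * L) (C := K)
      (fun z hz => by
        have := (h2 z hz).sub (((hasDerivAt_id z).sub_const c).const_mul (2 * L))
        refine HasDerivAt.hasDerivWithinAt ?_
        have e : g2 z - 2 * L = g2 z - 2 * L * 1 := by ring
        rw [e]; exact this)
      (fun z hz => hb z hz) left_mem_uIcc hy
    simpa [hg1] using this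
  refine ⟨key x right_mem_uIcc, ?_⟩
  have := (convex_uIcc c x).norm_image_sub_le_of_norm_hasDerivWithin_le
      (f := fun y => g y - L * (y - c) ^ 2) (f' := fun y => g1 y - 2 * L * (y - c))
      (C := K * |x - c|)
      (fun z hz => by
        have := (h1 z hz).sub ((((hasDerivAt_id z).sub_const c).pow 2).const_mul L)
        refine HasDerivAt.hasDerivWithinAt ?_
        have e : g1 z - 2 * L * (z - c) =
            g1 z - L * (((2 : ℕ) : ℝ) * (id z - c) ^ (2 - 1) * 1) := by
          simp only [id]; push_cast; ring
        rw [e]; exact this)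
      (fun z hz => (key z hz).trans (by
        have := abs_sub_left_of_mem_uIcc hz
        gcongr))
      left_mem_uIcc right_mem_uIcc
  simp [hg] at this
  calc _ ≤ _ := this
    _ = K * (x - c) ^ 2 := by rw [mul_assoc, ← sq, sq_abs]

/-- final estimate -/
lemma aux_E (L M B y e s : ℝ) (hL : 0 < L) (hM : 0 ≤ M) (hB : 0 ≤ B) (hy : 0 ≤ y) (hs : 0 ≤ s)
    (hse : L * s ^ 2 = e)
    (h1 : |e - L * y ^ 2| ≤ L / 2 * y ^ 2)
    (h2 : |e - L * y ^ 2| ≤ (2 * M * y + B) * y ^ 2) :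
    |y - s| ≤ 8 * M / L * s ^ 2 + 2 * B / L * s := by
  have hys : y ≤ 2 * s := by
    have : y ^ 2 ≤ (2 * s) ^ 2 := by
      have := (abs_le.1 h1).1
      nlinarith [sq_nonneg s]
    exact abs_le_of_sq_le_sq' this (by positivity) |>.2
  rcases hy.eq_or_lt with h0 | h0
  · subst h0
    have : s = 0 := by
      have : L * s ^ 2 ≤ 0 := by simpa [← hse] using (le_abs_self _).trans h1
      have : s ^ 2 ≤ 0 := by nlinarith
      nlinarith
    subst this; simp
  have h3 : |y - s| * (L * (y + s)) ≤ (2 * M * y + B) * y ^ 2 := by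
    rw [← abs_of_nonneg (show 0 ≤ L * (y + s) by positivity), ← abs_mul]
    refine le_trans (le_of_eq ?_) h2
    rw [← abs_neg]; congr 1; rw [← hse]; ring
  have h4 : |y - s| * (L * y) ≤ (2 * M * y + B) * y ^ 2 := by
    refine le_trans ?_ h3
    gcongr; linarith
  have h5 : |y - s| * L ≤ (2 * M * y + B) * y := by
    have : (|y - s| * L) * y ≤ ((2 * M * y + B) * y) * y := by linarith
    exact le_of_mul_le_mul_right this h0
  have h6 : (2 * M * y + B) * y ≤ (2 * M * (2 * s) + B) * (2 * s) := by gcongr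
  have : |y - s| ≤ (2 * M * (2 * s) + B) * (2 * s) / L := by
    rw [le_div_iff₀ hL]; linarith
  refine this.trans (le_of_eq ?_)
  field_simp; ring

lemma aux_core (g g1 g2 : ℝ → ℝ) (L M B δ c : ℝ) (hL : 0 < L) (hM : 0 ≤ M) (hB : 0 ≤ B)
    (hδ : 0 < δ) (hc : |c| ≤ δ / 4)
    (h1 : ∀ y ∈ Ioo (-δ) δ, HasDerivAt g (g1 y) y)
    (h2 : ∀ y ∈ Ioo (-δ) δ, HasDerivAt g1 (g2 y) y)
    (hb1 : ∀ y ∈ Ioo (-δ) δ, |g2 y - 2 * L| ≤ L / 2)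
    (hb2 : ∀ y ∈ Ioo (-δ) δ, |g2 y - 2 * L| ≤ 2 * M * |y - c| + B)
    (hg : g c = 0) (hg1 : g1 c = 0) :
    (∀ x ∈ Ioo (-δ) δ, L / 2 * (x - c) ^ 2 ≤ g x) ∧
    (∀ e, 0 < e → e < L * δ ^ 2 / 32 → ∃ xm xp, xm < xp ∧ xm ∈ Ioo (-δ) δ ∧ xp ∈ Ioo (-δ) δ ∧
      (∀ x ∈ Ioo (-δ) δ, (g x = e ↔ (x = xm ∨ x = xp))) ∧ g1 xm < 0 ∧ 0 < g1 xp ∧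
      |xm - (c - Real.sqrt (e / L))| ≤ 8 * M / L * (e / L) + 2 * B / L * Real.sqrt (e / L) ∧
      |xp - (c + Real.sqrt (e / L))| ≤ 8 * M / L * (e / L) + 2 * B / L * Real.sqrt (e / L)) := by
  obtain ⟨hc1, hc2⟩ := abs_le.1 hc
  have hcI : c ∈ Ioo (-δ) δ := ⟨by linarith, by linarith⟩
  have hsub : ∀ x ∈ Ioo (-δ) δ, uIcc c x ⊆ Ioo (-δ) δ := fun x hx =>
    ordConnected_Ioo.uIcc_subset hcI hx
  have A1 : ∀ x ∈ Ioo (-δ) δ, |g1 x - 2 * L * (x - c)| ≤ L / 2 * |x - c| ∧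
      |g x - L * (x - c) ^ 2| ≤ L / 2 * (x - c) ^ 2 := fun x hx =>
    aux_T g g1 g2 L _ c x (fun y hy => h1 y (hsub x hx hy)) (fun y hy => h2 y (hsub x hx hy))
      (fun y hy => hb1 y (hsub x hx hy)) hg hg1
  have A2 : ∀ x ∈ Ioo (-δ) δ, |g x - L * (x - c) ^ 2| ≤ (2 * M * |x - c| + B) * (x - c) ^ 2 :=
    fun x hx => (aux_T g g1 g2 L _ c x (fun y hy => h1 y (hsub x hx hy))
      (fun y hy => h2 y (hsub x hx hy))
      (fun y hy => (hb2 y (hsub x hx hy)).trans (by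
        have := abs_sub_left_of_mem_uIcc hy
        gcongr)) hg hg1).2
  have low : ∀ x ∈ Ioo (-δ) δ, L / 2 * (x - c) ^ 2 ≤ g x := fun x hx => by
    have := (abs_le.1 (A1 x hx).2).1
    linarith
  have pos : ∀ x ∈ Ioo (-δ) δ, c < x → 0 < g1 x := fun x hx h => by
    have h := sub_pos.2 h
    have := (abs_le.1 (A1 x hx).1).1
    rw [abs_of_pos h] at this
    nlinarith
  have neg : ∀ x ∈ Ioo (-δ) δ, x < c → g1 x < 0 := fun x hx h => by
    have h := sub_neg.2 h
    have := (abs_le.1 (A1 x hx).1).2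
    rw [abs_of_neg h] at this
    nlinarith
  have cont : ContinuousOn g (Ioo (-δ) δ) := fun x hx => (h1 x hx).continuousAt.continuousWithinAt
  have mono : StrictMonoOn g (Ico c δ) := by
    refine strictMonoOn_of_deriv_pos (convex_Ico _ _)
      (cont.mono fun x hx => ⟨by linarith [hx.1], hx.2⟩) ?_
    intro x hx
    rw [interior_Ico] at hx
    have hx' : x ∈ Ioo (-δ) δ := ⟨by linarith [hx.1], hx.2⟩
    rw [(h1 x hx').deriv]; exact pos x hx' hx.1
  have anti : StrictAntiOn g (Ioc (-δ) c) := by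
    refine strictAntiOn_of_deriv_neg (convex_Ioc _ _)
      (cont.mono fun x hx => ⟨hx.1, by linarith [hx.2]⟩) ?_
    intro x hx
    rw [interior_Ioc] at hx
    have hx' : x ∈ Ioo (-δ) δ := ⟨hx.1, by linarith [hx.2]⟩
    rw [(h1 x hx').deriv]; exact neg x hx' hx.2
  refine ⟨low, fun e he he2 => ?_⟩
  have hp : e < g (δ / 2) := by
    refine lt_of_lt_of_le ?_ (low _ ⟨by linarith, by linarith⟩)
    have : (δ / 4) ^ 2 ≤ (δ / 2 - c) ^ 2 := by gcongr; linarith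
    nlinarith
  have hm : e < g (-(δ / 2)) := by
    refine lt_of_lt_of_le ?_ (low _ ⟨by linarith, by linarith⟩)
    have : (δ / 4) ^ 2 ≤ (δ / 2 + c) ^ 2 := by gcongr; linarith
    nlinarith
  obtain ⟨xp, hxp, hgp⟩ := intermediate_value_Icc (f := g) (a := c) (b := δ / 2) (by linarith)
    (cont.mono fun x hx => ⟨by linarith [hx.1], by linarith [hx.2]⟩)
    (show e ∈ _ from ⟨by rw [hg]; exact he.le, hp.le⟩)
  obtain ⟨xm, hxm, hgm⟩ := intermediate_value_Icc' (f := g) (a := -(δ / 2)) (b := c) (by linarith)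
    (cont.mono fun x hx => ⟨by linarith [hx.1], by linarith [hx.2]⟩)
    (show e ∈ _ from ⟨by rw [hg]; exact he.le, hm.le⟩)
  have hxpc : c < xp := lt_of_le_of_ne hxp.1 (by rintro rfl; linarith)
  have hxmc : xm < c := lt_of_le_of_ne hxm.2 (by rintro rfl; linarith)
  have hxpI : xp ∈ Ioo (-δ) δ := ⟨by linarith [hxp.1], by linarith [hxp.2]⟩
  have hxmI : xm ∈ Ioo (-δ) δ := ⟨by linarith [hxm.1], by linarith [hxm.2]⟩
  have hsq : Real.sqrt (e / L) ^ 2 = e / L := Real.sq_sqrt (by positivity)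
  have hse : L * Real.sqrt (e / L) ^ 2 = e := by rw [hsq]; field_simp
  refine ⟨xm, xp, hxmc.trans hxpc, hxmI, hxpI, ?_, neg _ hxmI hxmc, pos _ hxpI hxpc, ?_, ?_⟩
  · intro x hx
    constructor
    · intro hxe
      rcases le_total x c with h | h
      · left; exact anti.injOn ⟨hx.1, h⟩ ⟨hxmI.1, hxmc.le⟩ (hxe.trans hgm.symm)
      · right; exact mono.injOn ⟨h, hx.2⟩ ⟨hxpc.le, hxpI.2⟩ (hxe.trans hgp.symm)
    · rintro (rfl | rfl) <;> assumption
  · have a1 := (A1 xm hxmI).2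
    have a2 := A2 xm hxmI
    rw [hgm] at a1 a2
    rw [abs_of_neg (by linarith : xm - c < 0)] at a2
    have := aux_E L M B (c - xm) e _ hL hM hB (by linarith) (Real.sqrt_nonneg _) hse
      (by rw [show (c - xm) ^ 2 = (xm - c) ^ 2 by ring]; exact a1)
      (by rw [show (c - xm) ^ 2 = (xm - c) ^ 2 by ring, show c - xm = -(xm - c) by ring]; exact a2)
    rw [hsq] at this
    rw [← abs_neg]
    convert this using 2; ring
  · have a1 := (A1 xp hxpI).2
    have a2 := A2 xp hxpI
    rw [hgp] at a1 a2
    rw [abs_of_pos (by linarith : 0 < xp - c)] at a2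
    have := aux_E L M B (xp - c) e _ hL hM hB (by linarith) (Real.sqrt_nonneg _) hse a1 a2
    rw [hsq] at this
    convert this using 2; ring

lemma aux_P (P : ℝ → ℝ) (hP : ContDiffAt ℝ 3 P 0) (p : ℝ) (hp : deriv (deriv P) 0 = p) :
    ∃ r > 0, ∃ M ≥ 0, ∀ x, |x| < r → HasDerivAt P (deriv P x) x ∧
      HasDerivAt (deriv P) (deriv (deriv P) x) x ∧ |deriv (deriv P) x - p| ≤ M * |x| := by
  have d1 : ContDiffAt ℝ 2 (deriv P) 0 := hP.derivWithin (by norm_num)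
  have d2 : ContDiffAt ℝ 1 (deriv (deriv P)) 0 := d1.derivWithin (by norm_num)
  have e0 : ∀ᶠ x in 𝓝 (0:ℝ), DifferentiableAt ℝ P x :=
    (hP.eventually (by simp)).mono fun x hx => hx.differentiableAt (by simp)
  have e1 : ∀ᶠ x in 𝓝 (0:ℝ), DifferentiableAt ℝ (deriv P) x :=
    (d1.eventually (by simp)).mono fun x hx => hx.differentiableAt (by simp)
  have e2 := (d2.differentiableAt (by simp)).hasDerivAt.isBigO_sub
  obtain ⟨M, hM, hb⟩ := e2.exists_nonneg
  obtain ⟨r, hr, h⟩ := Metric.eventually_nhds_iff.1 (e0.and (e1.and hb.bound))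
  refine ⟨r, hr, M, hM, fun x hx => ?_⟩
  obtain ⟨a, b, c⟩ := h (by simpa using hx)
  exact ⟨a.hasDerivAt, b.hasDerivAt, by simpa [hp] using c⟩

set_option maxHeartbeats 2000000

/- STATEMENT 6: zeros of the displacement function f_{α,β}(x) = β + P(x) − Q(x − α)
near the saddle-node curve β = β₁(α), assuming L = ℓ − k > 0:
(a) no zeros for β > β₁(α); (b) one double zero x* = x(α) with f' = 0, f'' > 0 for
β = β₁(α); (c) two simple zeros x⁻ < x⁺, f'(x⁻) < 0 < f'(x⁺), with
x^± = −(k/L)α ± √(−ε/L) + O(|α|√(−ε)) + O(α²) + O(|ε|), ε = β − β₁(α) < 0. -/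
theorem stmt_6 (ℓ k L : ℝ) (hℓ : ℓ < 0) (hk : k < 0) (hLdef : L = ℓ - k) (hLpos : 0 < L)
    (P Q : ℝ → ℝ)
    (hP : ContDiffAt ℝ 3 P 0) (hQ : ContDiffAt ℝ 3 Q 0)
    (hP0 : P 0 = 0) (hP1 : deriv P 0 = 0) (hP2 : deriv (deriv P) 0 = 2 * ℓ)
    (hQ0 : Q 0 = 0) (hQ1 : deriv Q 0 = 0) (hQ2 : deriv (deriv Q) 0 = 2 * k)
    (ε₀ : ℝ) (hε₀ : 0 < ε₀) (xc β₁ : ℝ → ℝ)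
    (hxc : ContDiffOn ℝ 1 xc (Set.Ioo (-ε₀) ε₀))
    (hβ₁ : ContDiffOn ℝ 1 β₁ (Set.Ioo (-ε₀) ε₀))
    (hasym : ∃ C > (0 : ℝ), ∀ α ∈ Set.Ioo (-ε₀) ε₀,
      |xc α + (k / L) * α| ≤ C * α ^ 2 ∧ |β₁ α - (k * ℓ / L) * α ^ 2| ≤ C * |α| ^ 3)
    (hdouble : ∀ α ∈ Set.Ioo (-ε₀) ε₀,
      β₁ α + P (xc α) - Q (xc α - α) = 0 ∧
      deriv (fun x => β₁ α + P x - Q (x - α)) (xc α) = 0) :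
    ∃ δ > (0 : ℝ), ∃ C > (0 : ℝ), ∃ U₁ ∈ nhds (((0 : ℝ), (0 : ℝ)) : ℝ × ℝ),
      ∀ α β : ℝ, (α, β) ∈ U₁ →
        -- (a)
        ((β₁ α < β → ∀ x ∈ Set.Ioo (-δ) δ, β + P x - Q (x - α) ≠ 0) ∧
        -- (b)
         (β = β₁ α →
            (∀ x ∈ Set.Ioo (-δ) δ, (β + P x - Q (x - α) = 0 ↔ x = xc α)) ∧
            deriv (fun y => β + P y - Q (y - α)) (xc α) = 0 ∧
            0 < deriv (deriv (fun y => β + P y - Q (y - α))) (xc α)) ∧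
        -- (c)
         (β < β₁ α →
            ∃ xm xp : ℝ, xm < xp ∧ xm ∈ Set.Ioo (-δ) δ ∧ xp ∈ Set.Ioo (-δ) δ ∧
              (∀ x ∈ Set.Ioo (-δ) δ,
                (β + P x - Q (x - α) = 0 ↔ (x = xm ∨ x = xp))) ∧
              deriv (fun y => β + P y - Q (y - α)) xm < 0 ∧
              0 < deriv (fun y => β + P y - Q (y - α)) xp ∧
              |xm - (-(k / L) * α - Real.sqrt (-(β - β₁ α) / L))|
                ≤ C * (|α| * Real.sqrt (-(β - β₁ α)) + α ^ 2 + |β - β₁ α|) ∧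
              |xp - (-(k / L) * α + Real.sqrt (-(β - β₁ α) / L))|
                ≤ C * (|α| * Real.sqrt (-(β - β₁ α)) + α ^ 2 + |β - β₁ α|))) := by
  obtain ⟨C0, hC0, hasym⟩ := hasym
  obtain ⟨rP, hrP, MP, hMP, HP⟩ := aux_P P hP _ hP2
  obtain ⟨rQ, hrQ, MQ, hMQ, HQ⟩ := aux_P Q hQ _ hQ2
  obtain ⟨M, hMdef⟩ : ∃ M, M = MP + MQ := ⟨_, rfl⟩
  have hM : 0 ≤ M := by rw [hMdef]; positivity
  obtain ⟨δ, hδdef⟩ : ∃ δ, δ = min (min (rP / 2) (rQ / 2)) (L / (8 * (M + 1))) := ⟨_, rfl⟩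
  have hδ : 0 < δ := by rw [hδdef]; positivity
  have hδP : δ ≤ rP / 2 := by rw [hδdef]; exact (min_le_left _ _).trans (min_le_left _ _)
  have hδQ : δ ≤ rQ / 2 := by rw [hδdef]; exact (min_le_left _ _).trans (min_le_right _ _)
  have hδM : M * δ ≤ L / 8 := by
    have : δ ≤ L / (8 * (M + 1)) := by rw [hδdef]; exact min_le_right _ _
    rw [le_div_iff₀ (by positivity)] at this
    nlinarith
  obtain ⟨D, hD⟩ : ∃ D, D = |k / L| + C0 * ε₀ := ⟨_, rfl⟩
  have hD0 : 0 ≤ D := by rw [hD]; positivity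
  have h0 : (0 : ℝ) ∈ Ioo (-ε₀) ε₀ := ⟨by linarith, hε₀⟩
  have hn : Ioo (-ε₀) ε₀ ∈ 𝓝 (0 : ℝ) := Ioo_mem_nhds h0.1 h0.2
  have hxc0 : xc 0 = 0 := by simpa using (hasym 0 h0).1
  have hβ0 : β₁ 0 = 0 := by simpa using (hasym 0 h0).2
  have cx : ContinuousAt xc 0 := hxc.continuousOn.continuousAt hn
  have cb : ContinuousAt β₁ 0 := hβ₁.continuousOn.continuousAt hn
  have t1 : Tendsto (fun p : ℝ × ℝ => p.1) (𝓝 (0, 0)) (𝓝 0) := continuous_fst.tendsto _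
  have t2 : Tendsto (fun p : ℝ × ℝ => p.2) (𝓝 (0, 0)) (𝓝 0) := continuous_snd.tendsto _
  have tx : Tendsto (fun p : ℝ × ℝ => xc p.1) (𝓝 (0, 0)) (𝓝 0) := by
    have := cx.tendsto.comp t1
    rwa [hxc0] at this
  have tb : Tendsto (fun p : ℝ × ℝ => p.2 - β₁ p.1) (𝓝 (0, 0)) (𝓝 0) := by
    have := t2.sub (cb.tendsto.comp t1)
    rw [hβ0, sub_zero] at this
    exact this
  have ball : ∀ η > (0 : ℝ), {x : ℝ | |x| < η} ∈ 𝓝 (0 : ℝ) := fun η hη => by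
    filter_upwards [Metric.ball_mem_nhds (0 : ℝ) hη] with x hx
    simpa using hx
  refine ⟨δ, hδ, 8 * M / L / L + 2 * (M * (2 * D + 1)) / L / Real.sqrt L + C0, by positivity,
    {p | |p.1| < ε₀ ∧ |p.1| < δ ∧ |xc p.1| < δ / 4 ∧ |p.2 - β₁ p.1| < L * δ ^ 2 / 32}, ?_, ?_⟩
  · filter_upwards [t1 (ball _ hε₀), t1 (ball _ hδ), tx (ball (δ / 4) (by positivity)),
      tb (ball (L * δ ^ 2 / 32) (by positivity))] with p a b c d
    exact ⟨a, b, c, d⟩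
  rintro α β ⟨hα0, hαδ, hc, hε⟩
  simp only at hα0 hαδ hc hε
  have hαI : α ∈ Ioo (-ε₀) ε₀ := abs_lt.1 hα0
  obtain ⟨hd0, hd1⟩ := hdouble α hαI
  obtain ⟨hx1, -⟩ := hasym α hαI
  obtain ⟨c, hcdef⟩ : ∃ c, c = xc α := ⟨_, rfl⟩
  rw [← hcdef] at hc hd0 hd1 hx1 ⊢
  have H1 : ∀ b, ∀ y ∈ Ioo (-δ) δ,
      HasDerivAt (fun y => b + P y - Q (y - α)) (deriv P y - deriv Q (y - α)) y := by
    intro b y hy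
    have hy' := abs_lt.2 hy
    have a1 := (HP y (by linarith)).1
    have a2 := (HQ (y - α) (by linarith [abs_sub y α])).1
    exact (a1.const_add b).sub (a2.comp_sub_const y α)
  have H2 : ∀ y ∈ Ioo (-δ) δ,
      HasDerivAt (fun y => deriv P y - deriv Q (y - α))
        (deriv (deriv P) y - deriv (deriv Q) (y - α)) y := by
    intro y hy
    have hy' := abs_lt.2 hy
    have a1 := (HP y (by linarith)).2.1
    have a2 := (HQ (y - α) (by linarith [abs_sub y α])).2.1
    exact a1.sub (a2.comp_sub_const y α)
  have H3 : ∀ y ∈ Ioo (-δ) δ,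
      |deriv (deriv P) y - deriv (deriv Q) (y - α) - 2 * L| ≤ M * (2 * |y| + |α|) := by
    intro y hy
    have hy' := abs_lt.2 hy
    have hya : |y - α| ≤ |y| + |α| := abs_sub y α
    have a1 := (HP y (by linarith)).2.2
    have a2 := (HQ (y - α) (by linarith)).2.2
    calc _ = |(deriv (deriv P) y - 2 * ℓ) - (deriv (deriv Q) (y - α) - 2 * k)| := by
          rw [hLdef]; congr 1; ring
      _ ≤ MP * |y| + MQ * |y - α| := (abs_sub _ _).trans (add_le_add a1 a2)
      _ ≤ MP * |y| + MQ * (|y| + |α|) := by gcongr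
      _ ≤ _ := by
        rw [hMdef]
        nlinarith [mul_nonneg hMP (abs_nonneg y), mul_nonneg hMQ (abs_nonneg y),
          mul_nonneg hMP (abs_nonneg α)]
  have hcI : c ∈ Ioo (-δ) δ := by
    have := abs_lt.1 hc
    exact ⟨by linarith [this.1], by linarith [this.2]⟩
  have hb1 : ∀ y ∈ Ioo (-δ) δ,
      |deriv (deriv P) y - deriv (deriv Q) (y - α) - 2 * L| ≤ L / 2 := by
    intro y hy
    have hy' := abs_lt.2 hy
    refine (H3 y hy).trans ?_
    have : M * (2 * |y| + |α|) ≤ M * (2 * δ + δ) := by gcongr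
    linarith
  have hg1 : deriv P c - deriv Q (c - α) = 0 := by rw [← hd1, (H1 _ c hcI).deriv]
  obtain ⟨low, two⟩ := aux_core (fun y => β₁ α + P y - Q (y - α))
    (fun y => deriv P y - deriv Q (y - α))
    (fun y => deriv (deriv P) y - deriv (deriv Q) (y - α)) L M (M * (2 * |c| + |α|)) δ c
    hLpos hM (by positivity) hδ hc.le (H1 _) H2 hb1
    (fun y hy => (H3 y hy).trans (by
      have : |y| ≤ |y - c| + |c| := by simpa using abs_add_le (y - c) c
      calc M * (2 * |y| + |α|) ≤ M * (2 * (|y - c| + |c|) + |α|) := by gcongr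
        _ = _ := by ring)) hd0 hg1
  refine ⟨?_, ?_, ?_⟩
  · intro hβ x hx h
    have := low x hx
    have : 0 ≤ L / 2 * (x - c) ^ 2 := by positivity
    linarith
  · intro hβ
    subst hβ
    refine ⟨fun x hx => ⟨fun h => ?_, fun h => by rw [h]; exact hd0⟩, hd1, ?_⟩
    · have := low x hx
      rw [h] at this
      have h' : (x - c) ^ 2 ≤ 0 := by
        by_contra hh
        have : 0 < L / 2 * (x - c) ^ 2 := mul_pos (half_pos hLpos) (not_le.1 hh)
        linarith
      have h2 : (x - c) ^ 2 = 0 := le_antisymm h' (sq_nonneg _)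
      exact sub_eq_zero.1 (pow_eq_zero_iff two_ne_zero |>.1 h2)
    · have ev : deriv (fun y => β₁ α + P y - Q (y - α)) =ᶠ[𝓝 c]
          fun y => deriv P y - deriv Q (y - α) := by
        filter_upwards [Ioo_mem_nhds hcI.1 hcI.2] with y hy
        exact (H1 _ y hy).deriv
      rw [ev.deriv_eq, (H2 c hcI).deriv]
      have := (abs_le.1 (hb1 c hcI)).1
      linarith
  · intro hβ
    have he : 0 < -(β - β₁ α) := by linarith
    obtain ⟨xm, xp, h1, h2, h3, h4, h5, h6, h7, h8⟩ := two (-(β - β₁ α)) he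
      (lt_of_le_of_lt (neg_le_abs _) hε)
    have hcα : |c| ≤ D * |α| := by
      calc |c| = |(c + k / L * α) - k / L * α| := by congr 1; ring
        _ ≤ C0 * α ^ 2 + |k / L| * |α| := by
          refine (abs_sub _ _).trans ?_
          rw [abs_mul]; gcongr
        _ ≤ D * |α| := by
          rw [hD, ← sq_abs α]
          nlinarith [mul_nonneg hC0.le (abs_nonneg α),
            mul_le_mul_of_nonneg_left hα0.le (mul_nonneg hC0.le (abs_nonneg α))]
    have hbd : 8 * M / L * (-(β - β₁ α) / L) + 2 * (M * (2 * |c| + |α|)) / L *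
        Real.sqrt (-(β - β₁ α) / L) + C0 * α ^ 2 ≤
        (8 * M / L / L + 2 * (M * (2 * D + 1)) / L / Real.sqrt L + C0) *
          (|α| * Real.sqrt (-(β - β₁ α)) + α ^ 2 + |β - β₁ α|) := by
      rw [abs_of_neg (by linarith : β - β₁ α < 0), Real.sqrt_div he.le]
      generalize -(β - β₁ α) = e at *
      have hsL : 0 < Real.sqrt L := Real.sqrt_pos.2 hLpos
      have q : 2 * (M * (2 * |c| + |α|)) / L * (Real.sqrt e / Real.sqrt L) ≤
          2 * (M * (2 * D + 1)) / L / Real.sqrt L * (|α| * Real.sqrt e) := by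
        calc _ ≤ 2 * (M * (2 * (D * |α|) + |α|)) / L * (Real.sqrt e / Real.sqrt L) := by gcongr
          _ = _ := by ring
      have q1 : 8 * M / L * (e / L) = 8 * M / L / L * e := by ring
      rw [q1]
      have n1 : 0 ≤ 8 * M / L / L := by positivity
      have n2 : 0 ≤ 2 * (M * (2 * D + 1)) / L / Real.sqrt L := by positivity
      have n3 : 0 ≤ |α| * Real.sqrt e := by positivity
      generalize 8 * M / L / L = X at *
      generalize 2 * (M * (2 * D + 1)) / L / Real.sqrt L = Y at *
      generalize |α| * Real.sqrt e = Z at *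
      nlinarith [mul_nonneg n1 n3, mul_nonneg n1 (sq_nonneg α), mul_nonneg n2 (sq_nonneg α),
        mul_nonneg n2 he.le, mul_nonneg hC0.le he.le, mul_nonneg hC0.le n3]
    refine ⟨xm, xp, h1, h2, h3, fun x hx => ?_, ?_, ?_, ?_, ?_⟩
    · rw [← h4 x hx]
      constructor <;> intro h <;> linarith
    · rw [(H1 β xm h2).deriv]; exact h5
    · rw [(H1 β xp h3).deriv]; exact h6
    · refine le_trans ?_ hbd
      refine le_trans (le_of_eq_of_le ?_ (abs_add_le _ _)) (add_le_add h7 hx1)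
      congr 1; ring
    · refine le_trans ?_ hbd
      refine le_trans (le_of_eq_of_le ?_ (abs_add_le _ _)) (add_le_add h8 hx1)
      congr 1; ring
end

section
/- Assume in addition L = ℓ − k > 0, and set A_α = max(0, α). Then the double-zero location x(α) satisfies −k/L > 1 and, for all sufficiently small α: if α < 0 then x(α) < 0 = A_α (so x(α) does not belong to the half-closed interval σ(α) = [A_α, λ)); if α = 0 then x(0) = 0 = A_α; and if α > 0 then x(α) > α = A_α (so x(α) lies in the interior of σ(α)). -/
/- STATEMENT 7: position of the double-zero location x(α) relative to the domain
σ(α) = [A_α, λ), A_α = max(0, α), when L = ℓ − k > 0: one has −k/L > 1 and, for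
small α: x(α) < 0 = A_α if α < 0; x(0) = 0 = A_0; and x(α) > α = A_α if α > 0. -/
theorem stmt_7 (ℓ k L : ℝ) (hℓ : ℓ < 0) (hk : k < 0) (hLdef : L = ℓ - k) (hLpos : 0 < L)
    (P Q : ℝ → ℝ)
    (hP : ContDiffAt ℝ 3 P 0) (hQ : ContDiffAt ℝ 3 Q 0)
    (hP0 : P 0 = 0) (hP1 : deriv P 0 = 0) (hP2 : deriv (deriv P) 0 = 2 * ℓ)
    (hQ0 : Q 0 = 0) (hQ1 : deriv Q 0 = 0) (hQ2 : deriv (deriv Q) 0 = 2 * k)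
    (ε₀ : ℝ) (hε₀ : 0 < ε₀) (xc β₁ : ℝ → ℝ)
    (hxc : ContDiffOn ℝ 1 xc (Set.Ioo (-ε₀) ε₀))
    (hβ₁ : ContDiffOn ℝ 1 β₁ (Set.Ioo (-ε₀) ε₀))
    (hasym : ∃ C > (0 : ℝ), ∀ α ∈ Set.Ioo (-ε₀) ε₀,
      |xc α + (k / L) * α| ≤ C * α ^ 2 ∧ |β₁ α - (k * ℓ / L) * α ^ 2| ≤ C * |α| ^ 3)
    (hdouble : ∀ α ∈ Set.Ioo (-ε₀) ε₀,
      β₁ α + P (xc α) - Q (xc α - α) = 0 ∧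
      deriv (fun x => β₁ α + P x - Q (x - α)) (xc α) = 0) :
    -(k / L) > 1 ∧
    ∃ ε > (0 : ℝ), ∀ α : ℝ, |α| < ε →
      (α < 0 → xc α < 0) ∧
      (α = 0 → xc 0 = 0) ∧
      (0 < α → α < xc α) := by
  have hm : -(k / L) > 1 := by
    rw [← neg_div, gt_iff_lt, lt_div_iff₀ hLpos]
    linarith
  refine ⟨hm, ?_⟩
  obtain ⟨C, hC, h⟩ := hasym
  generalize k / L = m at hm h
  refine ⟨min ε₀ ((-m - 1) / C), lt_min hε₀ (div_pos (by linarith) hC), fun α hα => ?_⟩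
  obtain ⟨h1, h2⟩ := lt_min_iff.mp hα
  rw [lt_div_iff₀ hC] at h2
  obtain ⟨hx, -⟩ := h α (abs_lt.mp h1)
  obtain ⟨hx1, hx2⟩ := abs_le.mp hx
  refine ⟨fun hn => ?_, fun h0 => ?_, fun hp => ?_⟩
  · rw [abs_of_neg hn] at h2
    nlinarith [mul_pos (neg_pos.mpr hn) (sub_pos.mpr h2)]
  · subst h0
    norm_num at hx1 hx2
    linarith
  · rw [abs_of_pos hp] at h2
    nlinarith [mul_pos hp (sub_pos.mpr h2)]
end

section
/- Assume in addition L = ℓ − k > 0. There exists a function β₂, defined on a neighborhood of 0 with β₂(α) = −ℓ·α² + O(α³), such that for all sufficiently small (α, β) with β < β₁(α), the smaller zero x⁻ = x⁻(α, β) of f_{α,β} satisfies: if α ≤ 0, then x⁻ < A_α = 0 (so x⁻ ∉ σ(α)); and if α > 0, then x⁻ < α when β < β₂(α), x⁻ = α when β = β₂(α), and x⁻ > α (so x⁻ lies in the interior of σ(α)) when β₂(α) < β < β₁(α). -/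
lemma aux_deriv_s8 {P : ℝ → ℝ} {n : ℕ} (hP : ContDiffAt ℝ (n+1) P 0) : ContDiffAt ℝ n (deriv P) 0 := by
  have h := hP.fderiv_right (m := n) le_rfl
  exact h.clm_apply contDiffAt_const

lemma aux_mv {h : ℝ → ℝ} {C r : ℝ} {n : ℕ} (hC : 0 ≤ C) (hd : ∀ x, |x| < r → DifferentiableAt ℝ h x)
    (h0 : h 0 = 0) (hb : ∀ x, |x| < r → |deriv h x| ≤ C * |x| ^ n) :
    ∀ x, |x| < r → |h x| ≤ C * |x| ^ (n+1) := by
  intro x hx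
  have key := Convex.norm_image_sub_le_of_norm_deriv_le (𝕜 := ℝ) (f := h) (C := C * |x| ^ n)
    (s := Set.Icc (-|x|) |x|) (x := 0) (y := x)
    (fun y hy => hd y (lt_of_le_of_lt (abs_le.2 hy) hx))
    (fun y hy => by
      have hy' := abs_le.2 hy
      refine (hb y (lt_of_le_of_lt hy' hx)).trans ?_
      gcongr)
    (convex_Icc _ _) (by simp) (abs_le.1 le_rfl)
  rw [h0] at key
  simp only [sub_zero, Real.norm_eq_abs] at key
  rw [pow_succ, ← mul_assoc]; exact key

lemma aux_taylor {P : ℝ → ℝ} {ℓ : ℝ} (hP : ContDiffAt ℝ 3 P 0)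
    (hP0 : P 0 = 0) (hP1 : deriv P 0 = 0) (hP2 : deriv (deriv P) 0 = 2 * ℓ) :
    ∃ C > (0 : ℝ), ∃ r > (0 : ℝ), ∀ x : ℝ, |x| < r → |P x - ℓ * x ^ 2| ≤ C * |x| ^ 3 := by
  have h1 : ContDiffAt ℝ (2:ℕ) (deriv P) 0 := aux_deriv_s8 (by exact_mod_cast hP)
  have h2 : ContDiffAt ℝ (1:ℕ) (deriv (deriv P)) 0 := aux_deriv_s8 (by exact_mod_cast h1)
  have e0 : ∀ᶠ x in nhds (0:ℝ), DifferentiableAt ℝ P x :=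
    (hP.eventually (by simp)).mono fun x hx => hx.differentiableAt (by simp)
  have e1 : ∀ᶠ x in nhds (0:ℝ), DifferentiableAt ℝ (deriv P) x :=
    (h1.eventually (by simp)).mono fun x hx => hx.differentiableAt (by simp)
  have hO := (h2.differentiableAt (by simp)).isBigO_sub
  obtain ⟨C, hC, e2⟩ := hO.exists_pos
  have e2 := e2.bound
  obtain ⟨r, hr, hall⟩ := Metric.eventually_nhds_iff.1 (e0.and (e1.and e2))
  simp only [Real.dist_eq, sub_zero, hP2, Real.norm_eq_abs] at hall
  refine ⟨C, hC, r, hr, ?_⟩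
  have s1 : ∀ x, |x| < r → |deriv P x - 2 * ℓ * x| ≤ C * |x| ^ (1+1) := by
    refine aux_mv (h := fun x => deriv P x - 2 * ℓ * x) hC.le ?_ (by simp [hP1]) ?_
    · intro x hx
      have := (hall hx).2.1
      fun_prop
    · intro x hx
      have : HasDerivAt (fun x => deriv P x - 2 * ℓ * x) (deriv (deriv P) x - 2 * ℓ * 1) x :=
        (hall hx).2.1.hasDerivAt.sub ((hasDerivAt_id x).const_mul _)
      rw [this.deriv]
      simpa using (hall hx).2.2
  refine aux_mv (h := fun x => P x - ℓ * x ^ 2) (n := 2) hC.le ?_ (by simp [hP0]) ?_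
  · intro x hx
    have := (hall hx).1
    fun_prop
  · intro x hx
    have : HasDerivAt (fun x => P x - ℓ * x ^ 2) (deriv P x - ℓ * (2 * x)) x := by
      have := (hall hx).1.hasDerivAt.sub ((hasDerivAt_pow 2 x).const_mul ℓ)
      simp at this
      exact this
    rw [this.deriv]
    have := s1 x hx
    convert this using 2
    ring

lemma aux_strict {P : ℝ → ℝ} {a c : ℝ} (hc : 0 < c) (hP : ContDiffAt ℝ 3 P 0)
    (hP2 : deriv (deriv P) 0 = a) :
    ∃ r > (0 : ℝ), (∀ x, |x| < r → DifferentiableAt ℝ P x) ∧ ∀ x y : ℝ, |x| < r → |y| < r →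
      |deriv P x - deriv P y - (x - y) * a| ≤ c * |x - y| := by
  have h1 : ContDiffAt ℝ (2:ℕ) (deriv P) 0 := aux_deriv_s8 (by exact_mod_cast hP)
  have e0 : ∀ᶠ x in nhds (0:ℝ), DifferentiableAt ℝ P x :=
    (hP.eventually (by simp)).mono fun x hx => hx.differentiableAt (by simp)
  have hs := (h1.hasStrictDerivAt (by simp)).isLittleO
  rw [hP2] at hs
  have hb := hs.def hc
  rw [nhds_prod_eq] at hb
  have e0' := e0.prod_inl (nhds (0:ℝ))
  obtain ⟨r, hr, hall⟩ := Metric.eventually_nhds_iff.1 (by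
    have := (e0'.and hb); rw [← nhds_prod_eq] at this; exact this)
  refine ⟨r, hr, ?_, ?_⟩
  · intro x hx
    exact (@hall (x, 0) (by simp [Prod.dist_eq, hx])).1
  · intro x y hx hy
    have := (@hall (x, y) (by simp [Prod.dist_eq, hx, hy])).2
    simpa using this


set_option maxHeartbeats 1000000 in
/- STATEMENT 8: the critical-crossing curve β = β₂(α) = −ℓα² + O(α³) for the
smaller zero x⁻ of f_{α,β}(x) = β + P(x) − Q(x − α), L = ℓ − k > 0: for small
(α, β) with β < β₁(α), if α ≤ 0 then x⁻ < 0 = A_α; if α > 0 then x⁻ < α when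
β < β₂(α), x⁻ = α when β = β₂(α), and x⁻ > α when β₂(α) < β < β₁(α). -/
theorem stmt_8 (ℓ k L : ℝ) (hℓ : ℓ < 0) (hk : k < 0) (hLdef : L = ℓ - k) (hLpos : 0 < L)
    (P Q : ℝ → ℝ)
    (hP : ContDiffAt ℝ 3 P 0) (hQ : ContDiffAt ℝ 3 Q 0)
    (hP0 : P 0 = 0) (hP1 : deriv P 0 = 0) (hP2 : deriv (deriv P) 0 = 2 * ℓ)
    (hQ0 : Q 0 = 0) (hQ1 : deriv Q 0 = 0) (hQ2 : deriv (deriv Q) 0 = 2 * k)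
    (ε₀ : ℝ) (hε₀ : 0 < ε₀) (xc β₁ : ℝ → ℝ)
    (hxc : ContDiffOn ℝ 1 xc (Set.Ioo (-ε₀) ε₀))
    (hβ₁ : ContDiffOn ℝ 1 β₁ (Set.Ioo (-ε₀) ε₀))
    (hasym : ∃ C > (0 : ℝ), ∀ α ∈ Set.Ioo (-ε₀) ε₀,
      |xc α + (k / L) * α| ≤ C * α ^ 2 ∧ |β₁ α - (k * ℓ / L) * α ^ 2| ≤ C * |α| ^ 3)
    (hdouble : ∀ α ∈ Set.Ioo (-ε₀) ε₀,
      β₁ α + P (xc α) - Q (xc α - α) = 0 ∧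
      deriv (fun x => β₁ α + P x - Q (x - α)) (xc α) = 0) :
    ∃ β₂ : ℝ → ℝ,
      -- β₂(α) = −ℓ·α² + O(α³)
      (∃ C > (0 : ℝ), ∃ ε₁ > (0 : ℝ), ∀ α : ℝ, |α| < ε₁ →
        |β₂ α + ℓ * α ^ 2| ≤ C * |α| ^ 3) ∧
      -- position of the smaller zero x⁻ relative to A_α = max(0, α)
      (∃ ε > (0 : ℝ), ∃ δ > (0 : ℝ), ∀ α β : ℝ, |α| < ε → |β| < ε → β < β₁ α →
        ∀ xm xp : ℝ, xm < xp → xm ∈ Set.Ioo (-δ) δ → xp ∈ Set.Ioo (-δ) δ →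
          β + P xm - Q (xm - α) = 0 → β + P xp - Q (xp - α) = 0 →
          (∀ x ∈ Set.Ioo (-δ) δ, β + P x - Q (x - α) = 0 → (x = xm ∨ x = xp)) →
          ((α ≤ 0 → xm < 0) ∧
           (0 < α →
             (β < β₂ α → xm < α) ∧
             (β = β₂ α → xm = α) ∧
             (β₂ α < β → α < xm)))) := by
  obtain ⟨CT, hCT, rT, hrT, hT⟩ := aux_taylor hP hP0 hP1 hP2
  refine ⟨fun α => - P α, ⟨CT, hCT, rT, hrT, ?_⟩, ?_⟩
  · intro α hα
    rw [← abs_neg]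
    convert hT α hα using 2
    ring
  obtain ⟨r1, hr1, hPd, hPs⟩ := aux_strict (c := L / 2) (by linarith) hP hP2
  obtain ⟨r2, hr2, hQd, hQs⟩ := aux_strict (c := L / 2) (by linarith) hQ hQ2
  obtain ⟨C, hC, hxcC⟩ := hasym
  obtain ⟨m, hm⟩ : ∃ m, m = -ℓ / L := ⟨_, rfl⟩
  have hm0 : 0 < m := by rw [hm]; exact div_pos (by linarith) hLpos
  have hkm : k / L = -(1 + m) := by rw [hm, hLdef]; field_simp [show ℓ - k ≠ 0 by linarith]; ring
  obtain ⟨δ, hδ0, hδ1, hδ2⟩ : ∃ δ > 0, δ ≤ r1 / 2 ∧ δ ≤ r2 / 2 :=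
    ⟨min (r1 / 2) (r2 / 2), by positivity, min_le_left _ _, min_le_right _ _⟩
  obtain ⟨ε, hε, hε1, hε2, hε3⟩ : ∃ ε > 0, ε ≤ ε₀ ∧ ε ≤ m / C ∧ ε ≤ δ / (1 + 2 * m) :=
    ⟨min ε₀ (min (m / C) (δ / (1 + 2 * m))), by positivity, min_le_left _ _,
      (min_le_right _ _).trans (min_le_left _ _), (min_le_right _ _).trans (min_le_right _ _)⟩
  rw [le_div_iff₀ hC] at hε2
  rw [le_div_iff₀ (by linarith)] at hε3
  refine ⟨ε, hε, δ, hδ0, ?_⟩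
  intro α β hα _ _ xm xp hlt hxm hxp hfm hfp _
  have hαm := abs_lt.1 hα
  have hαI : α ∈ Set.Ioo (-ε₀) ε₀ := ⟨by linarith, by linarith⟩
  have hαδ : |α| < δ := by nlinarith
  have hαδ' := abs_lt.1 hαδ
  have hx := (hxcC α hαI).1
  rw [hkm] at hx
  have hCα : C * α ^ 2 ≤ m * |α| := by
    rw [← sq_abs]
    nlinarith [abs_nonneg α, mul_nonneg (abs_nonneg α) (by nlinarith : 0 ≤ m - C * |α|)]
  have hx' := abs_le.1 hx
  have hxcδ : |xc α| < δ := by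
    have h1 : |xc α| ≤ |xc α + -(1 + m) * α| + |(1 + m) * α| := by
      have := abs_add_le (xc α + -(1 + m) * α) ((1 + m) * α)
      rwa [show xc α + -(1 + m) * α + (1 + m) * α = xc α by ring] at this
    rw [abs_mul, abs_of_pos (by linarith : 0 < 1 + m)] at h1
    nlinarith [abs_nonneg α]
  have hxcδ' := abs_lt.1 hxcδ
  set f : ℝ → ℝ := fun x => β + P x - Q (x - α) with hf
  have hder : ∀ (b x : ℝ), x ∈ Set.Ioo (-δ) δ →
      HasDerivAt (fun x => b + P x - Q (x - α)) (deriv P x - deriv Q (x - α)) x := by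
    intro b x hx
    have a1 : DifferentiableAt ℝ P x := hPd x (abs_lt.2 ⟨by linarith [hx.1], by linarith [hx.2]⟩)
    have a2 : DifferentiableAt ℝ Q (x - α) :=
      hQd _ (abs_lt.2 ⟨by linarith [hx.1], by linarith [hx.2]⟩)
    exact (a1.hasDerivAt.const_add b).sub (a2.hasDerivAt.comp_sub_const x α)
  have hmono : ∀ x y : ℝ, x ∈ Set.Ioo (-δ) δ → y ∈ Set.Ioo (-δ) δ → x < y →
      deriv P x - deriv Q (x - α) < deriv P y - deriv Q (y - α) := by
    intro x y hx hy hxy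
    have b1 := hPs y x (abs_lt.2 ⟨by linarith [hy.1], by linarith [hy.2]⟩)
      (abs_lt.2 ⟨by linarith [hx.1], by linarith [hx.2]⟩)
    have b2 := hQs (y - α) (x - α) (abs_lt.2 ⟨by linarith [hy.1], by linarith [hy.2]⟩)
      (abs_lt.2 ⟨by linarith [hx.1], by linarith [hx.2]⟩)
    rw [show y - α - (x - α) = y - x by ring] at b2
    rw [abs_of_pos (by linarith : 0 < y - x)] at b1 b2
    have b1 := (abs_le.1 b1).1
    have b2 := (abs_le.1 b2).2
    have : 0 < L * (y - x) := mul_pos hLpos (by linarith)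
    have e : L * (y - x) = (y - x) * ℓ - (y - x) * k := by rw [hLdef]; ring
    linarith
  have hcrit : deriv P (xc α) - deriv Q (xc α - α) = 0 := by
    rw [← (hder (β₁ α) (xc α) hxcδ').deriv]; exact (hdouble α hαI).2
  have hcont : ContinuousOn f (Set.Ioo (-δ) δ) := fun x hx =>
    (hder β x hx).continuousAt.continuousWithinAt
  have hxmc : xm < xc α := by
    obtain ⟨c, hc, hc0⟩ := exists_deriv_eq_zero hlt
      (hcont.mono (fun x hx => ⟨by linarith [hx.1, hxm.1], by linarith [hx.2, hxp.2]⟩))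
      (by simp only [hf]; rw [hfm, hfp])
    have hcδ : c ∈ Set.Ioo (-δ) δ := ⟨by linarith [hc.1, hxm.1], by linarith [hc.2, hxp.2]⟩
    rw [(hder β c hcδ).deriv] at hc0
    rcases lt_trichotomy c (xc α) with h | h | h
    · have := hmono _ _ hcδ hxcδ' h; linarith
    · rw [← h]; exact hc.1
    · have := hmono _ _ hxcδ' hcδ h; linarith
  refine ⟨fun hα0 => ?_, fun hα0 => ?_⟩
  · rw [abs_of_nonpos hα0] at hCα
    linarith
  rw [abs_of_pos hα0] at hCα
  have hαxc : α ≤ xc α := by linarith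
  have hanti : StrictAntiOn f (Set.Ioc (-δ) (xc α)) := by
    refine strictAntiOn_of_deriv_neg (convex_Ioc _ _)
      (hcont.mono fun x hx => ⟨hx.1, lt_of_le_of_lt hx.2 hxcδ'.2⟩) ?_
    intro x hx
    rw [interior_Ioc] at hx
    have hxδ : x ∈ Set.Ioo (-δ) δ := ⟨hx.1, hx.2.trans hxcδ'.2⟩
    rw [(hder β x hxδ).deriv]
    have := hmono _ _ hxδ hxcδ' hx.2
    linarith
  have mα : α ∈ Set.Ioc (-δ) (xc α) := ⟨hαδ'.1, hαxc⟩
  have mx : xm ∈ Set.Ioc (-δ) (xc α) := ⟨hxm.1, hxmc.le⟩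
  have fα : f α = β + P α := by simp [hf, hQ0]
  have fm : f xm = 0 := hfm
  refine ⟨fun h => ?_, fun h => ?_, fun h => ?_⟩
  · apply (hanti.lt_iff_gt mα mx).1
    rw [fα, fm]; linarith
  · apply hanti.injOn mx mα
    rw [fα, fm]; linarith
  · apply (hanti.lt_iff_gt mx mα).1
    rw [fα, fm]; linarith
end
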